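/- Let 0 < d < n be integers and let E ⊆ ℝ^n be a LARRF set of dimension d with constants ε and C₀, where ε is small enough depending only on n and d. For each τ > 0 there exists K = K(n,d,C₀,τ) ≥ 1 such that for every x ∈ E and 0 < r ≤ 10⁻¹ there are a d-dimensional affine plane P through x and a K-bi-Lipschitz bijection g : ℝ^n → ℝ^n (K⁻¹|z−w| ≤ |g(z) − g(w)| ≤ K|z−w| for all z, w) such that |g(z) − z| ≤ Cε for all z ∈ ℝ^n (C depending only on n and d), g(z) = z for all z ∈ ℝ^n ∖ B(x,2r), and H^d( E ∩ B(x,r) ∖ g(P) ) ≤ τ r^d. (Theorem 15.39: LARRF sets have very big pieces of bi-Lipschitz images of d-planes.) -/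

import Mathlib

open Metric Set MeasureTheory
open scoped ENNReal

noncomputable section

set_option synthInstance.maxHeartbeats 1000000
set_option maxHeartbeats 1000000

/-- `ℝⁿ`. -/
abbrev V (n : ℕ) := EuclideanSpace ℝ (Fin n)

/-- `P` is a `d`-dimensional affine plane of `ℝⁿ`. -/
def IsAffinePlane (n d : ℕ) (P : Set (V n)) : Prop :=
  ∃ Q : AffineSubspace ℝ (V n), (Q : Set (V n)) = P ∧
    Module.finrank ℝ Q.direction = d ∧ (Q : Set (V n)).Nonempty

/-- The normalized local Hausdorff distance `d_{x,r}(A,B)`. -/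
def nhd {n : ℕ} (x : V n) (r : ℝ) (A B : Set (V n)) : ℝ :=
  r⁻¹ * max (⨆ y ∈ A ∩ ball x r, infDist y B) (⨆ y ∈ B ∩ ball x r, infDist y A)

/-- `E` is a locally Ahlfors-regular Reifenberg-flat (LARRF) set of dimension `d`
with constants `ε` and `C₀` (Definition 15.1). -/
def IsLARRF (n d : ℕ) (ε C₀ : ℝ) (E : Set (V n)) : Prop :=
  E.Nonempty ∧ IsClosed E ∧
  ∀ x ∈ E, ∀ r : ℝ, 0 < r → r ≤ 1 →
    (∃ P : Set (V n), IsAffinePlane n d P ∧ x ∈ P ∧ nhd x r P E ≤ ε) ∧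
    ENNReal.ofReal (C₀⁻¹ * r ^ d) ≤ μH[(d : ℝ)] (E ∩ ball x r) ∧
    μH[(d : ℝ)] (E ∩ ball x r) ≤ ENNReal.ofReal (C₀ * r ^ d)

section Topological

open scoped NNReal

/-- A Lipschitz perturbation of the identity with constant less than one is bijective. -/
lemma bijective_add_of_lipschitz {W : Type*} [NormedAddCommGroup W] [CompleteSpace W]
    {u : W → W} {K : ℝ≥0} (hK : K < 1) (hu : LipschitzWith K u) :
    Function.Bijective (fun z => z + u z) := by
  constructor
  · intro z w h
    have h1 : dist (u w) (u z) ≤ K * dist w z := hu.dist_le_mul w z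
    have h2 : dist (u w) (u z) = dist w z := by
      have : z + u z = w + u w := h
      rw [dist_eq_norm, dist_comm w z, dist_eq_norm]
      congr 1
      rw [sub_eq_sub_iff_add_eq_add, add_comm, ← this]
    rw [h2] at h1
    have h3 : (K : ℝ) < 1 := by exact_mod_cast hK
    have h4 : 0 ≤ dist w z := dist_nonneg
    have h5 : dist w z = 0 := by nlinarith
    exact (dist_eq_zero.1 h5).symm
  · intro q
    have hc : ContractingWith K (fun z => q - u z) := by
      refine ⟨hK, ?_⟩
      refine LipschitzWith.of_dist_le_mul fun z w => ?_
      rw [dist_sub_left]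
      exact hu.dist_le_mul z w
    refine ⟨hc.fixedPoint, ?_⟩
    have h := hc.fixedPoint_isFixedPt
    have h' : q - u hc.fixedPoint = hc.fixedPoint := h
    change hc.fixedPoint + u hc.fixedPoint = q
    nth_rewrite 1 [← h']
    abel

variable {W : Type*} [NormedAddCommGroup W] [InnerProductSpace ℝ W] [FiniteDimensional ℝ W]

lemma det_one_add_pos {A : W →L[ℝ] W} (hA : ‖A‖ < 1) :
    0 < (ContinuousLinearMap.id ℝ W + A).det := by
  have hne : ∀ s ∈ Icc (0 : ℝ) 1, (ContinuousLinearMap.id ℝ W + s • A).det ≠ 0 := by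
    intro s hs h0
    have h1 := LinearMap.bot_lt_ker_of_det_eq_zero
      (f := ((ContinuousLinearMap.id ℝ W + s • A : W →L[ℝ] W) : W →ₗ[ℝ] W)) h0
    obtain ⟨v, hv, hv0⟩ := (Submodule.ne_bot_iff _).1 h1.ne'
    have h2 : v + s • A v = 0 := by simpa using hv
    have h3 : ‖v‖ = ‖s • A v‖ := by
      rw [← norm_neg (s • A v), ← eq_neg_of_add_eq_zero_left h2]
    rw [norm_smul, Real.norm_of_nonneg hs.1] at h3
    have h4 := A.le_opNorm v
    have h5 : 0 < ‖v‖ := norm_pos_iff.2 hv0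
    have h6 : s * ‖A v‖ ≤ 1 * ‖A v‖ := mul_le_mul_of_nonneg_right hs.2 (norm_nonneg _)
    nlinarith
  have hcont : Continuous fun s : ℝ => (ContinuousLinearMap.id ℝ W + s • A).det :=
    ContinuousLinearMap.continuous_det.comp (by fun_prop)
  by_contra! hle
  have hivt := intermediate_value_Icc' (zero_le_one (α := ℝ)) hcont.continuousOn
  obtain ⟨s, hs, hs0⟩ := hivt (show (0 : ℝ) ∈ _ by
    constructor
    · simpa using hle
    · have : (ContinuousLinearMap.id ℝ W + (0 : ℝ) • A).det = 1 := by simp [ContinuousLinearMap.det]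
      simp only [this]; norm_num)
  exact hne s hs hs0

/-- The determinant of `1 + A` is a fixed linear combination of the determinants of
`1 + tᵢ A` for finitely many arbitrarily small `tᵢ`. -/
lemma exists_det_interpolation {t₀ : ℝ} (ht₀ : 0 < t₀) :
    ∃ (s : Finset ℕ) (t c : ℕ → ℝ), (∀ i, 0 < t i ∧ t i ≤ t₀) ∧ ∀ A : W →L[ℝ] W,
      (ContinuousLinearMap.id ℝ W + A).det
        = ∑ i ∈ s, c i * (ContinuousLinearMap.id ℝ W + t i • A).det := by
  classical
  let b := Module.finBasis ℝ W
  let s := Finset.range (Module.finrank ℝ W + 1)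
  let t : ℕ → ℝ := fun i => t₀ / (i + 1)
  have hinj : Set.InjOn t s := by
    intro i _ j _ hij
    have h : t₀ / ((i : ℝ) + 1) = t₀ / ((j : ℝ) + 1) := hij
    rw [div_eq_div_iff (by positivity) (by positivity)] at h
    have := mul_left_cancel₀ ht₀.ne' h
    have h2 : (i : ℝ) = j := by linarith
    exact_mod_cast h2
  refine ⟨s, t, fun i => (Lagrange.basis s t i).eval 1, fun i => ⟨by positivity, ?_⟩, fun A => ?_⟩
  · exact div_le_self ht₀.le (by linarith [Nat.cast_nonneg (α := ℝ) i])
  · let M := LinearMap.toMatrix b b (A : W →ₗ[ℝ] W)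
    let p : Polynomial ℝ := Matrix.det
      ((Polynomial.X : Polynomial ℝ) • M.map Polynomial.C + (1 : Matrix _ _ ℝ).map Polynomial.C)
    have hp : ∀ x : ℝ, p.eval x = (ContinuousLinearMap.id ℝ W + x • A).det := by
      intro x
      rw [ContinuousLinearMap.det, ← LinearMap.det_toMatrix b]
      rw [← Polynomial.coe_evalRingHom, RingHom.map_det]
      congr 1
      ext i j
      simp [M, LinearMap.toMatrix_apply, Matrix.one_apply, Finsupp.single_apply, eq_comm,
        add_comm, RingHom.mapMatrix_apply]
      split_ifs <;> simp [mul_comm]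
    have hdeg : p.degree < s.card := by
      refine lt_of_le_of_lt Polynomial.degree_le_natDegree ?_
      have := Polynomial.natDegree_det_X_add_C_le M 1
      simp only [s, Finset.card_range]
      have h2 : p.natDegree ≤ Module.finrank ℝ W := by simpa [p] using this
      exact_mod_cast Nat.lt_succ_of_le h2
    have hL := Lagrange.eq_interpolate hinj hdeg
    have h1 : p.eval 1 = (ContinuousLinearMap.id ℝ W + A).det := by rw [hp, one_smul]
    rw [← h1, hL, Lagrange.interpolate_apply, Polynomial.eval_finsetSum]
    refine Finset.sum_congr rfl fun i _ => ?_
    rw [Polynomial.eval_mul, Polynomial.eval_C, hp, mul_comm]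

end Topological

section Retraction

open scoped NNReal
variable {W : Type*} [NormedAddCommGroup W] [InnerProductSpace ℝ W] [FiniteDimensional ℝ W]

/-- There is no Lipschitz retraction of a ball onto its boundary sphere. -/
lemma no_lipschitz_retraction {h : W → W} {L : ℝ≥0} (hL : LipschitzWith L h) {q : W} {S : ℝ}
    (hS : 0 < S) (hid : ∀ p, S ≤ ‖p - q‖ → h p = p) (hsph : ∀ p, ‖p - q‖ < S → ‖h p - q‖ = S) :
    False := by
  borelize W
  let μ : Measure W := μH[Module.finrank ℝ W]
  let u : W → W := fun p => h p - p
  have hu : LipschitzWith (L + 1) u := hL.sub LipschitzWith.id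
  let B : Set W := ball q S
  have hBtop : μ B ≠ ∞ := measure_ball_lt_top.ne
  have hBpos : 0 < μ B := measure_ball_pos μ q hS
  let D : Set W := {p | DifferentiableAt ℝ u p}
  have hD : MeasurableSet D := measurableSet_of_differentiableAt ℝ u
  have hDae : μ Dᶜ = 0 := hu.ae_differentiableAt
  let s : Set W := B ∩ D
  have hs : MeasurableSet s := measurableSet_ball.inter hD
  have hfd : ∀ p ∈ D, ‖fderiv ℝ u p‖ ≤ L + 1 := fun p _ => by
    simpa using norm_fderiv_le_of_lipschitz ℝ hu (x₀ := p)
  -- for small `t` the map `id + t u` is a bijection of the ball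
  have key : ∀ t : ℝ, 0 < t → t ≤ 1 / (2 * (L + 1)) →
      IntegrableOn (fun p => (ContinuousLinearMap.id ℝ W + t • fderiv ℝ u p).det) s μ ∧
      ∫ p in s, (ContinuousLinearMap.id ℝ W + t • fderiv ℝ u p).det ∂μ = (μ B).toReal := by
    intro t ht0 ht1
    have htL : t * (L + 1) ≤ 1 / 2 := by
      rw [le_div_iff₀ (by positivity)] at ht1
      linarith
    have hlip : LipschitzWith (1 / 2) (fun p => t • u p) := by
      refine LipschitzWith.of_dist_le_mul fun p p' => ?_
      rw [dist_smul₀, Real.norm_of_nonneg ht0.le]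
      have h1 := hu.dist_le_mul p p'
      push_cast at h1 ⊢
      calc t * dist (u p) (u p') ≤ t * ((L + 1) * dist p p') := by gcongr
        _ = t * (L + 1) * dist p p' := by ring
        _ ≤ 1 / 2 * dist p p' := by gcongr
    let f : W → W := fun p => p + t • u p
    have hbij : Function.Bijective f := bijective_add_of_lipschitz (by
      rw [← NNReal.coe_lt_coe]; push_cast; norm_num) hlip
    have hflip : LipschitzWith (1 + 1 / 2) f := LipschitzWith.id.add hlip
    have himg : f '' B = B := by
      have hc : f '' Bᶜ = Bᶜ := by
        have : ∀ p ∈ Bᶜ, f p = p := by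
          intro p hp
          have hp' : S ≤ ‖p - q‖ := by simpa [B, dist_eq_norm] using hp
          simp [f, u, hid p hp']
        rw [image_congr this, image_id']
      rw [image_compl_eq hbij] at hc
      exact compl_injective hc
    have hmeas : μ (f '' s) = μ B := by
      apply le_antisymm
      · exact (measure_mono (image_mono inter_subset_left)).trans_eq (by rw [himg])
      · have h0 : μ (f '' Dᶜ) = 0 := by
          have := hflip.hausdorffMeasure_image_le (d := Module.finrank ℝ W) (by positivity) Dᶜ
          refine le_antisymm (this.trans ?_) bot_le
          have h' : μH[Module.finrank ℝ W] Dᶜ = 0 := hDae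
          rw [h', mul_zero]
        have hsub : B ⊆ f '' s ∪ f '' Dᶜ := by
          rw [← image_union]
          nth_rewrite 1 [← himg]
          apply image_mono
          intro p hp
          by_cases hpD : p ∈ D
          · exact Or.inl ⟨hp, hpD⟩
          · exact Or.inr hpD
        calc μ B ≤ μ (f '' s ∪ f '' Dᶜ) := measure_mono hsub
          _ ≤ μ (f '' s) + μ (f '' Dᶜ) := measure_union_le _ _
          _ = μ (f '' s) := by rw [h0, add_zero]
    have hder : ∀ p ∈ s,
        HasFDerivWithinAt f (ContinuousLinearMap.id ℝ W + t • fderiv ℝ u p) s p := by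
      intro p hp
      have hp2 : DifferentiableAt ℝ u p := hp.2
      exact ((hasFDerivAt_id p).add (hp2.hasFDerivAt.const_smul t)).hasFDerivWithinAt
    have hcv := lintegral_abs_det_fderiv_eq_addHaar_image μ hs hder hbij.1.injOn
    rw [hmeas] at hcv
    have hpos : ∀ p ∈ s, 0 < (ContinuousLinearMap.id ℝ W + t • fderiv ℝ u p).det := by
      intro p hp
      apply det_one_add_pos
      rw [norm_smul, Real.norm_of_nonneg ht0.le]
      have := hfd p hp.2
      nlinarith
    have hm : Measurable fun p => (ContinuousLinearMap.id ℝ W + t • fderiv ℝ u p).det :=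
      ContinuousLinearMap.continuous_det.measurable.comp
        (((measurable_fderiv ℝ u).const_smul t).const_add _)
    have hcv' : ∫⁻ p in s, ENNReal.ofReal ((ContinuousLinearMap.id ℝ W + t • fderiv ℝ u p).det) ∂μ
        = μ B := by
      rw [← hcv]
      refine setLIntegral_congr_fun hs fun p hp => ?_
      simp only [abs_of_pos (hpos p hp)]
    have hnn : 0 ≤ᵐ[μ.restrict s] fun p => (ContinuousLinearMap.id ℝ W + t • fderiv ℝ u p).det := by
      filter_upwards [ae_restrict_mem hs] with p hp using (hpos p hp).le
    refine ⟨⟨hm.aestronglyMeasurable, ?_⟩, ?_⟩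
    · rw [hasFiniteIntegral_iff_ofReal hnn, hcv']
      exact hBtop.lt_top
    · rw [integral_eq_lintegral_of_nonneg_ae hnn hm.aestronglyMeasurable, hcv']
  obtain ⟨N, t, c, ht, hdet⟩ := exists_det_interpolation (W := W)
    (t₀ := 1 / (2 * ((L : ℝ) + 1))) (by positivity)
  have hone : ∑ i ∈ N, c i = 1 := by
    have := hdet 0
    simpa [ContinuousLinearMap.det] using this.symm
  have hintegral : ∫ p in s, (ContinuousLinearMap.id ℝ W + fderiv ℝ u p).det ∂μ = (μ B).toReal := by
    rw [integral_congr_ae (Filter.Eventually.of_forall fun p => hdet (fderiv ℝ u p))]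
    rw [integral_finsetSum _ fun i _ => ((key (t i) (ht i).1 (ht i).2).1).const_mul _]
    simp_rw [integral_const_mul]
    rw [Finset.sum_congr rfl fun i _ => by rw [(key (t i) (ht i).1 (ht i).2).2], ← Finset.sum_mul,
      hone, one_mul]
  have hzero : ∫ p in s, (ContinuousLinearMap.id ℝ W + fderiv ℝ u p).det ∂μ = 0 := by
    refine setIntegral_eq_zero_of_forall_eq_zero fun p hp => ?_
    by_contra hne
    have hp2 : DifferentiableAt ℝ u p := hp.2
    have hh : HasFDerivAt h (ContinuousLinearMap.id ℝ W + fderiv ℝ u p) p := by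
      have h1 := (hasFDerivAt_id p).add hp2.hasFDerivAt
      refine h1.congr_of_eventuallyEq (Filter.Eventually.of_forall fun p' => ?_)
      simp [u]
    have hp1 : ‖p - q‖ < S := by simpa [B, dist_eq_norm] using hp.1
    have hsq : HasFDerivAt (fun p' => ‖h p' - q‖ ^ 2)
        (2 • (innerSL ℝ (h p - q)).comp (ContinuousLinearMap.id ℝ W + fderiv ℝ u p)) p :=
      (hh.sub_const q).norm_sq
    have hconst : HasFDerivAt (fun p' => ‖h p' - q‖ ^ 2) (0 : W →L[ℝ] ℝ) p := by
      refine (hasFDerivAt_const (S ^ 2) p).congr_of_eventuallyEq ?_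
      filter_upwards [isOpen_ball.mem_nhds hp.1] with p' hp'
      rw [hsph p' (by simpa [B, dist_eq_norm] using hp')]
    have heq := hsq.unique hconst
    have hsurj : Function.Surjective (ContinuousLinearMap.id ℝ W + fderiv ℝ u p) := by
      have hun : IsUnit ((ContinuousLinearMap.id ℝ W + fderiv ℝ u p : W →L[ℝ] W) : W →ₗ[ℝ] W) :=
        (LinearMap.isUnit_iff_isUnit_det _).2 (isUnit_iff_ne_zero.2 hne)
      exact ((Module.End.isUnit_iff _).1 hun).2
    obtain ⟨v, hv⟩ := hsurj (h p - q)
    have h3 := congrArg (fun A : W →L[ℝ] ℝ => A v) heq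
    have h4 : ‖h p - q‖ = 0 := by
      simp only [smul_apply, ContinuousLinearMap.comp_apply, hv, innerSL_apply_apply,
        real_inner_self_eq_norm_sq, zero_apply] at h3
      simpa using h3
    rw [hsph p hp1] at h4
    exact hS.ne' h4
  rw [hzero] at hintegral
  exact (ENNReal.toReal_pos hBpos.ne' hBtop).ne hintegral


/-- A Lipschitz map equal to the identity off a ball has dense range. -/
lemma exists_dist_lt_of_lipschitz {f : W → W} {L : ℝ≥0} (hL : LipschitzWith L f) {R : ℝ}
    (hid : ∀ p, R ≤ ‖p‖ → f p = p) (q : W) {ρ : ℝ} (hρ : 0 < ρ) : ∃ p, ‖f p - q‖ < ρ := by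
  by_contra! hcon
  -- a ball around `q` mapped into itself, off which `f` is the identity
  obtain ⟨S, hS0, hSid, hSmap⟩ : ∃ S : ℝ, ρ < S ∧ (∀ p, S ≤ ‖p - q‖ → f p = p) ∧
      ∀ p, ‖p - q‖ < S → ‖f p - q‖ ≤ S := by
    let R' := max R 0 + ‖q‖
    have hR' : 0 ≤ R' := by positivity
    have hfq : ∀ p, R' ≤ ‖p - q‖ → f p = p := by
      intro p hp
      apply hid
      have h1 := norm_sub_le p q
      have h2 := le_max_left R 0
      simp only [R'] at hp
      linarith
    refine ⟨L * R' + ‖f q - q‖ + R' + ρ + ρ, ?_, ?_, ?_⟩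
    · have : 0 ≤ (L : ℝ) * R' := by positivity
      linarith [norm_nonneg (f q - q)]
    · intro p hp
      apply hfq
      have : 0 ≤ (L : ℝ) * R' := by positivity
      linarith [norm_nonneg (f q - q)]
    · intro p hp
      rcases le_total R' ‖p - q‖ with h | h
      · rw [hfq p h]; exact hp.le
      · have h1 := hL.dist_le_mul p q
        rw [dist_eq_norm, dist_eq_norm] at h1
        have h2 : ‖f p - q‖ ≤ ‖f p - f q‖ + ‖f q - q‖ := norm_sub_le_norm_sub_add_norm_sub _ _ _
        have h3 : (L : ℝ) * ‖p - q‖ ≤ L * R' := by gcongr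
        linarith
  have hSpos : 0 < S := hρ.trans hS0
  -- radial push to the sphere
  let π : W → W := fun w => q + (max 1 (S / ‖w - q‖)) • (w - q)
  have hπ : LipschitzOnWith (Real.toNNReal (S / ρ + S / ρ + 1)) π {w | ρ ≤ ‖w - q‖} := by
    refine LipschitzOnWith.of_dist_le_mul fun w hw w' hw' => ?_
    have hw : ρ ≤ ‖w - q‖ := hw
    have hw' : ρ ≤ ‖w' - q‖ := hw'
    rw [Real.coe_toNNReal _ (by positivity)]
    simp only [π]
    rw [dist_add_left, dist_eq_norm, dist_eq_norm]
    have hab : w - w' = (w - q) - (w' - q) := by simp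
    rw [hab]
    generalize w - q = a at *
    generalize w' - q = b at *
    have ha : 0 < ‖a‖ := hρ.trans_le hw
    have hb : 0 < ‖b‖ := hρ.trans_le hw'
    have e1 : (max 1 (S / ‖a‖)) • a - (max 1 (S / ‖b‖)) • b
        = (max 1 (S / ‖a‖)) • (a - b) + (max 1 (S / ‖a‖) - max 1 (S / ‖b‖)) • b := by
      rw [smul_sub, sub_smul]; abel
    rw [e1]
    have e2 : |max 1 (S / ‖a‖) - max 1 (S / ‖b‖)| ≤ |S / ‖a‖ - S / ‖b‖| := by
      have := abs_max_sub_max_le_abs (S / ‖a‖) (S / ‖b‖) 1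
      rwa [max_comm _ 1, max_comm _ 1] at this
    have e3 : |S / ‖a‖ - S / ‖b‖| * ‖b‖ ≤ S / ρ * ‖a - b‖ := by
      have : S / ‖a‖ - S / ‖b‖ = (S / ‖a‖) * (‖b‖ - ‖a‖) / ‖b‖ := by field_simp
      rw [this, abs_div, abs_mul, abs_of_pos (by positivity : 0 < S / ‖a‖), abs_of_pos hb,
        div_mul_cancel₀ _ hb.ne']
      have h1 : |‖b‖ - ‖a‖| ≤ ‖a - b‖ := by
        rw [norm_sub_rev]; exact abs_norm_sub_norm_le b a
      gcongr
    have e4 : max 1 (S / ‖a‖) ≤ S / ρ + 1 := by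
      apply max_le
      · have : 0 ≤ S / ρ := by positivity
        linarith
      · have : S / ‖a‖ ≤ S / ρ := by gcongr
        linarith
    calc _ ≤ ‖(max 1 (S / ‖a‖)) • (a - b)‖ + ‖(max 1 (S / ‖a‖) - max 1 (S / ‖b‖)) • b‖ :=
          norm_add_le _ _
      _ = (max 1 (S / ‖a‖)) * ‖a - b‖ + |max 1 (S / ‖a‖) - max 1 (S / ‖b‖)| * ‖b‖ := by
          rw [norm_smul, norm_smul, Real.norm_eq_abs, Real.norm_eq_abs,
            abs_of_pos (by positivity : 0 < max 1 (S / ‖a‖))]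
      _ ≤ (S / ρ + 1) * ‖a - b‖ + S / ρ * ‖a - b‖ := by
          refine add_le_add (by gcongr) ?_
          exact (mul_le_mul_of_nonneg_right e2 hb.le).trans e3
      _ = _ := by ring
  have hcomp : LipschitzWith (Real.toNNReal (S / ρ + S / ρ + 1) * L) (π ∘ f) := by
    rw [← lipschitzOnWith_univ] at hL ⊢
    exact hπ.comp hL fun p _ => hcon p
  refine no_lipschitz_retraction hcomp hSpos (q := q) ?_ ?_
  · intro p hp
    simp only [Function.comp, π, hSid p hp]
    rw [max_eq_left (by rw [div_le_one (hSpos.trans_le hp)]; exact hp)]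
    simp
  · intro p hp
    have h1 := hSmap p hp
    have h2 := hρ.trans_le (hcon p)
    simp only [Function.comp, π]
    rw [max_eq_right (by rw [le_div_iff₀ h2]; linarith), add_sub_cancel_left, norm_smul,
      norm_div, norm_norm, Real.norm_of_nonneg hSpos.le]
    field_simp

/-- A continuous map of a ball moving points by at most `a` almost reaches every point at depth
more than `a`. -/
lemma exists_dist_lt_of_continuous {f : W → W} (hf : Continuous f) {R a : ℝ} (hR : 0 < R)
    (hfa : ∀ p, ‖p‖ ≤ R → ‖f p - p‖ ≤ a) {q : W} (hq : ‖q‖ < R - a) {ρ : ℝ} (hρ : 0 < ρ) :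
    ∃ p, ‖p‖ ≤ R ∧ ‖f p - q‖ < ρ := by
  obtain ⟨σ, hσ0, hσρ, hσq⟩ : ∃ σ : ℝ, 0 < σ ∧ 2 * σ ≤ ρ ∧ ‖q‖ + 3 * σ < R - a := by
    refine ⟨min (ρ / 2) ((R - a - ‖q‖) / 4), ?_, ?_, ?_⟩
    · apply lt_min <;> linarith
    · linarith [min_le_left (ρ / 2) ((R - a - ‖q‖) / 4)]
    · linarith [min_le_right (ρ / 2) ((R - a - ‖q‖) / 4)]
  let χ : ContDiffBump (0 : W) := ⟨R + 1, R + 2, by linarith, by linarith⟩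
  let u : W → W := fun p => χ p • (f p - p)
  have huc : Continuous u := (χ.continuous).smul (hf.sub continuous_id)
  have husupp : HasCompactSupport u := χ.hasCompactSupport.smul_right
  obtain ⟨v, hv, hvu⟩ :=
    (husupp.uniformContinuous_of_continuous huc).exists_contDiff_dist_le hσ0
  have ha : 0 ≤ a := (norm_nonneg _).trans (hfa 0 (by simpa using hR.le))
  have hq0 := norm_nonneg q
  let χ' : ContDiffBump (0 : W) := ⟨R - σ, R, by linarith, by linarith⟩
  have hw : ContDiff ℝ 1 fun p => χ' p • v p := (χ'.contDiff).smul (hv.of_le (by simp))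
  obtain ⟨K, hK⟩ := hw.lipschitzWith_of_hasCompactSupport
    (χ'.hasCompactSupport.smul_right) one_ne_zero
  have hvf : ∀ p, ‖p‖ ≤ R → ‖v p - (f p - p)‖ < σ := by
    intro p hp
    have h1 : χ p = 1 := χ.one_of_mem_closedBall (by simp [χ]; linarith)
    have h2 := hvu p
    simpa [u, h1, dist_eq_norm] using h2
  obtain ⟨p, hp⟩ := exists_dist_lt_of_lipschitz (f := fun p => p + χ' p • v p)
    (LipschitzWith.id.add hK) (R := R) (fun p hp => by
      rw [χ'.zero_of_le_dist (by simpa [χ'] using hp), zero_smul, add_zero]) q hσ0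
  have hsmall : ‖χ' p • v p‖ ≤ a + σ := by
    rcases le_total ‖p‖ R with h | h
    · rw [norm_smul, Real.norm_of_nonneg χ'.nonneg]
      have h1 : χ' p ≤ 1 := χ'.le_one
      have h2 := hvf p h
      have h3 := hfa p h
      have h4 : ‖v p‖ ≤ ‖v p - (f p - p)‖ + ‖f p - p‖ := by
        simpa using norm_add_le (v p - (f p - p)) (f p - p)
      have h5 : χ' p * ‖v p‖ ≤ 1 * ‖v p‖ := by gcongr
      linarith
    · rw [χ'.zero_of_le_dist (by simpa [χ'] using h), zero_smul, norm_zero]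
      linarith
  have hpR : ‖p‖ ≤ R - σ := by
    by_contra! hlt
    have h1 : ‖p‖ ≤ ‖p + χ' p • v p - q‖ + ‖q‖ + ‖χ' p • v p‖ := by
      have e : p = (p + χ' p • v p - q) + q - χ' p • v p := by abel
      calc ‖p‖ = ‖(p + χ' p • v p - q) + q - χ' p • v p‖ := by rw [← e]
        _ ≤ _ := (norm_sub_le _ _).trans (by gcongr; exact norm_add_le _ _)
    linarith
  refine ⟨p, by linarith, ?_⟩
  rw [χ'.one_of_mem_closedBall (by simpa [χ'] using hpR), one_smul] at hp
  have h2 := hvf p (by linarith)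
  have e : f p - q = (p + v p - q) - (v p - (f p - p)) := by abel
  rw [e]
  refine (norm_sub_le _ _).trans_lt ?_
  linarith

end Retraction

section Subspaces

variable {X : Type*} [NormedAddCommGroup X] [InnerProductSpace ℝ X] [FiniteDimensional ℝ X]

lemma norm_sub_starProjection_le (W : Submodule ℝ X) (x : X) {w : X} (hw : w ∈ W) :
    ‖x - W.starProjection x‖ ≤ ‖x - w‖ := by
  rw [Submodule.starProjection_minimal]
  exact ciInf_le ⟨0, by rintro _ ⟨y, rfl⟩; positivity⟩ (⟨w, hw⟩ : W)

lemma norm_sub_starProjection_le_norm (W : Submodule ℝ X) (x : X) :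
    ‖x - W.starProjection x‖ ≤ ‖x‖ := by
  simpa using norm_sub_starProjection_le W x W.zero_mem

lemma norm_starProjection_le (W : Submodule ℝ X) (x : X) : ‖W.starProjection x‖ ≤ ‖x‖ :=
  W.norm_starProjection_apply_le x

/-- If `W` is close to `W'` and they have the same dimension then the projections are close. -/
lemma norm_starProjection_sub_le {W W' : Submodule ℝ X}
    (hdim : Module.finrank ℝ W = Module.finrank ℝ W') {a : ℝ} (ha0 : 0 ≤ a) (ha : a ≤ 1 / 2)
    (h : ∀ v ∈ W, ‖v - W'.starProjection v‖ ≤ a * ‖v‖) :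
    ‖W.starProjection - W'.starProjection‖ ≤ 3 * a := by
  have hlow : ∀ v ∈ W, ‖v‖ ≤ 2 * ‖W'.starProjection v‖ := by
    intro v hv
    have h1 := h v hv
    have h2 : ‖v‖ ≤ ‖v - W'.starProjection v‖ + ‖W'.starProjection v‖ := by
      simpa using norm_add_le (v - W'.starProjection v) (W'.starProjection v)
    have h3 : a * ‖v‖ ≤ 1 / 2 * ‖v‖ := by gcongr
    linarith
  let T : W →ₗ[ℝ] W' := (W'.orthogonalProjectionOnto : X →ₗ[ℝ] W').comp W.subtype
  have hT : ∀ v : W, ((T v : W') : X) = W'.starProjection v := fun v => rfl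
  have hinj : Function.Injective T := by
    rw [injective_iff_map_eq_zero]
    intro v hv
    have h1 := hlow v v.2
    rw [← hT v, hv] at h1
    simpa using h1
  have hsurj : Function.Surjective T :=
    (LinearMap.injective_iff_surjective_of_finrank_eq_finrank hdim).1 hinj
  have hrev : ∀ w ∈ W', ‖w - W.starProjection w‖ ≤ 2 * a * ‖w‖ := by
    intro w hw
    obtain ⟨v, hv⟩ := hsurj ⟨w, hw⟩
    have hv' : W'.starProjection (v : X) = w := by rw [← hT v, hv]
    have h1 := h v v.2
    have h2 := hlow v v.2
    rw [hv'] at h1 h2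
    have h3 := norm_sub_starProjection_le W w v.2
    rw [norm_sub_rev w v] at h3
    have h4 : a * ‖(v : X)‖ ≤ a * (2 * ‖w‖) := by gcongr
    linarith
  refine ContinuousLinearMap.opNorm_le_bound _ (by positivity) fun x => ?_
  set y := x - W.starProjection x with hy
  have hcross : ‖W'.starProjection y‖ ≤ 2 * a * ‖x‖ := by
    set w := W'.starProjection y with hw
    have hwW : w ∈ W' := W'.starProjection_apply_mem y
    have e1 : inner ℝ w y = ‖w‖ ^ 2 := by
      have e := Submodule.starProjection_inner_eq_zero (K := W') y w hwW
      rw [← hw, inner_sub_left, sub_eq_zero, real_inner_self_eq_norm_sq, real_inner_comm] at e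
      exact e
    have e2 : inner ℝ w y = inner ℝ (w - W.starProjection w) x := by
      rw [hy, inner_sub_right, inner_sub_left, Submodule.inner_starProjection_left_eq_right W w x]
    have e3 := real_inner_le_norm (w - W.starProjection w) x
    have e4 := hrev w hwW
    have e5 : ‖w - W.starProjection w‖ * ‖x‖ ≤ 2 * a * ‖w‖ * ‖x‖ := by gcongr
    have e6 : ‖w‖ * ‖w‖ ≤ (2 * a * ‖x‖) * ‖w‖ := by nlinarith
    rcases (norm_nonneg w).eq_or_lt with h0 | h0
    · rw [← h0]; positivity
    · exact le_of_mul_le_mul_right e6 h0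
  have hdec : (W.starProjection - W'.starProjection) x
      = (W.starProjection x - W'.starProjection (W.starProjection x)) - W'.starProjection y := by
    simp only [hy, sub_apply, map_sub]
    abel
  rw [hdec]
  have h1 := h _ (W.starProjection_apply_mem x)
  have h2 : a * ‖W.starProjection x‖ ≤ a * ‖x‖ := by
    gcongr; exact norm_starProjection_le W x
  have h3 := norm_sub_le (W.starProjection x - W'.starProjection (W.starProjection x))
    (W'.starProjection y)
  linarith

lemma exists_tilted_vector {W W' : Submodule ℝ X}
    (hdim : Module.finrank ℝ W = Module.finrank ℝ W') {δ : ℝ} (hδ0 : 0 < δ) (hδ : δ ≤ 2)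
    (h : δ ≤ ‖W.starProjection - W'.starProjection‖) :
    ∃ v ∈ W, ‖v‖ = 1 ∧ δ / 4 ≤ ‖v - W'.starProjection v‖ := by
  by_contra! hcon
  have := norm_starProjection_sub_le hdim (a := δ / 4) (by positivity) (by linarith) ?_
  · linarith
  · intro v hv
    rcases eq_or_ne v 0 with rfl | hv0
    · simp
    · have h1 := hcon ((‖v‖⁻¹) • v) (W.smul_mem _ hv) (norm_smul_inv_norm hv0)
      rw [map_smul, ← smul_sub, norm_smul, norm_inv, norm_norm,
        inv_mul_lt_iff₀ (norm_pos_iff.2 hv0)] at h1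
      linarith

end Subspaces

/-- Flatness of `E` with respect to a chosen field of `d`-dimensional subspaces. -/
structure FlatField (n d : ℕ) (ε : ℝ) (E : Set (V n)) (W : V n → ℝ → Submodule ℝ (V n)) :
    Prop where
  isClosed : IsClosed E
  eps_pos : 0 < ε
  finrank_eq : ∀ e ∈ E, ∀ t, 0 < t → t ≤ 1 → Module.finrank ℝ (W e t) = d
  near_plane : ∀ e ∈ E, ∀ t, 0 < t → t ≤ 1 → ∀ f ∈ E, ‖f - e‖ < t →
    ‖(f - e) - (W e t).starProjection (f - e)‖ ≤ ε * t
  near_set : ∀ e ∈ E, ∀ t, 0 < t → t ≤ 1 → ∀ v ∈ W e t, ‖v‖ < t → ∃ f ∈ E, ‖f - (e + v)‖ ≤ ε * t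

lemma infDist_le_nhd_left {n : ℕ} {x : V n} {r : ℝ} (hr : 0 < r) {A B : Set (V n)}
    (hxB : x ∈ B) {ε : ℝ} (h : nhd x r A B ≤ ε) {y : V n}
    (hyA : y ∈ A) (hy : y ∈ ball x r) : infDist y B ≤ ε * r := by
  unfold nhd at h
  have hbound : ∀ y, (⨆ (_ : y ∈ A ∩ ball x r), infDist y B) ≤ r := fun y =>
    Real.iSup_le (fun hy => (infDist_le_dist_of_mem hxB).trans hy.2.le) hr.le
  have h1 : infDist y B ≤ ⨆ y ∈ A ∩ ball x r, infDist y B := by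
    refine le_ciSup_of_le ⟨r, ?_⟩ y ?_
    · rintro _ ⟨y, rfl⟩
      exact hbound y
    · rw [ciSup_pos ⟨hyA, hy⟩]
  have h2 := le_max_left (⨆ y ∈ A ∩ ball x r, infDist y B) (⨆ y ∈ B ∩ ball x r, infDist y A)
  rw [inv_mul_le_iff₀ hr] at h
  linarith

lemma nhd_comm {n : ℕ} (x : V n) (r : ℝ) (A B : Set (V n)) : nhd x r A B = nhd x r B A := by
  unfold nhd
  rw [max_comm]

lemma IsLARRF.exists_flatField {n d : ℕ} {ε C₀ : ℝ} {E : Set (V n)} (hε : 0 < ε)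
    (hE : IsLARRF n d ε C₀ E) : ∃ W, FlatField n d ε E W := by
  classical
  have hex : ∀ e t, ∃ W : Submodule ℝ (V n), e ∈ E → 0 < t → t ≤ 1 →
      Module.finrank ℝ W = d ∧
      (∀ f ∈ E, ‖f - e‖ < t → ‖(f - e) - W.starProjection (f - e)‖ ≤ ε * t) ∧
      ∀ v ∈ W, ‖v‖ < t → ∃ f ∈ E, ‖f - (e + v)‖ ≤ ε * t := by
    intro e t
    by_cases h : e ∈ E ∧ 0 < t ∧ t ≤ 1
    swap
    · exact ⟨⊥, fun h1 h2 h3 => absurd ⟨h1, h2, h3⟩ h⟩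
    obtain ⟨he, ht0, ht1⟩ := h
    obtain ⟨⟨P, ⟨Q, rfl, hdim, -⟩, heP, hP⟩, -⟩ := hE.2.2 e he t ht0 ht1
    refine ⟨Q.direction, fun _ _ _ => ⟨hdim, ?_, ?_⟩⟩
    · intro f hf hft
      have h1 : infDist f (Q : Set (V n)) ≤ ε * t :=
        infDist_le_nhd_left ht0 heP (by rwa [nhd_comm]) hf (by simpa [dist_eq_norm] using hft)
      obtain ⟨y, hyQ, hy⟩ := (Q.closed_of_finiteDimensional).exists_infDist_eq_dist ⟨e, heP⟩ f
      have hye : y - e ∈ Q.direction := AffineSubspace.vsub_mem_direction hyQ heP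
      refine (norm_sub_starProjection_le _ _ hye).trans ?_
      rw [sub_sub_sub_cancel_right, ← dist_eq_norm, ← hy]
      exact h1
    · intro v hv hvt
      have hev : e + v ∈ (Q : Set (V n)) := by
        have := AffineSubspace.vadd_mem_of_mem_direction hv heP
        rwa [vadd_eq_add, add_comm] at this
      have h1 : infDist (e + v) E ≤ ε * t :=
        infDist_le_nhd_left ht0 he hP hev (by simpa [dist_eq_norm] using hvt)
      obtain ⟨y, hyE, hy⟩ := hE.2.1.exists_infDist_eq_dist ⟨e, he⟩ (e + v)
      refine ⟨y, hyE, ?_⟩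
      rw [← dist_eq_norm, dist_comm, ← hy]
      exact h1
  choose W hW using hex
  exact ⟨W, hE.2.1, hε, fun e he t h0 h1 => (hW e t he h0 h1).1,
    fun e he t h0 h1 => (hW e t he h0 h1).2.1, fun e he t h0 h1 => (hW e t he h0 h1).2.2⟩

namespace FlatField

variable {n d : ℕ} {ε : ℝ} {E : Set (V n)} {W : V n → ℝ → Submodule ℝ (V n)}

/-- Comparison of the planes at two comparable scales. -/
lemma norm_sub_le_of_le (hF : FlatField n d ε E W) {e f : V n} (he : e ∈ E) (hf : f ∈ E)
    {t T Λ : ℝ} (ht : 0 < t) (hT : T ≤ 1) (htT : ‖e - f‖ + 2 * t ≤ T) (hΛ : T ≤ Λ * t)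
    (hε : 6 * Λ * ε ≤ 1 / 2) :
    ‖(W e t).starProjection - (W f T).starProjection‖ ≤ 18 * Λ * ε := by
  have hε0 := hF.eps_pos
  have hef := norm_nonneg (e - f)
  have hT0 : 0 < T := by linarith
  have ht1 : t ≤ 1 := by linarith
  have hΛ2 : 2 ≤ Λ := by
    have : 2 * t ≤ Λ * t := by linarith
    exact le_of_mul_le_mul_right this ht
  have hε2 : ε ≤ 1 / 24 := by nlinarith
  have h := norm_starProjection_sub_le (W := W e t) (W' := W f T) (a := 6 * Λ * ε)
    (by rw [hF.finrank_eq e he t ht ht1, hF.finrank_eq f hf T hT0 hT]) (by positivity) hε ?_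
  · linarith
  -- it is enough to consider vectors of length `t / 2`
  have hmain : ∀ v ∈ W e t, ‖v‖ = t / 2 → ‖v - (W f T).starProjection v‖ ≤ 6 * Λ * ε * ‖v‖ := by
    intro v hv hvt
    obtain ⟨g, hg, hgv⟩ := hF.near_set e he t ht ht1 v hv (by linarith)
    have hge : ‖g - e‖ ≤ t / 2 + ε * t := by
      have : g - e = (g - (e + v)) + v := by abel
      rw [this]
      refine (norm_add_le _ _).trans ?_
      linarith
    have hgf : ‖g - f‖ < T := by
      have : ‖g - f‖ ≤ ‖g - e‖ + ‖e - f‖ := norm_sub_le_norm_sub_add_norm_sub _ _ _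
      nlinarith
    have h1 := hF.near_plane f hf T hT0 hT g hg hgf
    have h2 := hF.near_plane f hf T hT0 hT e he (by linarith)
    have h3 := norm_sub_starProjection_le_norm (W f T) (g - (e + v))
    have e1 : v - (W f T).starProjection v
        = ((g - f) - (W f T).starProjection (g - f)) - ((e - f) - (W f T).starProjection (e - f))
          - ((g - (e + v)) - (W f T).starProjection (g - (e + v))) := by
      simp only [map_sub, map_add]
      abel
    rw [e1]
    refine (norm_sub_le _ _).trans ?_
    have h4 := norm_sub_le ((g - f) - (W f T).starProjection (g - f))
      ((e - f) - (W f T).starProjection (e - f))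
    rw [hvt]
    have h5 : ε * T ≤ ε * (Λ * t) := by gcongr
    have h6 : ε * t ≤ ε * (Λ * t) := by
      have : t ≤ Λ * t := by nlinarith
      gcongr
    nlinarith
  intro v hv
  rcases eq_or_ne v 0 with rfl | hv0
  · simp
  · have hpos := norm_pos_iff.2 hv0
    have h1 := hmain ((t / 2 / ‖v‖) • v) ((W e t).smul_mem _ hv) (by
      rw [norm_smul, Real.norm_of_nonneg (by positivity), div_mul_cancel₀ _ hpos.ne'])
    rw [map_smul, ← smul_sub, norm_smul, norm_smul, Real.norm_of_nonneg (by positivity)] at h1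
    have h2 : 0 < t / 2 / ‖v‖ := by positivity
    refine le_of_mul_le_mul_left ?_ h2
    linarith

lemma norm_sub_le_of_comparable (hF : FlatField n d ε E W) {e f : V n} (he : e ∈ E) (hf : f ∈ E)
    {t t' T Λ : ℝ} (ht : 0 < t) (ht' : 0 < t') (hT : T ≤ 1) (htT : ‖e - f‖ + 2 * t ≤ T)
    (htT' : 2 * t' ≤ T) (hΛ : T ≤ Λ * t) (hΛ' : T ≤ Λ * t') (hε : 6 * Λ * ε ≤ 1 / 2) :
    ‖(W e t).starProjection - (W f t').starProjection‖ ≤ 36 * Λ * ε := by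
  have h1 := hF.norm_sub_le_of_le he hf ht hT htT hΛ hε
  have h2 := hF.norm_sub_le_of_le hf hf ht' hT (by simpa using htT') hΛ' hε
  rw [norm_sub_rev] at h2
  have h3 : (W e t).starProjection - (W f t').starProjection
      = ((W e t).starProjection - (W f T).starProjection)
        + ((W f T).starProjection - (W f t').starProjection) := by abel
  rw [h3]
  refine (norm_add_le _ _).trans ?_
  linarith

end FlatField

namespace FlatField

variable {n d : ℕ} {ε : ℝ} {E : Set (V n)} {W : V n → ℝ → Submodule ℝ (V n)}

/-- Points of the convex hull of a small piece of `E` are very close to `E`. -/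
lemma exists_near_of_mem_convexHull (hF : FlatField n d ε E W) {z p e : V n} {τ : ℝ} (hτ : 0 < τ)
    (hτ1 : 2 * τ ≤ 1) (he : e ∈ E) (hez : ‖z - e‖ < τ) (hp : p ∈ convexHull ℝ (E ∩ ball z τ)) :
    ∃ f ∈ E, ‖p - f‖ ≤ 4 * ε * τ := by
  have hE : E ∩ ball z τ ⊆ {y | ‖y - e‖ < 2 * τ ∧
      ‖(y - e) - (W e (2 * τ)).starProjection (y - e)‖ ≤ ε * (2 * τ)} := by
    rintro y ⟨hyE, hy⟩
    have h1 : ‖y - e‖ < 2 * τ := by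
      have h2 : ‖y - e‖ ≤ ‖y - z‖ + ‖z - e‖ := norm_sub_le_norm_sub_add_norm_sub _ _ _
      have h3 : ‖y - z‖ < τ := by simpa [dist_eq_norm] using hy
      linarith
    exact ⟨h1, hF.near_plane e he _ (by positivity) hτ1 y hyE h1⟩
  have hconv : Convex ℝ {y | ‖y - e‖ < 2 * τ ∧
      ‖(y - e) - (W e (2 * τ)).starProjection (y - e)‖ ≤ ε * (2 * τ)} := by
    have hb : {y | ‖y - e‖ < 2 * τ ∧
      ‖(y - e) - (W e (2 * τ)).starProjection (y - e)‖ ≤ ε * (2 * τ)}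
        = ball e (2 * τ) ∩ (fun y => y + -e) ⁻¹'
          ((ContinuousLinearMap.id ℝ (V n) - (W e (2 * τ)).starProjection : V n →L[ℝ] V n) ⁻¹'
            closedBall 0 (ε * (2 * τ))) := by
      ext y
      simp [dist_eq_norm, sub_eq_add_neg]
    rw [hb]
    refine (convex_ball _ _).inter (Convex.translate_preimage_left ?_ _)
    exact (convex_closedBall _ _).linear_preimage
      (ContinuousLinearMap.id ℝ (V n) - (W e (2 * τ)).starProjection : V n →L[ℝ] V n).toLinearMap
  obtain ⟨h1, h2⟩ := convexHull_min hE hconv hp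
  obtain ⟨f, hf, hfe⟩ := hF.near_set e he (2 * τ) (by positivity) hτ1
    ((W e (2 * τ)).starProjection (p - e)) (Submodule.starProjection_apply_mem _ _)
    ((norm_starProjection_le _ _).trans_lt h1)
  refine ⟨f, hf, ?_⟩
  have e1 : p - f = ((p - e) - (W e (2 * τ)).starProjection (p - e))
      - (f - (e + (W e (2 * τ)).starProjection (p - e))) := by abel
  rw [e1]
  refine (norm_sub_le _ _).trans ?_
  linarith

/-- A continuous map close to `E` can be moved slightly to be twice as close. -/
lemma exists_continuous_closer (hF : FlatField n d ε E W) (hε : ε ≤ 1 / 16) {X : Type*}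
    [TopologicalSpace X] [NormalSpace X] [ParacompactSpace X] {f : X → V n} (hf : Continuous f)
    {τ : ℝ} (hτ : 0 < τ) (hτ1 : 2 * τ ≤ 1) (hfE : ∀ p, ∃ e ∈ E, ‖f p - e‖ < τ) :
    ∃ g : X → V n, Continuous g ∧ (∀ p, ‖g p - f p‖ ≤ τ) ∧ ∀ p, ∃ e ∈ E, ‖g p - e‖ < τ / 2 := by
  obtain ⟨g, hg⟩ := exists_continuous_forall_mem_convex_of_local_const
    (t := fun p => convexHull ℝ (E ∩ ball (f p) τ)) (fun p => convex_convexHull ℝ _) (by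
      intro p
      obtain ⟨e, he, hpe⟩ := hfE p
      refine ⟨e, ?_⟩
      have hopen : IsOpen {q | ‖f q - e‖ < τ} := isOpen_lt (by fun_prop) continuous_const
      filter_upwards [hopen.mem_nhds hpe] with q hq
      refine subset_convexHull ℝ _ ⟨he, ?_⟩
      rw [mem_ball, dist_comm, dist_eq_norm]
      exact hq)
  refine ⟨g, g.continuous, fun p => ?_, fun p => ?_⟩
  · have h1 : g p ∈ ball (f p) τ :=
      convexHull_min inter_subset_right (convex_ball _ _) (hg p)
    rw [mem_ball, dist_eq_norm] at h1
    exact h1.le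
  · obtain ⟨e, he, hpe⟩ := hfE p
    obtain ⟨e', he', h⟩ := hF.exists_near_of_mem_convexHull hτ hτ1 he hpe (hg p)
    refine ⟨e', he', h.trans_lt ?_⟩
    have := hF.eps_pos
    nlinarith

lemma exists_continuous_seq (hF : FlatField n d ε E W) (hε : ε ≤ 1 / 16) {X : Type*}
    [TopologicalSpace X] [NormalSpace X] [ParacompactSpace X] {f : X → V n} (hf : Continuous f)
    {τ : ℝ} (hτ : 0 < τ) (hτ1 : 2 * τ ≤ 1) (hfE : ∀ p, ∃ e ∈ E, ‖f p - e‖ < τ) (k : ℕ) :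
    ∃ g : X → V n, Continuous g ∧ (∀ p, ‖g p - f p‖ ≤ 2 * τ - 2 * (τ / 2 ^ k)) ∧
      ∀ p, ∃ e ∈ E, ‖g p - e‖ < τ / 2 ^ k := by
  induction k with
  | zero => exact ⟨f, hf, by simp, by simpa using hfE⟩
  | succ k ih =>
    obtain ⟨g, hg, hgf, hgE⟩ := ih
    have h1 : (1 : ℝ) ≤ 2 ^ k := one_le_pow₀ (by norm_num)
    have h2 : τ / 2 ^ k ≤ τ := div_le_self hτ.le h1
    obtain ⟨g', hg', hgg', hgE'⟩ := hF.exists_continuous_closer hε hg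
      (by positivity : 0 < τ / 2 ^ k) (by linarith) hgE
    have h3 : τ / 2 ^ (k + 1) = τ / 2 ^ k / 2 := by rw [pow_succ]; field_simp
    refine ⟨g', hg', fun p => ?_, fun p => ?_⟩
    · have h4 : ‖g' p - f p‖ ≤ ‖g' p - g p‖ + ‖g p - f p‖ := norm_sub_le_norm_sub_add_norm_sub _ _ _
      rw [h3]
      linarith [hgf p, hgg' p]
    · rw [h3]; exact hgE' p

/-- The projection of `E` on its approximating plane contains a disc. -/
lemma exists_proj_eq (hF : FlatField n d ε E W) (hε : ε ≤ 1 / 16) {e : V n} (he : e ∈ E) {t : ℝ}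
    (ht : 0 < t) (ht1 : t ≤ 1) {q : V n} (hqW : q ∈ W e t) (hq : ‖q‖ ≤ (1 - 6 * ε) * t) :
    ∃ f ∈ E, (W e t).starProjection (f - e) = q ∧ ‖f - e - q‖ ≤ 10 * ε * t := by
  have hε0 := hF.eps_pos
  set U := W e t with hU
  let R : ℝ := (1 - ε) * t
  have hR : 0 < R := by simp only [R]; nlinarith
  have hRt : R < t := by simp only [R]; nlinarith
  let f₀ : U → V n := fun p => e + ((R / max R ‖p‖) • p : U)
  have hf₀ : Continuous f₀ := by
    have h1 : Continuous fun p : U => R / max R ‖p‖ :=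
      continuous_const.div (by fun_prop) fun p => (hR.trans_le (le_max_left _ _)).ne'
    fun_prop
  have hf₀E : ∀ p, ∃ f ∈ E, ‖f₀ p - f‖ < 2 * ε * t := by
    intro p
    have hn : ‖(((R / max R ‖p‖) • p : U) : V n)‖ < t := by
      have hm : 0 < max R ‖p‖ := hR.trans_le (le_max_left _ _)
      rw [← Submodule.coe_norm, norm_smul, Real.norm_of_nonneg (by positivity)]
      refine lt_of_le_of_lt ?_ hRt
      rw [div_mul_eq_mul_div, div_le_iff₀ hm]
      exact mul_le_mul_of_nonneg_left (le_max_right _ _) hR.le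
    obtain ⟨f, hf, hfe⟩ := hF.near_set e he t ht ht1 _ ((R / max R ‖p‖) • p : U).2 hn
    refine ⟨f, hf, ?_⟩
    rw [norm_sub_rev]
    refine hfe.trans_lt ?_
    have : 0 < ε * t := by positivity
    linarith
  have hf₀id : ∀ p : U, ‖p‖ ≤ R → f₀ p = e + p := by
    intro p hp
    simp only [f₀]
    rw [max_eq_left hp, div_self hR.ne', one_smul]
  have happrox : ∀ k : ℕ, ∃ f ∈ E ∩ closedBall (e + q) (10 * ε * t),
      ‖U.starProjection (f - e) - q‖ ≤ 2 * (2 * ε * t / 2 ^ k) := by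
    intro k
    have hτ : 0 < 2 * ε * t := by positivity
    obtain ⟨g, hg, hgf, hgE⟩ := hF.exists_continuous_seq hε hf₀ hτ (by nlinarith) hf₀E k
    let h : U → U := fun p => U.orthogonalProjectionOnto (g p - e)
    have hh : Continuous h := by fun_prop
    have hcoe : ∀ p, ((h p : U) : V n) = U.starProjection (g p - e) := fun p => rfl
    have hk : 0 < 2 * ε * t / 2 ^ k := by positivity
    have hk1 : 2 * ε * t / 2 ^ k ≤ 2 * ε * t := div_le_self hτ.le (one_le_pow₀ (by norm_num))
    have hmove : ∀ p : U, ‖p‖ ≤ R → ‖h p - p‖ ≤ 4 * ε * t - 2 * (2 * ε * t / 2 ^ k) := by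
      intro p hp
      have h1 : ((h p - p : U) : V n) = U.starProjection (g p - f₀ p) := by
        rw [Submodule.coe_sub, hcoe, hf₀id p hp]
        have : U.starProjection (p : V n) = p := Submodule.starProjection_eq_self_iff.2 p.2
        rw [← sub_sub, map_sub _ (g p - e), this]
      rw [Submodule.coe_norm, h1]
      refine (norm_starProjection_le _ _).trans ?_
      linarith [hgf p]
    obtain ⟨p, hpR, hpq⟩ := exists_dist_lt_of_continuous hh hR hmove (q := ⟨q, hqW⟩) (by
      rw [Submodule.coe_norm]
      simp only [R]
      have : 0 < ε * t := by positivity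
      linarith) hk
    obtain ⟨f, hf, hfg⟩ := hgE p
    have hpq' : ‖U.starProjection (g p - e) - q‖ < 2 * ε * t / 2 ^ k := by
      rw [Submodule.coe_norm, Submodule.coe_sub, hcoe] at hpq
      exact hpq
    have hpqn : ‖(p : V n) - q‖ ≤ 4 * ε * t - 2 * ε * t / 2 ^ k := by
      have h1 := hmove p hpR
      rw [Submodule.coe_norm, Submodule.coe_sub, hcoe, norm_sub_rev] at h1
      have h2 : ‖(p : V n) - q‖ ≤ ‖(p : V n) - U.starProjection (g p - e)‖
        + ‖U.starProjection (g p - e) - q‖ := norm_sub_le_norm_sub_add_norm_sub _ _ _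
      linarith
    refine ⟨f, ⟨hf, ?_⟩, ?_⟩
    · rw [mem_closedBall, dist_eq_norm]
      have e1 : f - (e + q) = -(g p - f) + (g p - f₀ p) + ((p : V n) - q) := by
        rw [hf₀id p hpR]; abel
      rw [e1]
      refine (norm_add_le _ _).trans ?_
      have h2 := norm_add_le (-(g p - f)) (g p - f₀ p)
      rw [norm_neg] at h2
      have := hgf p
      have : 0 < ε * t := by positivity
      linarith
    · have e1 : U.starProjection (f - e) - q
          = (U.starProjection (g p - e) - q) - U.starProjection (g p - f) := by
        simp only [map_sub]; abel
      rw [e1]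
      refine (norm_sub_le _ _).trans ?_
      linarith [norm_starProjection_le U (g p - f)]
  have hK : IsCompact (E ∩ closedBall (e + q) (10 * ε * t)) :=
    (isCompact_closedBall _ _).inter_left hF.isClosed
  obtain ⟨f₁, hf₁, -⟩ := happrox 0
  obtain ⟨f, hf, hmin⟩ := hK.exists_isMinOn ⟨f₁, hf₁⟩
    (f := fun f => ‖U.starProjection (f - e) - q‖) (by fun_prop)
  refine ⟨f, hf.1, ?_, ?_⟩
  · have hle : ∀ k : ℕ, ‖U.starProjection (f - e) - q‖ ≤ (4 * ε * t) * (1 / 2) ^ k := by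
      intro k
      obtain ⟨f', hf', h⟩ := happrox k
      refine (hmin hf').trans (h.trans_eq ?_)
      rw [div_pow, one_pow]; ring
    have hlim : Filter.Tendsto (fun k : ℕ => (4 * ε * t) * (1 / 2 : ℝ) ^ k) Filter.atTop
        (nhds ((4 * ε * t) * 0)) :=
      (tendsto_pow_atTop_nhds_zero_of_lt_one (by norm_num) (by norm_num)).const_mul _
    have := ge_of_tendsto' hlim hle
    rw [mul_zero] at this
    exact sub_eq_zero.1 (norm_le_zero_iff.1 this)
  · have := hf.2
    rw [mem_closedBall, dist_eq_norm] at this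
    rwa [sub_sub]

end FlatField

/-- A decreasing chain of stopping scales: between `s k e` and `s (k + 1) e` the planes at `e` stay
close to the one at scale `s k e`, and near scale `s (k + 1) e` they have turned by `δ`. -/
structure ScaleChain {n : ℕ} (E : Set (V n)) (W : V n → ℝ → Submodule ℝ (V n)) (δ θ r : ℝ)
    (s : ℕ → V n → ℝ) : Prop where
  zero_eq : ∀ e, s 0 e = r
  nonneg : ∀ k, ∀ e ∈ E, 0 ≤ s k e
  succ_le : ∀ k, ∀ e ∈ E, s (k + 1) e ≤ θ * s k e
  lipschitz : ∀ k, ∀ e ∈ E, ∀ f ∈ E, s k e ≤ s k f + ‖e - f‖ / 10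
  tilt : ∀ k, ∀ e ∈ E, 0 < s (k + 1) e → ∃ t, s (k + 1) e / 2 ≤ t ∧ t ≤ θ * s k e ∧
    δ ≤ ‖(W e t).starProjection - (W e (s k e)).starProjection‖
  close : ∀ k, ∀ e ∈ E, ∀ t, 0 < t → s (k + 1) e ≤ t → t ≤ s k e →
    ‖(W e t).starProjection - (W e (s k e)).starProjection‖ ≤ 2 * δ

section Scales

variable {n : ℕ} (E : Set (V n)) (W : V n → ℝ → Submodule ℝ (V n)) (δ θ : ℝ)

/-- The largest scale below `θ * s f` at which the plane at `f` has turned by `δ`. -/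
def tiltScale (s : V n → ℝ) (f : V n) : ℝ :=
  sSup {t | 0 < t ∧ t ≤ θ * s f ∧ δ ≤ ‖(W f t).starProjection - (W f (s f)).starProjection‖}

/-- The largest slowly varying function below `tiltScale`. -/
def nextScale (s : V n → ℝ) (e : V n) : ℝ :=
  ⨅ f : E, (tiltScale W δ θ s f + ‖e - f‖ / 10)

/-- The stopping scales. -/
def stoppingScale (r : ℝ) : ℕ → V n → ℝ
  | 0 => fun _ => r
  | k + 1 => nextScale E W δ θ (stoppingScale r k)

end Scales

section

variable {n d : ℕ} {ε δ θ r : ℝ} {E : Set (V n)} {W : V n → ℝ → Submodule ℝ (V n)}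

lemma tiltScale_nonneg (s : V n → ℝ) (f : V n) : 0 ≤ tiltScale W δ θ s f :=
  Real.sSup_nonneg fun _ ht => ht.1.le

lemma tiltScale_le {s : V n → ℝ} {f : V n} (h : 0 ≤ θ * s f) : tiltScale W δ θ s f ≤ θ * s f :=
  Real.sSup_le (fun _ ht => ht.2.1) h

lemma norm_lt_of_tiltScale_lt {s : V n → ℝ} {f : V n} {t : ℝ} (ht0 : 0 < t) (ht1 : t ≤ θ * s f)
    (h : tiltScale W δ θ s f < t) :
    ‖(W f t).starProjection - (W f (s f)).starProjection‖ < δ := by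
  by_contra! hcon
  have : t ≤ tiltScale W δ θ s f := le_csSup ⟨θ * s f, fun _ ht => ht.2.1⟩ ⟨ht0, ht1, hcon⟩
  linarith

lemma bddBelow_nextScale (s : V n → ℝ) (e : V n) :
    BddBelow (range fun f : E => tiltScale W δ θ s f + ‖e - f‖ / 10) := by
  refine ⟨0, ?_⟩
  rintro _ ⟨f, rfl⟩
  have := tiltScale_nonneg (W := W) (δ := δ) (θ := θ) s f
  positivity

lemma nextScale_nonneg (s : V n → ℝ) (e : V n) : 0 ≤ nextScale E W δ θ s e := by
  refine Real.iInf_nonneg fun f => ?_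
  have := tiltScale_nonneg (W := W) (δ := δ) (θ := θ) s f
  positivity

lemma nextScale_le (s : V n → ℝ) (e : V n) {f : V n} (hf : f ∈ E) :
    nextScale E W δ θ s e ≤ tiltScale W δ θ s f + ‖e - f‖ / 10 :=
  ciInf_le (bddBelow_nextScale s e) (⟨f, hf⟩ : E)

lemma nextScale_le_tiltScale (s : V n → ℝ) {e : V n} (he : e ∈ E) :
    nextScale E W δ θ s e ≤ tiltScale W δ θ s e := by
  simpa using nextScale_le (W := W) (δ := δ) (θ := θ) s e he

lemma nextScale_lipschitz (s : V n → ℝ) {e f : V n} (hf : f ∈ E) :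
    nextScale E W δ θ s e ≤ nextScale E W δ θ s f + ‖e - f‖ / 10 := by
  have : Nonempty E := ⟨⟨f, hf⟩⟩
  rw [← sub_le_iff_le_add]
  refine le_ciInf fun g => ?_
  have h1 := nextScale_le (W := W) (δ := δ) (θ := θ) s e g.2
  have h2 : ‖e - g‖ ≤ ‖e - f‖ + ‖f - g‖ := norm_sub_le_norm_sub_add_norm_sub _ _ _
  linarith

lemma exists_tilt_of_nextScale_pos {s : V n → ℝ} {e : V n} (he : e ∈ E)
    (h : 0 < nextScale E W δ θ s e) : ∃ t, nextScale E W δ θ s e / 2 ≤ t ∧ t ≤ θ * s e ∧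
      δ ≤ ‖(W e t).starProjection - (W e (s e)).starProjection‖ := by
  have h1 : nextScale E W δ θ s e / 2 < tiltScale W δ θ s e := by
    linarith [nextScale_le_tiltScale (W := W) (δ := δ) (θ := θ) s he]
  obtain ⟨t, ht, hlt⟩ := exists_lt_of_lt_csSup (by
    by_contra hne
    rw [not_nonempty_iff_eq_empty] at hne
    rw [tiltScale, hne, Real.sSup_empty] at h1
    linarith) h1
  exact ⟨t, hlt.le, ht.2.1, ht.2.2⟩

lemma FlatField.norm_sub_le_of_nextScale_le (hF : FlatField n d ε E W) {s : V n → ℝ}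
    (hδ : δ ≤ 1) (hθ0 : 0 < θ) (hθ : θ ≤ 1 / 1000) (hε : 10000 * ε ≤ δ * θ)
    (hs1 : ∀ e ∈ E, s e ≤ 1 / 10) (hlip : ∀ e ∈ E, ∀ f ∈ E, s e ≤ s f + ‖e - f‖ / 10)
    {e : V n} (he : e ∈ E) {t : ℝ} (ht0 : 0 < t) (ht1 : nextScale E W δ θ s e ≤ t)
    (ht2 : t ≤ s e) :
    ‖(W e t).starProjection - (W e (s e)).starProjection‖ ≤ 2 * δ := by
  have hε0 := hF.eps_pos
  have hεθ : 10000 * (ε / θ) ≤ δ := by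
    rw [← mul_div_assoc, div_le_iff₀ hθ0]; exact hε
  have hεδ : 1000 * ε ≤ ε / θ := by
    rw [le_div_iff₀ hθ0]; nlinarith
  have hse := hs1 e he
  have hse0 : 0 < s e := ht0.trans_le ht2
  -- comparison at one point
  have hdirect : ∀ f ∈ E, ∀ T, 0 < T → θ * s f ≤ T → T ≤ s f →
      ‖(W f T).starProjection - (W f (s f)).starProjection‖ ≤ 72 * (ε / θ) := by
    intro f hf T hT0 hT1 hT2
    have h2 := hs1 f hf
    have h := hF.norm_sub_le_of_comparable hf hf (t := T) (t' := s f) (T := 2 * s f)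
      (Λ := 2 / θ) hT0 (by linarith) (by linarith) (by simpa using hT2) le_rfl ?_ ?_ ?_
    · refine h.trans_eq ?_
      ring
    · rw [div_mul_eq_mul_div, le_div_iff₀ hθ0]; nlinarith
    · rw [div_mul_eq_mul_div, le_div_iff₀ hθ0]; nlinarith
    · have : 6 * (2 / θ) * ε = 12 * (ε / θ) := by ring
      rw [this]; linarith
  rcases le_or_gt (θ * s e) t with hcase | hcase
  · have := hdirect e he t ht0 hcase ht2
    linarith
  have : Nonempty E := ⟨⟨e, he⟩⟩
  obtain ⟨⟨f, hf⟩, hft⟩ := exists_lt_of_ciInf_lt (show nextScale E W δ θ s e < 2 * t by linarith)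
  simp only at hft
  have htf := tiltScale_nonneg (W := W) (δ := δ) (θ := θ) s f
  have hef : ‖e - f‖ ≤ 20 * t := by linarith
  have hef0 := norm_nonneg (e - f)
  have htse : 1000 * t ≤ s e := by nlinarith
  have hsf1 : s e ≤ s f + ‖e - f‖ / 10 := hlip e he f hf
  have hsf2 : s f ≤ s e + ‖e - f‖ / 10 := by
    have := hlip f hf e he
    rwa [norm_sub_rev] at this
  have h1 := hF.norm_sub_le_of_le he hf (t := t) (T := 40 * t) (Λ := 40) ht0 (by linarith)
    (by linarith) le_rfl (by linarith)
  have h3 := hF.norm_sub_le_of_comparable he hf (t := s e) (t' := s f) (T := 4 * s e) (Λ := 8) hse0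
    (by linarith) (by linarith) (by linarith) (by linarith) (by linarith) (by linarith)
    (by linarith)
  have h2 : ‖(W f (40 * t)).starProjection - (W f (s f)).starProjection‖ ≤ δ + 72 * (ε / θ) := by
    rcases le_or_gt (θ * s f) (40 * t) with h | h
    · have := hdirect f hf (40 * t) (by linarith) h (by linarith)
      linarith
    · have := norm_lt_of_tiltScale_lt (W := W) (δ := δ) (θ := θ) (s := s) (f := f) (t := 40 * t)
        (by linarith) h.le (by linarith)
      have : 0 < ε / θ := by positivity
      linarith
  have hdec : (W e t).starProjection - (W e (s e)).starProjection
      = ((W e t).starProjection - (W f (40 * t)).starProjection)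
        + ((W f (40 * t)).starProjection - (W f (s f)).starProjection)
        + -((W e (s e)).starProjection - (W f (s f)).starProjection) := by abel
  rw [hdec]
  refine (norm_add_le _ _).trans ?_
  have h4 := norm_add_le ((W e t).starProjection - (W f (40 * t)).starProjection)
    ((W f (40 * t)).starProjection - (W f (s f)).starProjection)
  rw [norm_neg]
  linarith

lemma FlatField.scaleChain (hF : FlatField n d ε E W)
    (hδ : δ ≤ 1) (hθ0 : 0 < θ) (hθ : θ ≤ 1 / 1000) (hε : 10000 * ε ≤ δ * θ)
    (hr0 : 0 < r) (hr : r ≤ 1 / 10) :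
    ScaleChain E W δ θ r (stoppingScale E W δ θ r) := by
  have hnn : ∀ k, ∀ e ∈ E, 0 ≤ stoppingScale E W δ θ r k e := by
    intro k e _
    cases k with
    | zero => exact hr0.le
    | succ k => exact nextScale_nonneg _ _
  have hsucc : ∀ k, ∀ e ∈ E,
      stoppingScale E W δ θ r (k + 1) e ≤ θ * stoppingScale E W δ θ r k e := fun k e he =>
    (nextScale_le_tiltScale _ he).trans (tiltScale_le (mul_nonneg hθ0.le (hnn k e he)))
  have hle : ∀ k, ∀ e ∈ E, stoppingScale E W δ θ r k e ≤ 1 / 10 := by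
    intro k e he
    induction k with
    | zero => exact hr
    | succ k ih =>
      have h1 := hsucc k e he
      have h2 := hnn k e he
      nlinarith
  have hlip : ∀ k, ∀ e ∈ E, ∀ f ∈ E,
      stoppingScale E W δ θ r k e ≤ stoppingScale E W δ θ r k f + ‖e - f‖ / 10 := by
    intro k e he f hf
    cases k with
    | zero =>
      simp only [stoppingScale]
      have := norm_nonneg (e - f)
      linarith
    | succ k => exact nextScale_lipschitz _ hf
  exact ⟨fun _ => rfl, hnn, hsucc, hlip, fun k e he h => exists_tilt_of_nextScale_pos he h,
    fun k e he t h0 h1 h2 => hF.norm_sub_le_of_nextScale_le hδ hθ0 hθ hε (hle k)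
      (hlip k) he h0 h1 h2⟩

end

/-- Glueing of nearly compatible local functions `A f`, each given on a ball about `f` of radius
comparable to the slowly varying scale `s f`. -/
lemma exists_glueing {n : ℕ} {E : Set (V n)} {s : V n → ℝ} {A : V n → V n → ℝ} {η : ℝ}
    (hη : 0 < η) (hlip : ∀ e ∈ E, ∀ f ∈ E, s e ≤ s f + ‖e - f‖ / 10)
    (hval : ∀ e ∈ E, ∀ f ∈ E, 0 < s e → ‖e - f‖ ≤ s e / 2 → ∀ z, ‖z - e‖ ≤ s e →
      |A f z - A e z| ≤ η * s e)
    (hlin : ∀ e ∈ E, ∀ f ∈ E, 0 < s e → ‖e - f‖ ≤ s e / 2 → ∀ z w,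
      |(A f z - A e z) - (A f w - A e w)| ≤ η * ‖z - w‖) :
    ∃ h : V n → ℝ, (∀ e ∈ E, s e ≤ 0 → h e = 0) ∧ ∀ e ∈ E, 0 < s e → ∀ z, ‖z - e‖ ≤ s e / 40 →
      |h z - A e z| ≤ 101 * η * s e ∧ ∀ w, ‖w - e‖ ≤ s e / 40 →
        |(h z - A e z) - (h w - A e w)| ≤ 101 * η * ‖z - w‖ := by
  let S : V n → Set ℝ := fun z =>
    {y | ∃ f ∈ E, 0 < s f ∧ ‖z - f‖ < s f / 4 ∧ y = A f z + 100 * η * ‖z - f‖}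
  -- a point active at `z` is close to every nearby base point
  have hnear : ∀ e ∈ E, 0 < s e → ∀ z, ‖z - e‖ ≤ s e / 40 → ∀ f ∈ E, ‖z - f‖ < s f / 4 →
      ‖e - f‖ ≤ s e / 2 := by
    intro e he hse z hz f hf hzf
    have h1 := hlip f hf e he
    have h2 : ‖e - f‖ ≤ ‖e - z‖ + ‖z - f‖ := norm_sub_le_norm_sub_add_norm_sub _ _ _
    rw [norm_sub_rev f e] at h1
    rw [norm_sub_rev e z] at h2
    linarith
  have hbase : ∀ e ∈ E, 0 < s e → ∀ z, ‖z - e‖ ≤ s e / 40 → A e z + 100 * η * ‖z - e‖ ∈ S z :=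
    fun e he hse z hz => ⟨e, he, hse, by linarith, rfl⟩
  have hlow : ∀ e ∈ E, 0 < s e → ∀ z, ‖z - e‖ ≤ s e / 40 → ∀ y ∈ S z, A e z - η * s e ≤ y := by
    rintro e he hse z hz _ ⟨f, hf, hsf, hzf, rfl⟩
    have h1 := hval e he f hf hse (hnear e he hse z hz f hf hzf) z (by linarith)
    have h2 : 0 ≤ 100 * η * ‖z - f‖ := by positivity
    linarith [(abs_le.1 h1).1]
  have hup : ∀ e ∈ E, 0 < s e → ∀ z, ‖z - e‖ ≤ s e / 40 →
      sInf (S z) ≤ A e z + 100 * η * ‖z - e‖ := fun e he hse z hz =>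
    csInf_le ⟨_, hlow e he hse z hz⟩ (hbase e he hse z hz)
  -- one half of the Lipschitz estimate
  have hone : ∀ e ∈ E, 0 < s e → ∀ z, ‖z - e‖ ≤ s e / 40 → ∀ w, ‖w - e‖ ≤ s e / 40 →
      (sInf (S w) - A e w) - (sInf (S z) - A e z) ≤ 101 * η * ‖z - w‖ := by
    intro e he hse z hz w hw
    refine le_of_forall_pos_le_add fun κ hκ => ?_
    obtain ⟨y, ⟨f, hf, hsf, hzf, rfl⟩, hy⟩ := exists_lt_of_csInf_lt
      ⟨_, hbase e he hse z hz⟩ (show sInf (S z) < sInf (S z) + min κ (η * s e) by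
        have : 0 < min κ (η * s e) := lt_min hκ (by positivity)
        linarith)
    have hef := hnear e he hse z hz f hf hzf
    have h1 := (abs_le.1 (hval e he f hf hse hef z (by linarith))).1
    have h2 := (abs_le.1 (hlin e he f hf hse hef z w)).1
    have h3 := hup e he hse z hz
    have h4 := min_le_left κ (η * s e)
    have h5 := min_le_right κ (η * s e)
    have hzf' : ‖z - f‖ ≤ s e / 20 := by
      have : η * (100 * ‖z - f‖) ≤ η * (5 * s e) := by nlinarith
      linarith [le_of_mul_le_mul_left this hη]
    have hzw : ‖w - f‖ ≤ ‖z - w‖ + ‖z - f‖ := by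
      rw [norm_sub_rev z w]; exact norm_sub_le_norm_sub_add_norm_sub _ _ _
    have hzw2 : ‖z - w‖ ≤ ‖z - e‖ + ‖w - e‖ := by
      rw [norm_sub_rev w e]; exact norm_sub_le_norm_sub_add_norm_sub _ _ _
    have hsfe := hlip e he f hf
    have h6 : sInf (S w) ≤ A f w + 100 * η * ‖w - f‖ :=
      csInf_le ⟨_, hlow e he hse w hw⟩ ⟨f, hf, hsf, by linarith, rfl⟩
    have h7 : 100 * η * ‖w - f‖ ≤ 100 * η * (‖z - w‖ + ‖z - f‖) := by gcongr
    linarith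
  refine ⟨fun z => sInf (S z), ?_, ?_⟩
  · intro e he hse
    have : S e = ∅ := by
      rw [eq_empty_iff_forall_notMem]
      rintro _ ⟨f, hf, hsf, hef, rfl⟩
      have := hlip f hf e he
      rw [norm_sub_rev] at this
      linarith
    simp only [this, Real.sInf_empty]
  · intro e he hse z hz
    have hηs : 0 < η * s e := by positivity
    refine ⟨abs_le.2 ⟨?_, ?_⟩, fun w hw => abs_le.2 ⟨?_, ?_⟩⟩
    · have := le_csInf ⟨_, hbase e he hse z hz⟩ (hlow e he hse z hz)
      simp only
      linarith
    · have h1 := hup e he hse z hz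
      have h2 : 100 * η * ‖z - e‖ ≤ 100 * η * (s e / 40) := by gcongr
      simp only
      linarith
    · have := hone e he hse z hz w hw
      simp only
      linarith
    · have := hone e he hse w hw z hz
      rw [norm_sub_rev w z] at this
      simp only
      linarith

lemma norm_le_of_coord_le {n : ℕ} {v : V n} {a : ℝ} (h : ∀ i, |v i| ≤ a) :
    ‖v‖ ≤ n * a := by
  have h1 : ‖v‖ ≤ ∑ i, |v i| := by
    rw [EuclideanSpace.norm_eq]
    refine Real.sqrt_le_iff.2 ⟨Finset.sum_nonneg fun i _ => abs_nonneg _, ?_⟩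
    simp only [Real.norm_eq_abs]
    exact Finset.sum_sq_le_sq_sum_of_nonneg fun i _ => abs_nonneg _
  refine h1.trans ((Finset.sum_le_sum fun i _ => h i).trans_eq ?_)
  simp

lemma coord_le_norm {n : ℕ} (v : V n) (i : Fin n) : |v i| ≤ ‖v‖ := by
  simpa using PiLp.norm_apply_le v i

/-- `Y` flattens `F` at the scale `s`: near `e ∈ F` it is `β`-close to the orthogonal projection
onto the plane through `e` of direction `W e (s e)`. -/
def Flattens {n : ℕ} (F : Set (V n)) (W : V n → ℝ → Submodule ℝ (V n)) (s : V n → ℝ) (β : ℝ)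
    (Y : V n → V n) : Prop :=
  (∀ e ∈ F, s e ≤ 0 → Y e = e) ∧ ∀ e ∈ F, 0 < s e → ∀ z, ‖z - e‖ ≤ s e / 40 →
    ‖Y z - (e + (W e (s e)).starProjection (z - e))‖ ≤ β * s e ∧ ∀ w, ‖w - e‖ ≤ s e / 40 →
      ‖Y z - Y w - (W e (s e)).starProjection (z - w)‖ ≤ β * ‖z - w‖

lemma FlatField.exists_flattens {n d : ℕ} {ε : ℝ} {E : Set (V n)}
    {W : V n → ℝ → Submodule ℝ (V n)} (hF : FlatField n d ε E W) (hε : ε ≤ 1 / 48)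
    {s : V n → ℝ} (hs1 : ∀ e ∈ E, s e ≤ 1 / 10)
    (hlip : ∀ e ∈ E, ∀ f ∈ E, s e ≤ s f + ‖e - f‖ / 10) :
    ∃ Y, Flattens E W s (n * (101 * (150 * ε))) Y := by
  have hε0 := hF.eps_pos
  let B : V n → V n → V n := fun f z => (W f (s f)).starProjection (z - f) - (z - f)
  have hproj : ∀ e ∈ E, ∀ f ∈ E, 0 < s e → ‖e - f‖ ≤ s e / 2 →
      ‖(W e (s e)).starProjection - (W f (s f)).starProjection‖ ≤ 144 * ε := by
    intro e he f hf hse hef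
    have h1 := hlip e he f hf
    have h2 := hlip f hf e he
    rw [norm_sub_rev f e] at h2
    have h3 := hs1 e he
    have := hF.norm_sub_le_of_comparable he hf (t := s e) (t' := s f) (T := 5 / 2 * s e) (Λ := 4)
      hse (by linarith) (by linarith) (by linarith) (by linarith) (by linarith) (by linarith)
      (by linarith)
    linarith
  have hBlin : ∀ e f z w, (B f z - B e z) - (B f w - B e w)
      = -(((W e (s e)).starProjection - (W f (s f)).starProjection) (z - w)) := by
    intro e f z w
    simp only [B, sub_apply, map_sub]
    abel
  have hBval : ∀ e f z, B f z - B e z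
      = -(((W e (s e)).starProjection - (W f (s f)).starProjection) (z - e))
        - ((e - f) - (W f (s f)).starProjection (e - f)) := by
    intro e f z
    simp only [B, sub_apply, map_sub]
    abel
  have key : ∀ i, ∃ h : V n → ℝ, (∀ e ∈ E, s e ≤ 0 → h e = 0) ∧
      ∀ e ∈ E, 0 < s e → ∀ z, ‖z - e‖ ≤ s e / 40 →
      |h z - B e z i| ≤ 101 * (150 * ε) * s e ∧ ∀ w, ‖w - e‖ ≤ s e / 40 →
        |(h z - B e z i) - (h w - B e w i)| ≤ 101 * (150 * ε) * ‖z - w‖ := by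
    intro i
    refine exists_glueing (A := fun f z => B f z i) (by positivity) hlip ?_ ?_
    · intro e he f hf hse hef z hz
      have h1 := coord_le_norm (B f z - B e z) i
      refine h1.trans ?_
      rw [hBval]
      have h2 := hlip e he f hf
      have h3 := hlip f hf e he
      rw [norm_sub_rev f e] at h3
      have h4 := hF.near_plane f hf (s f) (by linarith) (by linarith [hs1 f hf]) e he (by linarith)
      have h5 := ((W e (s e)).starProjection - (W f (s f)).starProjection).le_of_opNorm_le
        (hproj e he f hf hse hef) (z - e)
      refine (norm_sub_le _ _).trans ?_
      rw [norm_neg]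
      nlinarith
    · intro e he f hf hse hef z w
      have h1 := coord_le_norm ((B f z - B e z) - (B f w - B e w)) i
      refine h1.trans ?_
      rw [hBlin, norm_neg]
      refine (((W e (s e)).starProjection - (W f (s f)).starProjection).le_of_opNorm_le
        (hproj e he f hf hse hef) (z - w)).trans ?_
      have := norm_nonneg (z - w)
      gcongr
      linarith
  choose h h0 h1 using key
  refine ⟨fun z => z + WithLp.toLp 2 (fun i => h i z), ?_, ?_⟩
  · intro e he hse
    ext i
    simp [h0 i e he hse]
  · intro e he hse z hz
    refine ⟨?_, fun w hw => ?_⟩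
    · rw [mul_assoc]
      refine norm_le_of_coord_le fun i => ?_
      convert (h1 i e he hse z hz).1 using 2
      simp only [B, PiLp.sub_apply, PiLp.add_apply]
      ring
    · rw [mul_assoc]
      refine norm_le_of_coord_le fun i => ?_
      convert (h1 i e he hse z hz).2 w hw using 2
      simp only [B, map_sub, PiLp.sub_apply, PiLp.add_apply]
      ring

lemma FlatField.flattens_proj {n d : ℕ} {ε : ℝ} {E : Set (V n)}
    {W : V n → ℝ → Submodule ℝ (V n)} (hF : FlatField n d ε E W) (hε : ε ≤ 1 / 72)
    {x : V n} (hx : x ∈ E) {r : ℝ} (hr0 : 0 < r) (hr1 : r ≤ 1 / 10) {s : V n → ℝ}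
    (hs : ∀ e, s e = r) :
    Flattens (E ∩ ball x r) W s (250 * ε)
      (fun z => x + (W x (3 * r)).starProjection (z - x)) := by
  have hε0 := hF.eps_pos
  obtain rfl : s = fun _ => r := funext hs
  refine ⟨fun e _ hse => absurd hse (not_le.2 hr0), ?_⟩
  rintro e ⟨he, hex⟩ - z hz
  rw [mem_ball, dist_eq_norm] at hex
  simp only at hz ⊢
  have hp := hF.norm_sub_le_of_comparable he hx (t := r) (t' := 3 * r) (T := 6 * r) (Λ := 6)
    hr0 (by linarith) (by linarith) (by linarith) (by linarith) (by linarith) (by linarith)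
    (by linarith)
  have hle := ((W e r).starProjection - (W x (3 * r)).starProjection).le_of_opNorm_le hp
  refine ⟨?_, fun w hw => ?_⟩
  · have h1 : x + (W x (3 * r)).starProjection (z - x) - (e + (W e r).starProjection (z - e))
        = -(((W e r).starProjection - (W x (3 * r)).starProjection) (z - e))
        - ((e - x) - (W x (3 * r)).starProjection (e - x)) := by
      simp only [sub_apply, map_sub]
      abel
    rw [h1]
    refine (norm_sub_le _ _).trans ?_
    rw [norm_neg]
    have h2 := hle (z - e)
    have h3 := hF.near_plane x hx (3 * r) (by linarith) (by linarith) e he (by linarith)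
    nlinarith
  · have h1 : x + (W x (3 * r)).starProjection (z - x) - (x + (W x (3 * r)).starProjection (w - x))
        - (W e r).starProjection (z - w)
        = -(((W e r).starProjection - (W x (3 * r)).starProjection) (z - w)) := by
      simp only [sub_apply, map_sub]
      abel
    rw [h1, norm_neg]
    refine (hle (z - w)).trans ?_
    have := norm_nonneg (z - w)
    nlinarith

lemma exists_backward_seq {X : Type*} (m : ℕ) (Y : ℕ → X → X) :
    ∃ z : ℕ → X → X, z m = id ∧ ∀ k < m, ∀ e, z k e = Y k (z (k + 1) e) := by
  induction m generalizing Y with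
  | zero => exact ⟨fun _ => id, rfl, fun k hk => absurd hk (Nat.not_lt_zero k)⟩
  | succ m ih =>
    obtain ⟨z, hz, h⟩ := ih fun k => Y (k + 1)
    refine ⟨fun k => Nat.casesOn k (fun e => Y 0 (z 0 e)) z, hz, fun k hk e => ?_⟩
    cases k with
    | zero => rfl
    | succ k => exact h k (Nat.lt_of_succ_lt_succ hk) e

lemma Flattens.norm_sub_le {n : ℕ} {F : Set (V n)} {W : V n → ℝ → Submodule ℝ (V n)}
    {s : V n → ℝ} {β : ℝ} {Y : V n → V n} (hY : Flattens F W s β Y) {e z w : V n} (he : e ∈ F)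
    (hse : 0 < s e) (hz : ‖z - e‖ ≤ s e / 40) (hw : ‖w - e‖ ≤ s e / 40) :
    ‖(Y z - Y w) - (W e (s e)).starProjection (Y z - Y w)‖ ≤ β * ‖z - w‖ := by
  have h := (hY.2 e he hse z hz).2 w hw
  set U := W e (s e)
  have h1 : U.starProjection (U.starProjection (z - w)) = U.starProjection (z - w) :=
    Submodule.starProjection_eq_self_iff.2 (Submodule.starProjection_apply_mem _ _)
  have h2 := norm_sub_starProjection_le_norm U (Y z - Y w - U.starProjection (z - w))
  rw [U.starProjection.map_sub (Y z - Y w), h1, sub_sub_sub_cancel_right] at h2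
  exact h2.trans h

/-- The successive flattenings of the points of `F` move relative positions by a small factor. -/
lemma FlatField.exists_flattening_seq {n d : ℕ} {ε δ θ r β : ℝ} {E F : Set (V n)}
    {W : V n → ℝ → Submodule ℝ (V n)} {s : ℕ → V n → ℝ} (hF : FlatField n d ε E W)
    (hs : ScaleChain E W δ θ r s) (hθ0 : 0 < θ) (hθ : θ ≤ 1 / 1000) (hδ : δ ≤ 1 / 6)
    (hεβ : ε ≤ β) (hβ : 2000 * β ≤ δ) (hr1 : r ≤ 1 / 10) (hFE : F ⊆ E) {m : ℕ}
    (hm : ∀ e ∈ F, s m e = 0) {Y : ℕ → V n → V n} (hY : ∀ k, Flattens F W (s k) β (Y k)) :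
    ∃ z : ℕ → V n → V n, (∀ e, z m e = e) ∧ (∀ k < m, ∀ e, z k e = Y k (z (k + 1) e)) ∧
      (∀ k ≤ m, ∀ e ∈ F, ‖z k e - e‖ ≤ 2 * β * s k e) ∧
      ∀ k < m, ∀ e ∈ F, ∀ f ∈ F, ‖(z (k + 1) e - z (k + 1) f) - (z k e - z k f)‖
        ≤ 3 * δ * ‖z (k + 1) e - z (k + 1) f‖ := by
  obtain ⟨z, hzm, hz⟩ := exists_backward_seq m Y
  have hβ0 : 0 < β := hF.eps_pos.trans_le hεβ
  have hle : ∀ k, ∀ e ∈ F, s k e ≤ 1 / 10 := by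
    intro k e he
    induction k with
    | zero => rw [hs.zero_eq]; exact hr1
    | succ k ih =>
      have h1 := hs.succ_le k e (hFE he)
      have h2 := hs.nonneg k e (hFE he)
      nlinarith
  have hsucc : ∀ k, ∀ e ∈ F, s (k + 1) e ≤ s k e / 1000 := by
    intro k e he
    have h1 := hs.succ_le k e (hFE he)
    have h2 := hs.nonneg k e (hFE he)
    nlinarith
  -- the points stay close to their original position
  have ha : ∀ k ≤ m, ∀ e ∈ F, ‖z k e - e‖ ≤ 2 * β * s k e := by
    intro k hk
    induction hk using Nat.decreasingInduction with
    | self =>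
      intro e he
      simp [hzm, hm e he]
    | @of_succ k hk ih =>
      intro e he
      have h1 := ih e he
      have h2 := hsucc k e he
      have h3 := hs.nonneg k e (hFE he)
      have h4 := hs.nonneg (k + 1) e (hFE he)
      rw [hz k hk]
      rcases h3.eq_or_lt with h0 | h0
      · have h5 : s (k + 1) e = 0 := by linarith
        rw [h5, mul_zero, norm_le_zero_iff, sub_eq_zero] at h1
        rw [h1, (hY k).1 e he h0.symm.le, ← h0]
        simp
      · have h5 : 2 * β * s (k + 1) e ≤ 2 * β * (s k e / 1000) := by gcongr
        have h6 : β * s k e ≤ 1 / 12000 * s k e := by gcongr; linarith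
        have h7 := ((hY k).2 e he h0 (z (k + 1) e) (by linarith)).1
        have h8 := norm_starProjection_le (W e (s k e)) (z (k + 1) e - e)
        have h9 : Y k (z (k + 1) e) - e
            = (Y k (z (k + 1) e) - (e + (W e (s k e)).starProjection (z (k + 1) e - e)))
              + (W e (s k e)).starProjection (z (k + 1) e - e) := by abel
        have h10 : 0 < β * s k e := by positivity
        rw [h9]
        refine (norm_add_le _ _).trans ?_
        linarith
  -- distances in terms of displaced points
  have hdist : ∀ k ≤ m, ∀ e ∈ F, ∀ f ∈ F,
      ‖(e - f) - (z k e - z k f)‖ ≤ 2 * β * (s k e + s k f) := by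
    intro k hk e he f hf
    have h1 : (e - f) - (z k e - z k f) = (z k f - f) - (z k e - e) := by abel
    rw [h1]
    refine (norm_sub_le _ _).trans ?_
    linarith [ha k hk e he, ha k hk f hf]
  have hdist' : ∀ k ≤ m, ∀ e ∈ F, ∀ f ∈ F, ‖e - f‖ ≤ ‖z k e - z k f‖ + s k e / 1000 +
      s k f / 1000 := by
    intro k hk e he f hf
    have h1 := hdist k hk e he f hf
    have h2 : ‖e - f‖ ≤ ‖(e - f) - (z k e - z k f)‖ + ‖z k e - z k f‖ := by
      simpa using norm_add_le ((e - f) - (z k e - z k f)) (z k e - z k f)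
    have h3 := hs.nonneg k e (hFE he)
    have h4 := hs.nonneg k f (hFE hf)
    have h5 : 2 * β * (s k e + s k f) ≤ 1 / 1000 * (s k e + s k f) := by gcongr; linarith
    linarith
  -- points whose images are close at one stage are in the range of the next flattening
  have hrange : ∀ k < m, ∀ e ∈ F, ∀ f ∈ F, ‖e - f‖ ≤ s k e / 50 →
      ‖z (k + 1) f - e‖ ≤ s k e / 40 := by
    intro k hk e he f hf hef
    have h1 := ha (k + 1) hk f hf
    have h2 := hsucc k f hf
    have h3 := hs.lipschitz k f (hFE hf) e (hFE he)
    rw [norm_sub_rev f e] at h3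
    have h4 := hs.nonneg k e (hFE he)
    have h5 : 2 * β * s (k + 1) f ≤ 1 * s (k + 1) f := by
      have := hs.nonneg (k + 1) f (hFE hf)
      gcongr; linarith
    have h6 : ‖z (k + 1) f - e‖ ≤ ‖z (k + 1) f - f‖ + ‖f - e‖ :=
      norm_sub_le_norm_sub_add_norm_sub _ _ _
    rw [norm_sub_rev f e] at h6
    linarith
  have hb : ∀ k ≤ m, (∀ e ∈ F, ∀ f ∈ F, ‖z k e - z k f‖ ≤ s k e / 200 →
        ‖(z k e - z k f) - (W e (s k e)).starProjection (z k e - z k f)‖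
          ≤ 2 * β * ‖z k e - z k f‖) ∧
      (k < m → ∀ e ∈ F, ∀ f ∈ F, ‖(z (k + 1) e - z (k + 1) f) - (z k e - z k f)‖
        ≤ 3 * δ * ‖z (k + 1) e - z (k + 1) f‖) := by
    intro k hk
    induction hk using Nat.decreasingInduction with
    | self =>
      refine ⟨fun e he f hf h => ?_, fun h => absurd h (lt_irrefl m)⟩
      rw [hm e he, zero_div, norm_le_zero_iff] at h
      rw [h]
      simp
    | @of_succ k hk ih =>
      have hc : ∀ e ∈ F, ∀ f ∈ F, ‖(z (k + 1) e - z (k + 1) f) - (z k e - z k f)‖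
          ≤ 3 * δ * ‖z (k + 1) e - z (k + 1) f‖ := by
        intro e he f hf
        set v := z (k + 1) e - z (k + 1) f with hv
        have hv0 := norm_nonneg v
        have hse := hs.nonneg k e (hFE he)
        have hsf := hs.nonneg k f (hFE hf)
        have hse' := hs.nonneg (k + 1) e (hFE he)
        have hsf' := hs.nonneg (k + 1) f (hFE hf)
        have hle1 := hsucc k e he
        have hle2 := hsucc k f hf
        have hef := hdist' (k + 1) hk e he f hf
        have hlf := hs.lipschitz k f (hFE hf) e (hFE he)
        have hlf' := hs.lipschitz (k + 1) f (hFE hf) e (hFE he)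
        rw [norm_sub_rev f e] at hlf hlf'
        rw [← hv] at hef
        have hdv := hdist (k + 1) hk e he f hf
        rw [← hv] at hdv
        rcases le_or_gt (s k e / 200) ‖v‖ with hcase | hcase
        · have h1 : v - (z k e - z k f)
              = ((e - f) - (z k e - z k f)) - ((e - f) - v) := by abel
          rw [h1]
          refine (norm_sub_le _ _).trans ?_
          have h2 := hdist k hk.le e he f hf
          have h3 : 2 * β * (s k e + s k f) + 2 * β * (s (k + 1) e + s (k + 1) f)
              ≤ 2 * β * (500 * ‖v‖) := by
            rw [← mul_add]
            gcongr
            linarith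
          have h4 : 2 * β * (500 * ‖v‖) ≤ 3 * δ * ‖v‖ := by
            have : (1000 * β) * ‖v‖ ≤ 3 * δ * ‖v‖ :=
              mul_le_mul_of_nonneg_right (by linarith) hv0
            linarith
          linarith
        · have h0 : 0 < s k e := by linarith
          have hef2 : ‖e - f‖ ≤ s k e / 50 := by linarith
          have hze : ‖z (k + 1) e - e‖ ≤ s k e / 40 :=
            hrange k hk e he e he (by simp; linarith)
          have hzf := hrange k hk e he f hf hef2
          have h1 := ((hY k).2 e he h0 _ hze).2 _ hzf
          rw [← hz k hk, ← hz k hk, ← hv] at h1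
          have hperp : ‖v - (W e (s k e)).starProjection v‖ ≤ (2 * δ + 1300 * β) * ‖v‖ := by
            rcases hv0.eq_or_lt with hv1 | hv1
            · rw [← hv1, norm_eq_zero.1 hv1.symm]
              simp
            have hcl : ∀ t, 0 < t → s (k + 1) e ≤ t → t ≤ s k e →
                ‖v - (W e (s k e)).starProjection v‖
                  ≤ ‖v - (W e t).starProjection v‖ + 2 * δ * ‖v‖ := by
              intro t ht0 ht1 ht2
              have h2 := ((W e t).starProjection - (W e (s k e)).starProjection).le_of_opNorm_le
                (hs.close k e (hFE he) t ht0 ht1 ht2) v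
              have h3 : v - (W e (s k e)).starProjection v = (v - (W e t).starProjection v)
                  + ((W e t).starProjection - (W e (s k e)).starProjection) v := by
                simp only [sub_apply]
                abel
              rw [h3]
              refine (norm_add_le _ _).trans ?_
              linarith
            rcases le_or_gt ‖v‖ (s (k + 1) e / 200) with hcase2 | hcase2
            · have h2 := ih.1 e he f hf hcase2
              have h3 := hcl (s (k + 1) e) (by linarith) le_rfl (by linarith)
              rw [← hv] at h2
              nlinarith
            · have h2 := hcl (200 * ‖v‖) (by linarith) (by linarith) (by linarith)
              have h3 := hF.near_plane e (hFE he) (200 * ‖v‖) (by linarith)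
                (by linarith [hle k e he]) f (hFE hf) (by rw [norm_sub_rev]; linarith)
              set U := W e (200 * ‖v‖)
              have h4 := norm_sub_starProjection_le_norm U ((e - f) - v)
              have h5 : v - U.starProjection v = -((f - e) - U.starProjection (f - e))
                  - (((e - f) - v) - U.starProjection ((e - f) - v)) := by
                simp only [map_sub]
                abel
              have h6 : ‖v - U.starProjection v‖
                  ≤ ε * (200 * ‖v‖) + 2 * β * (s (k + 1) e + s (k + 1) f) := by
                rw [h5]
                refine (norm_sub_le _ _).trans ?_
                rw [norm_neg]
                linarith
              have h7 : 2 * β * (s (k + 1) e + s (k + 1) f) ≤ 2 * β * (500 * ‖v‖) := by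
                gcongr
                linarith
              have h8 : ε * (200 * ‖v‖) ≤ β * (200 * ‖v‖) := by gcongr
              have h9 : 0 < β * ‖v‖ := by positivity
              linarith
          have h2 : v - (z k e - z k f) = (v - (W e (s k e)).starProjection v)
              - ((z k e - z k f) - (W e (s k e)).starProjection v) := by abel
          rw [h2]
          refine (norm_sub_le _ _).trans ?_
          nlinarith
      refine ⟨fun e he f hf hef => ?_, fun _ => hc⟩
      have h1 := hc e he f hf
      set v := z (k + 1) e - z (k + 1) f with hv
      have hv2 : ‖v‖ ≤ 2 * ‖z k e - z k f‖ := by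
        have h2 : ‖v‖ ≤ ‖v - (z k e - z k f)‖ + ‖z k e - z k f‖ := by
          simpa using norm_add_le (v - (z k e - z k f)) (z k e - z k f)
        have h3 : 3 * δ * ‖v‖ ≤ 1 / 2 * ‖v‖ := by gcongr; linarith
        linarith
      have hse := hs.nonneg k e (hFE he)
      rcases hse.eq_or_lt with h0 | h0
      · rw [← h0, zero_div, norm_le_zero_iff] at hef
        rw [hef]
        simp
      have hd := hdist' k hk.le e he f hf
      have hlf := hs.lipschitz k f (hFE hf) e (hFE he)
      rw [norm_sub_rev f e] at hlf
      have hef2 : ‖e - f‖ ≤ s k e / 50 := by linarith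
      have hze : ‖z (k + 1) e - e‖ ≤ s k e / 40 :=
        hrange k hk e he e he (by simp; linarith)
      have h4 := (hY k).norm_sub_le he h0 hze (hrange k hk e he f hf hef2)
      rw [← hz k hk, ← hz k hk, ← hv] at h4
      refine h4.trans ?_
      nlinarith
  exact ⟨z, fun e => by rw [hzm]; rfl, hz, ha, fun k hk => (hb k hk.le).2 hk⟩

/-- A small Lipschitz vector field on a subset of `ball x (3 / 2 * r)` extends to a small Lipschitz
vector field supported in `ball x (2 * r)`. -/
lemma exists_lipschitz_extension {n : ℕ} {S : Set (V n)} {D : V n → V n} {L b r : ℝ} {x : V n}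
    (hL : 0 ≤ L) (hb : 0 ≤ b) (hS : S ⊆ ball x (3 / 2 * r))
    (hD : ∀ z ∈ S, ∀ w ∈ S, ‖D z - D w‖ ≤ L * ‖z - w‖) (hDb : ∀ z ∈ S, ‖D z‖ ≤ b)
    (hbL : b ≤ L * (r / 2)) :
    ∃ u : V n → V n, (∀ z ∈ S, u z = D z) ∧ (∀ z, z ∉ ball x (2 * r) → u z = 0) ∧
      (∀ z, ‖u z‖ ≤ n * b) ∧ ∀ z w, ‖u z - u w‖ ≤ n * (L * ‖z - w‖) := by
  classical
  have hdist : ∀ z ∈ S, ∀ w, w ∉ ball x (2 * r) → ‖D z‖ ≤ L * ‖z - w‖ := by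
    intro z hz w hw
    have h1 := hS hz
    rw [mem_ball, dist_eq_norm] at h1 hw
    have h2 : ‖w - x‖ ≤ ‖z - w‖ + ‖z - x‖ := by
      rw [norm_sub_rev z w]; exact norm_sub_le_norm_sub_add_norm_sub _ _ _
    refine (hDb z hz).trans (hbL.trans ?_)
    gcongr
    linarith
  have key : ∀ i : Fin n, ∃ h : V n → ℝ, (∀ z ∈ S, h z = D z i) ∧
      (∀ z, z ∉ ball x (2 * r) → h z = 0) ∧ (∀ z, |h z| ≤ b) ∧
      ∀ z w, |h z - h w| ≤ L * ‖z - w‖ := by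
    intro i
    let f : V n → ℝ := fun z => if z ∈ S then D z i else 0
    have hfS : ∀ z ∈ S, f z = D z i := fun z hz => if_pos hz
    have hfo : ∀ z, z ∉ ball x (2 * r) → f z = 0 := by
      intro z hz
      refine if_neg fun hzS => hz ?_
      have h1 := hS hzS
      rw [mem_ball] at h1 ⊢
      have := dist_nonneg.trans_lt h1
      linarith
    have hlip : LipschitzOnWith (NNReal.mk L hL) f (S ∪ (ball x (2 * r))ᶜ) := by
      refine LipschitzOnWith.of_dist_le_mul ?_
      rintro z hz w hw
      rw [Real.dist_eq, dist_eq_norm, NNReal.coe_mk]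
      rcases hz with hz | hz <;> rcases hw with hw | hw
      · rw [hfS z hz, hfS w hw]
        exact (coord_le_norm (D z - D w) i).trans (hD z hz w hw)
      · rw [hfS z hz, hfo w hw, sub_zero]
        exact (coord_le_norm (D z) i).trans (hdist z hz w hw)
      · rw [hfS w hw, hfo z hz, zero_sub, abs_neg, norm_sub_rev]
        exact (coord_le_norm (D w) i).trans (hdist w hw z hz)
      · rw [hfo z hz, hfo w hw, sub_zero, abs_zero]
        positivity
    obtain ⟨g, hg, hfg⟩ := hlip.extend_real
    have hclamp : LipschitzWith (NNReal.mk L hL) fun z => max (-b) (min b (g z)) :=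
      (hg.const_min b).const_max (-b)
    have hid : ∀ t, |t| ≤ b → max (-b) (min b t) = t := by
      intro t ht
      rw [min_eq_right (abs_le.1 ht).2, max_eq_right (abs_le.1 ht).1]
    refine ⟨fun z => max (-b) (min b (g z)), fun z hz => ?_, fun z hz => ?_, fun z => ?_,
      fun z w => ?_⟩
    · have h1 : g z = D z i := by rw [← hfg (Or.inl hz), hfS z hz]
      simp only [h1]
      exact hid _ ((coord_le_norm (D z) i).trans (hDb z hz))
    · have h1 : g z = 0 := by rw [← hfg (Or.inr hz), hfo z hz]
      simp only [h1]
      exact hid _ (by simpa using hb)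
    · exact abs_le.2 ⟨le_max_left _ _, max_le (by linarith) (min_le_left _ _)⟩
    · have := hclamp.dist_le_mul z w
      rwa [Real.dist_eq, dist_eq_norm, NNReal.coe_mk] at this
  choose h h1 h2 h3 h4 using key
  refine ⟨fun z => WithLp.toLp 2 fun i => h i z, fun z hz => ?_, fun z hz => ?_, fun z => ?_,
    fun z w => ?_⟩
  · ext i
    exact h1 i z hz
  · ext i
    exact h2 i z hz
  · exact norm_le_of_coord_le fun i => h3 i z
  · exact norm_le_of_coord_le fun i => h4 i z w

/-- A contractive displacement of a finite-dimensional space is a bi-Lipschitz bijection. -/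
lemma bijective_and_dist_of_lipschitz {n : ℕ} {u : V n → V n}
    (hu : ∀ z w, ‖u z - u w‖ ≤ 1 / 2 * ‖z - w‖) :
    Function.Bijective (fun z => z + u z) ∧ ∀ z w, (1 / 2) * ‖z - w‖ ≤ ‖(z + u z) - (w + u w)‖ ∧
      ‖(z + u z) - (w + u w)‖ ≤ 2 * ‖z - w‖ := by
  have hlip : LipschitzWith (1 / 2) u := by
    refine LipschitzWith.of_dist_le_mul fun z w => ?_
    rw [dist_eq_norm, dist_eq_norm]
    simpa using hu z w
  refine ⟨bijective_add_of_lipschitz (by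
    rw [← NNReal.coe_lt_coe]; norm_num) hlip, fun z w => ?_⟩
  have h1 := hu z w
  have h2 : (z + u z) - (w + u w) = (z - w) + (u z - u w) := by abel
  have h3 := norm_add_le (z - w) (u z - u w)
  have h4 := norm_sub_norm_le (z - w) (-(u z - u w))
  rw [sub_neg_eq_add, norm_neg] at h4
  have := norm_nonneg (z - w)
  rw [h2]
  constructor <;> linarith

/-- The points where the chain of scales has stopped lie on a bi-Lipschitz image of a plane. -/
lemma FlatField.exists_biLipschitz {n d : ℕ} {ε δ θ r β : ℝ} {E : Set (V n)}
    {W : V n → ℝ → Submodule ℝ (V n)} {s : ℕ → V n → ℝ} (hF : FlatField n d ε E W)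
    (hs : ScaleChain E W δ θ r s) (hθ0 : 0 < θ) (hθ : θ ≤ 1 / 1000) (hδ : n * (6 * δ) ≤ 1 / 2)
    (hδ6 : δ ≤ 1 / 6) (hεβ : n * (101 * (150 * ε)) ≤ β) (hεβ' : 250 * ε ≤ β) (hβ : 2000 * β ≤ δ)
    (hr0 : 0 < r) (hr1 : r ≤ 1 / 10) {x : V n} (hx : x ∈ E) (m : ℕ) :
    ∃ (P : Set (V n)) (g : V n → V n), IsAffinePlane n d P ∧ x ∈ P ∧ Function.Bijective g ∧
      (∀ z w, (1 / 2) ^ m * ‖z - w‖ ≤ ‖g z - g w‖ ∧ ‖g z - g w‖ ≤ 2 ^ m * ‖z - w‖) ∧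
      (∀ z, ‖g z - z‖ ≤ n * (6 * β * r)) ∧ (∀ z, z ∉ ball x (2 * r) → g z = z) ∧
      ∀ e ∈ E ∩ ball x r, s m e = 0 → e ∈ g '' P := by
  have hε0 := hF.eps_pos
  have hβ0 : 0 < β := by linarith
  have hδ0 : 0 < δ := by linarith
  have hle : ∀ k, ∀ e ∈ E, s k e ≤ (1 / 2) ^ k * r := by
    intro k e he
    induction k with
    | zero => rw [hs.zero_eq]; simp
    | succ k ih =>
      have h1 := hs.succ_le k e he
      have h2 := hs.nonneg k e he
      rw [pow_succ]
      nlinarith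
  have hpow : ∀ k : ℕ, (1 / 2 : ℝ) ^ k * r ≤ r := fun k =>
    mul_le_of_le_one_left hr0.le (pow_le_one₀ (by norm_num) (by norm_num))
  let F : Set (V n) := {e | e ∈ E ∩ ball x r ∧ s m e = 0}
  have hFE : F ⊆ E := fun e he => he.1.1
  have hYex : ∀ k, ∃ Y, Flattens F W (s k) β Y ∧
      (k = 0 → Y = fun z => x + (W x (3 * r)).starProjection (z - x)) := by
    intro k
    have hmono : ∀ {F' : Set (V n)} {β' : ℝ} {Y}, F ⊆ F' → β' ≤ β → Flattens F' W (s k) β' Y →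
        Flattens F W (s k) β Y := by
      intro F' β' Y hFF hββ hY
      refine ⟨fun e he => hY.1 e (hFF he), fun e he hse z hz =>
        ⟨((hY.2 e (hFF he) hse z hz).1).trans (by gcongr), fun w hw =>
          ((hY.2 e (hFF he) hse z hz).2 w hw).trans (by gcongr)⟩⟩
    cases k with
    | zero =>
      exact ⟨_, hmono (fun e he => he.1) hεβ'
        (hF.flattens_proj (by linarith) hx hr0 hr1 hs.zero_eq), fun _ => rfl⟩
    | succ k =>
      obtain ⟨Y, hY⟩ := hF.exists_flattens (by linarith) (s := s (k + 1))
        (fun e he => (hle _ e he).trans ((hpow _).trans hr1)) (hs.lipschitz (k + 1))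
      exact ⟨Y, hmono hFE hεβ hY, fun h => absurd h (Nat.succ_ne_zero k)⟩
  choose Y hY hY0 using hYex
  obtain ⟨z, hzm, hz, hza, hzc⟩ := hF.exists_flattening_seq hs hθ0 hθ hδ6 (by linarith) hβ hr1 hFE
    (m := m) (fun e he => he.2) hY
  have hexp : ∀ k < m, ∀ e ∈ F, ∀ f ∈ F, ‖z (k + 1) e - z (k + 1) f‖ ≤ 2 * ‖z k e - z k f‖ := by
    intro k hk e he f hf
    have h1 := hzc k hk e he f hf
    set v := z (k + 1) e - z (k + 1) f
    have h2 : ‖v‖ ≤ ‖v - (z k e - z k f)‖ + ‖z k e - z k f‖ := by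
      simpa using norm_add_le (v - (z k e - z k f)) (z k e - z k f)
    have h3 : 3 * δ * ‖v‖ ≤ 1 / 2 * ‖v‖ := by gcongr; linarith
    linarith
  have hball : ∀ k ≤ m, ∀ e ∈ F, z k e ∈ ball x (3 / 2 * r) := by
    intro k hk e he
    have h1 := hza k hk e he
    have h2 := he.1.2
    have h3 := (hle k e (hFE he)).trans (hpow k)
    have h4 : 2 * β * s k e ≤ 2 * β * r := by gcongr
    have h5 : 2 * β * r ≤ 1 / 4 * r := by gcongr; linarith
    rw [mem_ball, dist_eq_norm] at h2 ⊢
    have h6 : ‖z k e - x‖ ≤ ‖z k e - e‖ + ‖e - x‖ := norm_sub_le_norm_sub_add_norm_sub _ _ _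
    linarith
  -- the elementary displacements
  have hstep : ∀ k < m, ∃ u : V n → V n, (∀ e ∈ F, z k e + u (z k e) = z (k + 1) e) ∧
      (∀ y, y ∉ ball x (2 * r) → u y = 0) ∧ (∀ y, ‖u y‖ ≤ n * (3 * β * ((1 / 2) ^ k * r))) ∧
      ∀ y w, ‖u y - u w‖ ≤ 1 / 2 * ‖y - w‖ := by
    intro k hk
    have hch : ∀ y ∈ z k '' F, ∃ e ∈ F, z k e = y := fun y hy => hy
    choose! c hcF hcz using hch
    have hinj : ∀ e ∈ F, z (k + 1) (c (z k e)) = z (k + 1) e := by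
      intro e he
      have h1 := mem_image_of_mem (z k) he
      have h2 := hexp k hk (c (z k e)) (hcF _ h1) e he
      rw [hcz _ h1, sub_self, norm_zero, mul_zero, norm_le_zero_iff, sub_eq_zero] at h2
      exact h2
    have hext := exists_lipschitz_extension (S := z k '' F)
      (D := fun y => z (k + 1) (c y) - z k (c y)) (L := 6 * δ) (b := 3 * β * ((1 / 2) ^ k * r))
      (r := r) (x := x) (by positivity) (by positivity)
      (by rintro _ ⟨e, he, rfl⟩; exact hball k hk.le e he) ?_ ?_ ?_
    · obtain ⟨u, hu1, hu2, hu3, hu4⟩ := hext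
      refine ⟨u, fun e he => ?_, hu2, hu3, fun y w => (hu4 y w).trans ?_⟩
      · have h1 := mem_image_of_mem (z k) he
        rw [hu1 _ h1, hinj e he, hcz _ h1]
        abel
      · rw [← mul_assoc]
        gcongr
    · intro y hy w hw
      have h1 := hzc k hk (c y) (hcF y hy) (c w) (hcF w hw)
      have h2 := hexp k hk (c y) (hcF y hy) (c w) (hcF w hw)
      rw [hcz y hy, hcz w hw] at h1 h2
      simp only [hcz y hy, hcz w hw]
      rw [sub_sub_sub_comm]
      refine h1.trans ?_
      have : 3 * δ * ‖z (k + 1) (c y) - z (k + 1) (c w)‖ ≤ 3 * δ * (2 * ‖y - w‖) := by gcongr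
      linarith
    · intro y hy
      have he := hcF y hy
      have h1 := hza k hk.le _ he
      have h2 := hza (k + 1) hk _ he
      have h3 := hle k _ (hFE he)
      have h4 := hs.succ_le k _ (hFE he)
      have h5 := hs.nonneg k _ (hFE he)
      have h6 : z (k + 1) (c y) - z k (c y) = (z (k + 1) (c y) - c y) - (z k (c y) - c y) := by abel
      rw [h6]
      refine (norm_sub_le _ _).trans ?_
      have h7 : s (k + 1) (c y) ≤ s k (c y) / 2 := by nlinarith
      have h8 : β * s (k + 1) (c y) ≤ β * (s k (c y) / 2) := by gcongr
      have h9 : β * s k (c y) ≤ β * ((1 / 2) ^ k * r) := by gcongr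
      linarith
    · have h1 : 3 * β * ((1 / 2) ^ k * r) ≤ 3 * β * r := by
        gcongr
        exact hpow k
      have h2 : 3 * β * r ≤ 3 * δ * r := by gcongr; linarith
      linarith
  choose! u hu1 hu2 hu3 hu4 using hstep
  have hcomp : ∀ k ≤ m, ∃ g : V n → V n, Function.Bijective g ∧
      (∀ y w, (1 / 2) ^ k * ‖y - w‖ ≤ ‖g y - g w‖ ∧ ‖g y - g w‖ ≤ 2 ^ k * ‖y - w‖) ∧
      (∀ y, ‖g y - y‖ ≤ n * (6 * β * r) * (1 - (1 / 2) ^ k)) ∧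
      (∀ y, y ∉ ball x (2 * r) → g y = y) ∧ ∀ e ∈ F, g (z 0 e) = z k e := by
    intro k hk
    induction k with
    | zero => exact ⟨id, Function.bijective_id, by simp, by simp, fun _ _ => rfl, fun _ _ => rfl⟩
    | succ k ih =>
      obtain ⟨g, hg1, hg2, hg3, hg4, hg5⟩ := ih (by omega)
      have hk' : k < m := hk
      obtain ⟨hb, hbl⟩ := bijective_and_dist_of_lipschitz (hu4 k hk')
      refine ⟨(fun y => y + u k y) ∘ g, hb.comp hg1, fun y w => ⟨?_, ?_⟩, fun y => ?_,
        fun y hy => ?_, fun e he => ?_⟩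
      · refine le_trans ?_ (hbl (g y) (g w)).1
        have := (hg2 y w).1
        rw [pow_succ]
        linarith
      · refine (hbl (g y) (g w)).2.trans ?_
        have := (hg2 y w).2
        rw [pow_succ]
        linarith
      · have h1 := hg3 y
        have h2 := hu3 k hk' (g y)
        have h3 : ((fun y => y + u k y) ∘ g) y - y = (g y - y) + u k (g y) := by
          simp only [Function.comp]; abel
        rw [h3]
        refine (norm_add_le _ _).trans ((add_le_add h1 h2).trans_eq ?_)
        rw [pow_succ]
        ring
      · simp only [Function.comp, hg4 y hy, hu2 k hk' y hy, add_zero]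
      · simp only [Function.comp, hg5 e he, hu1 k hk' e he]
  obtain ⟨g, hg1, hg2, hg3, hg4, hg5⟩ := hcomp m le_rfl
  let Q : AffineSubspace ℝ (V n) := AffineSubspace.mk' x (W x (3 * r))
  have hxQ : x ∈ Q := AffineSubspace.self_mem_mk' _ _
  refine ⟨Q, g, ⟨Q, rfl, ?_, x, hxQ⟩, hxQ, hg1, hg2, fun y => (hg3 y).trans ?_, hg4, ?_⟩
  · rw [AffineSubspace.direction_mk']
    exact hF.finrank_eq x hx _ (by linarith) (by linarith)
  · refine mul_le_of_le_one_right (by positivity) ?_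
    have : (0 : ℝ) < (1 / 2) ^ m := by positivity
    linarith
  · intro e he hse
    have heF : e ∈ F := ⟨he, hse⟩
    rcases Nat.eq_zero_or_pos m with h0 | h0
    · rw [h0, hs.zero_eq] at hse
      exact absurd hse hr0.ne'
    · refine ⟨z 0 e, ?_, by rw [hg5 e heF, hzm]⟩
      rw [hz 0 h0, hY0 0 rfl]
      refine AffineSubspace.mem_mk'.2 ?_
      simp only [vsub_eq_sub, add_sub_cancel_left]
      exact Submodule.starProjection_apply_mem _ _

section Volume

variable {X : Type*} [NormedAddCommGroup X] [NormedSpace ℝ X] [FiniteDimensional ℝ X]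

lemma exists_measureReal_ball_eq (X : Type*) [NormedAddCommGroup X] [NormedSpace ℝ X]
    [FiniteDimensional ℝ X] [MeasurableSpace X] [BorelSpace X] :
    ∃ ω : ℝ, 0 < ω ∧ ∀ (p : X) (t : ℝ), 0 < t →
      (Measure.addHaar : Measure X).real (ball p t) = t ^ Module.finrank ℝ X * ω := by
  refine ⟨(Measure.addHaar : Measure X).real (ball 0 1), ?_, fun p t ht => ?_⟩
  · exact ENNReal.toReal_pos (measure_ball_pos _ _ one_pos).ne' measure_ball_lt_top.ne
  · rw [Measure.real, Measure.addHaar_ball_of_pos _ p ht, ENNReal.toReal_mul,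
      ENNReal.toReal_ofReal (by positivity), Measure.real]

/-- Disjoint balls inside a ball. -/
lemma sum_pow_le_of_disjoint_ball {ι : Type*} (s : Finset ι) {p : ι → X} {t : ι → ℝ}
    (ht : ∀ i ∈ s, 0 < t i) {q : X} {R : ℝ} (hR : 0 < R)
    (hsub : ∀ i ∈ s, ball (p i) (t i) ⊆ ball q R)
    (hdisj : (s : Set ι).PairwiseDisjoint fun i => ball (p i) (t i)) :
    ∑ i ∈ s, t i ^ Module.finrank ℝ X ≤ R ^ Module.finrank ℝ X := by
  borelize X
  obtain ⟨ω, hω, hball⟩ := exists_measureReal_ball_eq X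
  have h1 : ∑ i ∈ s, (Measure.addHaar : Measure X).real (ball (p i) (t i))
      ≤ (Measure.addHaar : Measure X).real (ball q R) := by
    rw [← measureReal_biUnion_finset hdisj (fun i _ => measurableSet_ball)
      (fun i _ => measure_ball_lt_top.ne)]
    exact measureReal_mono (iUnion₂_subset hsub) measure_ball_lt_top.ne
  rw [hball q R hR, Finset.sum_congr rfl fun i hi => hball (p i) (t i) (ht i hi),
    ← Finset.sum_mul] at h1
  exact le_of_mul_le_mul_right h1 hω

/-- A ball covered by balls and by sets which omit a fixed proportion of a ball. -/
lemma pow_add_le_of_ball_subset {ι κ : Type*} (s : Finset ι) (L : Finset κ) {p : ι → X}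
    {t : ι → ℝ} (ht : ∀ i ∈ s, 0 < t i) {q q' : κ → X} {T : κ → ℝ} (hT : ∀ l ∈ L, 0 < T l)
    {N : κ → Set X} {c R : ℝ} (hc : 0 < c) (hR : 0 < R)
    (hN : ∀ l ∈ L, N l ⊆ ball (q l) (T l) \ ball (q' l) (c * T l))
    (hq : ∀ l ∈ L, ball (q' l) (c * T l) ⊆ ball (q l) (T l))
    (hcov : ball (0 : X) R ⊆ (⋃ i ∈ s, ball (p i) (t i)) ∪ ⋃ l ∈ L, N l) :
    R ^ Module.finrank ℝ X + c ^ Module.finrank ℝ X * ∑ l ∈ L, T l ^ Module.finrank ℝ X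
      ≤ ∑ i ∈ s, t i ^ Module.finrank ℝ X + ∑ l ∈ L, T l ^ Module.finrank ℝ X := by
  borelize X
  obtain ⟨ω, hω, hball⟩ := exists_measureReal_ball_eq X
  set D := Module.finrank ℝ X
  set μ : Measure X := Measure.addHaar
  have hfin : ∀ l ∈ L, μ (ball (q l) (T l) \ ball (q' l) (c * T l)) ≠ ∞ := fun l _ =>
    (measure_mono sdiff_subset |>.trans_lt measure_ball_lt_top).ne
  have h1 : μ.real (ball (0 : X) R) ≤ ∑ i ∈ s, μ.real (ball (p i) (t i))
      + ∑ l ∈ L, μ.real (ball (q l) (T l) \ ball (q' l) (c * T l)) := by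
    have hU : μ (⋃ i ∈ s, ball (p i) (t i)) ≠ ∞ :=
      ((measure_biUnion_finset_le s _).trans_lt
        (ENNReal.sum_lt_top.2 fun i _ => measure_ball_lt_top)).ne
    have hV : μ (⋃ l ∈ L, ball (q l) (T l) \ ball (q' l) (c * T l)) ≠ ∞ :=
      ((measure_biUnion_finset_le L _).trans_lt
        (ENNReal.sum_lt_top.2 fun l hl => (hfin l hl).lt_top)).ne
    calc μ.real (ball (0 : X) R)
        ≤ μ.real ((⋃ i ∈ s, ball (p i) (t i)) ∪
            ⋃ l ∈ L, ball (q l) (T l) \ ball (q' l) (c * T l)) :=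
          measureReal_mono (hcov.trans (union_subset_union_right _ (iUnion₂_mono hN)))
            (measure_union_lt_top hU.lt_top hV.lt_top).ne
      _ ≤ μ.real (⋃ i ∈ s, ball (p i) (t i)) +
            μ.real (⋃ l ∈ L, ball (q l) (T l) \ ball (q' l) (c * T l)) :=
          measureReal_union_le _ _
      _ ≤ _ := add_le_add (measureReal_biUnion_finset_le _ _) (measureReal_biUnion_finset_le _ _)
  have h2 : ∀ l ∈ L, μ.real (ball (q l) (T l) \ ball (q' l) (c * T l))
      = (T l ^ D - c ^ D * T l ^ D) * ω := by
    intro l hl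
    rw [measureReal_sdiff (hq l hl) measurableSet_ball measure_ball_lt_top.ne, hball _ _ (hT l hl),
      hball _ _ (mul_pos hc (hT l hl)), mul_pow]
    ring
  rw [hball 0 R hR, Finset.sum_congr rfl fun i hi => hball (p i) (t i) (ht i hi),
    Finset.sum_congr rfl h2, ← Finset.sum_mul, ← Finset.sum_mul, ← add_mul] at h1
  have h3 := le_of_mul_le_mul_right h1 hω
  rw [Finset.sum_sub_distrib, ← Finset.mul_sum] at h3
  linarith

end Volume

/-- A tilted plane does not contain the vectors close to a suitable extremal direction. -/
lemma FlatField.inner_le_of_tilt {n d : ℕ} {ε : ℝ} {E : Set (V n)}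
    {W : V n → ℝ → Submodule ℝ (V n)} (hF : FlatField n d ε E W) {l f v : V n} {t α : ℝ}
    (hl : l ∈ E) (ht : 0 < t) (ht1 : t ≤ 1) (hf : f ∈ E) (hfl : ‖f - l‖ < t) (hv : ‖v‖ = 1)
    (hα0 : 0 ≤ α) (hα : α / 4 ≤ ‖v - (W l t).starProjection v‖) (hε : 64 * ε ≤ α ^ 2) :
    inner ℝ (f - l) v ≤ (1 - 2 * (α ^ 2 / 128)) * t := by
  set Q := (W l t).starProjection
  have h1 : ‖Q v‖ ^ 2 + ‖v - Q v‖ ^ 2 = 1 := by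
    have h : inner ℝ (Q v) (v - Q v) = 0 :=
      Submodule.inner_right_of_mem_orthogonal (Submodule.starProjection_apply_mem _ _)
        (Submodule.sub_starProjection_mem_orthogonal v)
    have h2 := norm_add_sq_real (Q v) (v - Q v)
    rw [h, add_sub_cancel, hv] at h2
    linarith
  have h2 : ‖Q v‖ ≤ 1 - α ^ 2 / 32 := by
    have h3 : (α / 4) ^ 2 ≤ ‖v - Q v‖ ^ 2 := by gcongr
    have h4 : ‖v - Q v‖ ^ 2 ≤ 1 := by nlinarith [sq_nonneg ‖Q v‖]
    refine abs_le_of_sq_le_sq' ?_ (by nlinarith) |>.2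
    nlinarith [sq_nonneg (α ^ 2 / 32)]
  have h3 : inner ℝ (f - l) v = inner ℝ (f - l) (Q v) + inner ℝ ((f - l) - Q (f - l)) v := by
    rw [inner_sub_left (f - l) (Q (f - l)), Submodule.inner_starProjection_left_eq_right]
    ring
  have h4 : inner ℝ (f - l) (Q v) ≤ t * (1 - α ^ 2 / 32) :=
    (real_inner_le_norm _ _).trans (mul_le_mul hfl.le h2 (norm_nonneg _) ht.le)
  have h5 : inner ℝ ((f - l) - Q (f - l)) v ≤ ε * t := by
    refine (real_inner_le_norm _ _).trans ?_
    rw [hv, mul_one]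
    exact hF.near_plane l hl t ht ht1 f hf hfl
  rw [h3]
  nlinarith

section Covering

open scoped Classical

/-- Projecting a covering of `E` to a plane, with some balls where `E` is tilted. -/
lemma FlatField.pow_add_le_of_cover {n d : ℕ} {ε : ℝ} {E : Set (V n)}
    {W : V n → ℝ → Submodule ℝ (V n)} (hF : FlatField n d ε E W) {b : V n} {ρ ζ α : ℝ}
    (hb : b ∈ E) (hρ : 0 < ρ) (hρ1 : ρ ≤ 1) (hζ : ζ ≤ 1 / 2) (hεζ : 20 * ε ≤ ζ)
    (hα0 : 0 < α) (hα : α ≤ 2) (hεα : 64 * ε ≤ α ^ 2)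
    (𝒰 : Finset (V n × ℝ)) (hU0 : ∀ U ∈ 𝒰, 0 < U.2)
    (hcov : ∀ f ∈ E, ‖f - b‖ < ρ → ∃ U ∈ 𝒰, f ∈ ball U.1 U.2)
    (hsmall : ∀ U ∈ 𝒰, (ball U.1 U.2 ∩ ball b ρ).Nonempty → U.2 ≤ ζ / 4 * ρ)
    (L : Finset (V n)) (t : V n → ℝ) (hL : ∀ l ∈ L, l ∈ E ∧ 0 < t l ∧ t l ≤ 1)
    (htilt : ∀ l ∈ L, α ≤ ‖(W b ρ).starProjection - (W l (t l)).starProjection‖) :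
    ((1 - ζ) * ρ) ^ d + (α ^ 2 / 128) ^ d * ∑ l ∈ L, t l ^ d ≤
      (∑ U ∈ 𝒰 with ball U.1 U.2 ⊆ ball b ρ ∧ ∀ l ∈ L, ¬ ball U.1 U.2 ⊆ ball l (t l), U.2 ^ d)
        + ∑ l ∈ L, t l ^ d := by
  have hε0 := hF.eps_pos
  have hfr : Module.finrank ℝ (W b ρ) = d := hF.finrank_eq b hb ρ hρ hρ1
  have hv : ∀ l ∈ L, ∃ v : W b ρ, ‖v‖ = 1 ∧
      α / 4 ≤ ‖(v : V n) - (W l (t l)).starProjection v‖ := by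
    intro l hl
    obtain ⟨v, hvW, hv1, hv2⟩ := exists_tilted_vector
      (hfr.trans (hF.finrank_eq l (hL l hl).1 _ (hL l hl).2.1 (hL l hl).2.2).symm) hα0 hα
      (htilt l hl)
    exact ⟨⟨v, hvW⟩, hv1, hv2⟩
  choose! v hv1 hv2 using hv
  set π : V n →L[ℝ] W b ρ := (W b ρ).orthogonalProjectionOnto with hπ
  have hπle : ∀ z, ‖π z‖ ≤ ‖z‖ := fun z => Submodule.norm_orthogonalProjectionOnto_apply_le _ _
  have hκ0 : 0 < α ^ 2 / 128 := by positivity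
  have hκ1 : α ^ 2 / 128 ≤ 1 := by nlinarith
  have key := pow_add_le_of_ball_subset (X := W b ρ)
    (𝒰.filter fun U => ball U.1 U.2 ⊆ ball b ρ ∧ ∀ l ∈ L, ¬ ball U.1 U.2 ⊆ ball l (t l)) L
    (p := fun U => π (U.1 - b)) (t := Prod.snd) (fun U hU => hU0 U (Finset.mem_filter.1 hU).1)
    (q := fun l => π (l - b))
    (q' := fun l => π (l - b) + ((1 - α ^ 2 / 128) * t l) • v l) (T := t)
    (fun l hl => (hL l hl).2.1)
    (N := fun l => {q | ∃ f ∈ E, ‖f - l‖ < t l ∧ π (f - b) = q})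
    (c := α ^ 2 / 128) (R := (1 - ζ) * ρ) hκ0 (by nlinarith) ?_ ?_ ?_
  · rwa [hfr] at key
  · rintro l hl _ ⟨f, hf, hfl, rfl⟩
    obtain ⟨hlE, ht0, ht1⟩ := hL l hl
    have hsub : π (f - b) - π (l - b) = π (f - l) := by
      rw [← map_sub, sub_sub_sub_cancel_right]
    refine ⟨?_, fun hmem => ?_⟩
    · rw [mem_ball, dist_eq_norm, hsub]
      exact (hπle _).trans_lt hfl
    · rw [mem_ball, dist_eq_norm, ← sub_sub, hsub] at hmem
      have h1 : inner ℝ (f - l) (v l : V n) ≤ _ :=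
        hF.inner_le_of_tilt hlE ht0 ht1 hf hfl (hv1 l hl) hα0.le (hv2 l hl) hεα
      have h2 : inner ℝ (f - l) (v l : V n) = inner ℝ (π (f - l)) (v l) :=
        (Submodule.inner_orthogonalProjectionOnto_eq_of_mem_right _ _).symm
      have h3 := real_inner_le_norm (((1 - α ^ 2 / 128) * t l) • v l - π (f - l)) (v l)
      have h4 : inner ℝ (((1 - α ^ 2 / 128) * t l) • v l) (v l) = (1 - α ^ 2 / 128) * t l := by
        have h := real_inner_smul_left (v l) (v l) ((1 - α ^ 2 / 128) * t l)
        rwa [real_inner_self_eq_norm_sq, hv1 l hl, one_pow, mul_one] at h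
      rw [inner_sub_left, h4, hv1 l hl, norm_sub_rev] at h3
      linarith
  · intro l hl
    obtain ⟨hlE, ht0, ht1⟩ := hL l hl
    apply ball_subset_ball'
    rw [dist_eq_norm, add_sub_cancel_left, norm_smul, hv1 l hl, Real.norm_of_nonneg (by nlinarith)]
    linarith
  · intro q hq
    rw [mem_ball_zero_iff] at hq
    obtain ⟨f, hf, hfq, hfd⟩ := hF.exists_proj_eq (by linarith) hb hρ hρ1 q.2
      (by rw [← Submodule.coe_norm] at *; nlinarith)
    have hfq' : π (f - b) = q := Subtype.ext hfq
    have hfb : ‖f - b‖ < (1 - ζ / 2) * ρ := by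
      have := norm_le_norm_sub_add (f - b) (q : V n)
      rw [← Submodule.coe_norm] at this
      nlinarith
    by_cases hfL : ∃ l ∈ L, ‖f - l‖ < t l
    · obtain ⟨l, hl, hfl⟩ := hfL
      exact Or.inr (mem_biUnion hl ⟨f, hf, hfl, hfq'⟩)
    · push Not at hfL
      left
      have hfρ : ‖f - b‖ < ρ := by nlinarith
      obtain ⟨U, hU, hfU⟩ := hcov f hf hfρ
      have hUs := hsmall U hU ⟨f, hfU, by rwa [mem_ball, dist_eq_norm]⟩
      refine mem_biUnion (x := U) (Finset.mem_filter.2 ⟨hU, ?_, fun l hl hsub => ?_⟩) ?_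
      · apply ball_subset_ball'
        have h1 := dist_triangle_left U.1 b f
        rw [mem_ball] at hfU
        rw [dist_eq_norm f b] at h1
        nlinarith
      · have := hsub hfU
        rw [mem_ball, dist_eq_norm] at this
        exact absurd this (hfL l hl).not_gt
      · rw [mem_ball, dist_eq_norm, ← hfq', ← map_sub, sub_sub_sub_cancel_right]
        exact (hπle _).trans_lt (by rwa [← dist_eq_norm])

/-- Tilted balls increase the cost of a covering of `E` at small scales. -/
lemma FlatField.gain_of_cover {n d : ℕ} {ε : ℝ} {E : Set (V n)}
    {W : V n → ℝ → Submodule ℝ (V n)} (hF : FlatField n d ε E W) {b : V n} {ρ ζ α : ℝ}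
    (hb : b ∈ E) (hρ : 0 < ρ) (hρ1 : ρ ≤ 1) (hζ : ζ ≤ 1 / 2) (hεζ : 20 * ε ≤ ζ)
    (hα0 : 0 < α) (hα : α ≤ 2) (hεα : 64 * ε ≤ α ^ 2)
    (hζα : d * ζ ≤ (α ^ 2 / 128) ^ d / 2)
    (𝒰 : Finset (V n × ℝ)) (hU0 : ∀ U ∈ 𝒰, 0 < U.2)
    (hcov : ∀ f ∈ E, ‖f - b‖ < ρ → ∃ U ∈ 𝒰, f ∈ ball U.1 U.2)
    (hsmall : ∀ U ∈ 𝒰, (ball U.1 U.2 ∩ ball b ρ).Nonempty → U.2 ≤ ζ / 4 * ρ)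
    (L : Finset (V n)) (t : V n → ℝ)
    (hL : ∀ l ∈ L, l ∈ E ∧ 0 < t l ∧ t l ≤ 1)
    (hLsub : ∀ l ∈ L, ball l (t l) ⊆ ball b ρ)
    (hLdisj : (L : Set (V n)).PairwiseDisjoint fun l => ball l (t l))
    (hLsmall : ∀ l ∈ L, ∀ U ∈ 𝒰, (ball U.1 U.2 ∩ ball l (t l)).Nonempty → U.2 ≤ ζ / 4 * t l)
    (htilt : ∀ l ∈ L, α ≤ ‖(W b ρ).starProjection - (W l (t l)).starProjection‖) :
    (1 - d * ζ) * ρ ^ d + (α ^ 2 / 128) ^ d / 2 * ∑ l ∈ L, t l ^ d ≤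
      ∑ U ∈ 𝒰 with ball U.1 U.2 ⊆ ball b ρ, U.2 ^ d := by
  have hε0 := hF.eps_pos
  have bern : ∀ t : ℝ, 0 < t → (1 - d * ζ) * t ^ d ≤ ((1 - ζ) * t) ^ d := by
    intro t ht
    rw [mul_pow]
    gcongr
    have := one_add_mul_le_pow (a := -ζ) (by linarith) d
    rw [← sub_eq_add_neg] at this
    linarith
  have h1 := hF.pow_add_le_of_cover hb hρ hρ1 hζ hεζ hα0 hα hεα 𝒰 hU0 hcov hsmall L t hL htilt
  have h2 : ∀ l ∈ L, (1 - d * ζ) * t l ^ d ≤ ∑ U ∈ 𝒰 with ball U.1 U.2 ⊆ ball l (t l), U.2 ^ d := by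
    intro l hl
    obtain ⟨hlE, ht0, ht1⟩ := hL l hl
    have h := hF.pow_add_le_of_cover hlE ht0 ht1 hζ hεζ hα0 hα hεα 𝒰 hU0
      (fun f hf hfl => hcov f hf (by
        have := hLsub l hl (show f ∈ ball l (t l) by rwa [mem_ball, dist_eq_norm])
        rwa [mem_ball, dist_eq_norm] at this)) (hLsmall l hl) ∅ t (by simp) (by simp)
    simp only [Finset.sum_empty, mul_zero, add_zero, Finset.notMem_empty, IsEmpty.forall_iff,
      implies_true, and_true] at h
    exact (bern _ ht0).trans h
  have h3 : ∑ l ∈ L, ∑ U ∈ 𝒰 with ball U.1 U.2 ⊆ ball l (t l), U.2 ^ d =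
      ∑ U ∈ L.biUnion fun l => 𝒰.filter fun U => ball U.1 U.2 ⊆ ball l (t l), U.2 ^ d := by
    rw [Finset.sum_biUnion]
    intro l hl l' hl' hne
    refine Finset.disjoint_left.2 fun U hU hU' => ?_
    rw [Finset.mem_filter] at hU hU'
    exact Set.disjoint_left.1 (hLdisj hl hl' hne) (hU.2 (mem_ball_self (hU0 U hU.1)))
      (hU'.2 (mem_ball_self (hU0 U hU.1)))
  have h4 : (∑ U ∈ 𝒰 with ball U.1 U.2 ⊆ ball b ρ ∧ ∀ l ∈ L, ¬ ball U.1 U.2 ⊆ ball l (t l),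
      U.2 ^ d) + ∑ U ∈ L.biUnion fun l => 𝒰.filter fun U => ball U.1 U.2 ⊆ ball l (t l), U.2 ^ d
      ≤ ∑ U ∈ 𝒰 with ball U.1 U.2 ⊆ ball b ρ, U.2 ^ d := by
    rw [← Finset.sum_union]
    · refine Finset.sum_le_sum_of_subset_of_nonneg (fun U hU => ?_)
        fun U hU _ => pow_nonneg (hU0 U (Finset.mem_filter.1 hU).1).le _
      rw [Finset.mem_union, Finset.mem_filter, Finset.mem_biUnion] at hU
      rcases hU with hU | ⟨l, hl, hU⟩
      · exact Finset.mem_filter.2 ⟨hU.1, hU.2.1⟩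
      · rw [Finset.mem_filter] at hU
        exact Finset.mem_filter.2 ⟨hU.1, hU.2.trans (hLsub l hl)⟩
    · refine Finset.disjoint_left.2 fun U hU hU' => ?_
      rw [Finset.mem_biUnion] at hU'
      obtain ⟨l, hl, hU'⟩ := hU'
      exact (Finset.mem_filter.1 hU).2.2 l hl (Finset.mem_filter.1 hU').2
  have h5 := Finset.sum_le_sum h2
  rw [h3, ← Finset.mul_sum] at h5
  have h6 : 0 ≤ ∑ l ∈ L, t l ^ d := Finset.sum_nonneg fun l hl => pow_nonneg (hL l hl).2.1.le _
  have h7 := bern ρ hρ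
  have h8 := mul_le_mul_of_nonneg_right hζα h6
  linarith

end Covering

/-- Smallness conditions on the parameters of the construction. -/
structure SmallParams (d : ℕ) (δ θ ζ ε : ℝ) : Prop where
  delta_pos : 0 < δ
  delta_le : δ ≤ 1 / 8
  theta_pos : 0 < θ
  theta_le : θ ≤ 1 / 1000
  theta_le_zeta : 48 * θ ≤ ζ
  zeta_le : ζ ≤ 1 / 2
  zeta_le_delta : d * ζ ≤ ((δ / 2) ^ 2 / 128) ^ d / 2
  eps_le : 10000 * ε ≤ δ * θ
  eps_le_zeta : 20 * ε ≤ ζ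
  eps_le_delta : 64 * ε ≤ (δ / 2) ^ 2

/-- A covering of `E ∩ closedBall x (2 * r)` by balls centered on `E`, with radii controlled
by `max (σ ·) η`. -/
structure IsLevelCover {n : ℕ} (E : Set (V n)) (x : V n) (r : ℝ) (σ : V n → ℝ) (η : ℝ)
    (𝒰 : Finset (V n × ℝ)) : Prop where
  mem : ∀ U ∈ 𝒰, U.1 ∈ E
  pos : ∀ U ∈ 𝒰, 0 < U.2
  le : ∀ U ∈ 𝒰, U.2 ≤ max (σ U.1) η
  cover : ∀ f ∈ E, ‖f - x‖ ≤ 2 * r → ∃ U ∈ 𝒰, f ∈ ball U.1 U.2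

section Local

variable {n d : ℕ} {ε : ℝ} {E : Set (V n)} {W : V n → ℝ → Submodule ℝ (V n)}
  {δ θ ζ r : ℝ} {s : ℕ → V n → ℝ}

lemma ScaleChain.le (hs : ScaleChain E W δ θ r s) (hθ : θ ≤ 1) (k : ℕ) {e : V n} (he : e ∈ E) :
    s k e ≤ r := by
  induction k with
  | zero => exact (hs.zero_eq e).le
  | succ k ih =>
    have h1 := hs.succ_le k e he
    have h2 := hs.nonneg k e he
    nlinarith

lemma FlatField.norm_sub_le_of_near (hF : FlatField n d ε E W) (hs : ScaleChain E W δ θ r s)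
    (hp : SmallParams d δ θ ζ ε) (hr1 : r ≤ 1 / 10) {k : ℕ} {i b : V n} (hi : i ∈ E) (hb : b ∈ E)
    (hb0 : 0 < s k b) (hib : ‖i - b‖ ≤ θ * s k b) :
    ‖(W i (s k i)).starProjection - (W b (4 * θ * s k b)).starProjection‖ ≤ δ / 100 := by
  have hθ0 := hp.theta_pos
  have hθ := hp.theta_le
  have hε0 := hF.eps_pos
  have h1 := hs.lipschitz k b hb i hi
  have h2 := hs.lipschitz k i hi b hb
  rw [norm_sub_rev] at h1
  have h3 := hs.le (by linarith) k hb
  have h4 : θ * s k b ≤ s k b / 1000 := by nlinarith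
  have h5 : ε / θ ≤ δ / 10000 := by
    rw [div_le_div_iff₀ hθ0 (by norm_num)]
    linarith [hp.eps_le]
  have h6 : 1 / θ * ε = ε / θ := by ring
  refine (hF.norm_sub_le_of_comparable hi hb (t := s k i) (t' := 4 * θ * s k b) (T := 3 * s k b)
    (Λ := 1 / θ) (by linarith) (by positivity) (by linarith) (by linarith) (by linarith) ?_ ?_
    ?_).trans ?_
  · rw [one_div, ← div_eq_inv_mul, le_div_iff₀ hθ0]
    linarith
  · rw [one_div, ← div_eq_inv_mul, le_div_iff₀ hθ0]
    linarith
  · rw [mul_assoc, h6]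
    linarith [hp.delta_le]
  · rw [mul_assoc, h6]
    linarith [hp.delta_pos]

/-- Well separated points at scale `s (k + 1)` remain separated when projected. -/
lemma FlatField.half_norm_le_proj (hF : FlatField n d ε E W) (hs : ScaleChain E W δ θ r s)
    (hp : SmallParams d δ θ ζ ε) (hr1 : r ≤ 1 / 10) {k : ℕ} {i j b : V n} (hi : i ∈ E)
    (hj : j ∈ E) (hb : b ∈ E) (hb0 : 0 < s k b) (hib : ‖i - b‖ ≤ θ * s k b)
    (hjb : ‖j - b‖ ≤ θ * s k b) (hi0 : 0 < s (k + 1) i)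
    (hij : 4 * θ * s (k + 1) i ≤ ‖j - i‖) :
    ‖j - i‖ / 2 ≤ ‖(W b (4 * θ * s k b)).starProjection (j - i)‖ := by
  have hθ0 := hp.theta_pos
  have hθ := hp.theta_le
  have hε0 := hF.eps_pos
  have hδ := hp.delta_le
  have hδ0 := hp.delta_pos
  have h2 := hs.lipschitz k b hb i hi
  rw [norm_sub_rev] at h2
  have h3 := hs.le (by linarith) k hi
  have h3' := hs.le (by linarith) (k + 1) hi
  have h4 : θ * s k b ≤ s k b / 1000 := by nlinarith
  have h5 : ε / θ ≤ δ / 10000 := by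
    rw [div_le_div_iff₀ hθ0 (by norm_num)]
    linarith [hp.eps_le]
  have hε1 : ε ≤ 1 / 1000 := by nlinarith [hp.eps_le]
  have h6 : 1 / θ * ε = ε / θ := by ring
  have hs' : s (k + 1) i ≤ s k i := by
    have := hs.succ_le k i hi
    nlinarith [hs.nonneg k i hi]
  have hji : ‖j - i‖ ≤ 2 * (θ * s k b) := by
    have := norm_sub_le_norm_sub_add_norm_sub j b i
    rw [norm_sub_rev b i] at this
    linarith
  set t := 2 * ‖j - i‖ with ht
  have ht0 : 0 < t := by
    have : 0 < 4 * θ * s (k + 1) i := by positivity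
    linarith
  have hts : t ≤ s k i := by linarith
  have h7 : ‖(W i t).starProjection - (W i (s k i)).starProjection‖ ≤ 2 * δ + δ / 100 := by
    rcases le_or_gt (s (k + 1) i) t with h | h
    · linarith [hs.close k i hi t ht0 h hts]
    · have h8 := hs.close k i hi (s (k + 1) i) hi0 le_rfl hs'
      have h9 := hF.norm_sub_le_of_comparable hi hi (t := t) (t' := s (k + 1) i)
        (T := 2 * s (k + 1) i) (Λ := 1 / θ) ht0 hi0 (by linarith) (by simp; linarith) le_rfl
        (by rw [one_div, ← div_eq_inv_mul, le_div_iff₀ hθ0]; linarith)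
        (by rw [one_div, ← div_eq_inv_mul, le_div_iff₀ hθ0]; nlinarith)
        (by rw [mul_assoc, h6]; linarith)
      rw [mul_assoc, h6] at h9
      have := norm_sub_le_norm_sub_add_norm_sub (W i t).starProjection
        (W i (s (k + 1) i)).starProjection (W i (s k i)).starProjection
      linarith
  have h8 := hF.norm_sub_le_of_near hs hp hr1 hi hb hb0 hib
  have h9 := norm_sub_le_norm_sub_add_norm_sub (W i t).starProjection
    (W i (s k i)).starProjection (W b (4 * θ * s k b)).starProjection
  have h10 := hF.near_plane i hi t ht0 (by linarith) j hj (by linarith)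
  have h11 := ContinuousLinearMap.le_of_opNorm_le _ (h9.trans (add_le_add h7 h8)) (j - i)
  rw [sub_apply] at h11
  have h12 : ‖j - i‖ ≤ ‖(j - i) - (W i t).starProjection (j - i)‖ +
      ‖(W i t).starProjection (j - i) - (W b (4 * θ * s k b)).starProjection (j - i)‖ +
      ‖(W b (4 * θ * s k b)).starProjection (j - i)‖ := by
    refine le_trans (le_of_eq ?_) (norm_add₃_le)
    congr 1
    abel
  nlinarith [norm_nonneg (j - i)]

/-- The points of a separated family at scale `s (k + 1)` near a ball of radius `t`. -/
lemma FlatField.sum_pow_le_of_near (hF : FlatField n d ε E W) (hs : ScaleChain E W δ θ r s)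
    (hp : SmallParams d δ θ ζ ε) (hr1 : r ≤ 1 / 10) {k : ℕ} {b l : V n} {t : ℝ}
    (hb : b ∈ E) (hb0 : 0 < s k b) (hl : l ∈ E) (ht0 : 0 < t) (hlt : s (k + 1) l ≤ 2 * t)
    (I : Finset (V n)) (hI : ∀ i ∈ I, i ∈ E) (hIb : ∀ i ∈ I, ‖i - b‖ ≤ θ * s k b)
    (hI0 : ∀ i ∈ I, 0 < s (k + 1) i) (hIl : ∀ i ∈ I, ‖i - l‖ ≤ 5 * t)
    (hdisj : (I : Set (V n)).PairwiseDisjoint fun i => ball i (4 * θ * s (k + 1) i)) :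
    ∑ i ∈ I, (4 * θ * s (k + 1) i) ^ d ≤ 12 ^ d * t ^ d := by
  have hθ0 := hp.theta_pos
  have hθ := hp.theta_le
  have hr := hs.le (by linarith) k hb
  have hρ1 : 4 * θ * s k b ≤ 1 := by nlinarith
  have hρ0 : 0 < 4 * θ * s k b := by positivity
  have hfr := hF.finrank_eq b hb _ hρ0 hρ1
  set π := (W b (4 * θ * s k b)).orthogonalProjectionOnto
  have hπle : ∀ z, ‖π z‖ ≤ ‖z‖ := fun z => Submodule.norm_orthogonalProjectionOnto_apply_le _ _
  have key := sum_pow_le_of_disjoint_ball (X := W b (4 * θ * s k b)) I (p := fun i => π i)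
    (t := fun i => 2 * θ * s (k + 1) i) (fun i hi => by have := hI0 i hi; positivity)
    (q := π l) (R := 6 * t) (by positivity) ?_ ?_
  · rw [hfr] at key
    have h1 : ∀ i ∈ I, (4 * θ * s (k + 1) i) ^ d = 2 ^ d * (2 * θ * s (k + 1) i) ^ d := by
      intro i _
      rw [← mul_pow]
      ring
    rw [Finset.sum_congr rfl h1, ← Finset.mul_sum]
    calc (2 : ℝ) ^ d * ∑ i ∈ I, (2 * θ * s (k + 1) i) ^ d ≤ 2 ^ d * (6 * t) ^ d := by gcongr
      _ = 12 ^ d * t ^ d := by rw [← mul_pow, ← mul_pow]; ring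
  · intro i hi
    apply ball_subset_ball'
    rw [dist_eq_norm, ← map_sub]
    have h1 := (hπle (i - l)).trans (hIl i hi)
    have h2 := hs.lipschitz (k + 1) i (hI i hi) l hl
    have h3 := hIl i hi
    have h4 : 2 * θ * s (k + 1) i ≤ 2 * θ * (3 * t) := by gcongr; linarith
    nlinarith
  · intro i hi j hj hij
    have h1 := hdisj hi hj hij
    have h0 := hI0 i hi
    have h0' := hI0 j hj
    simp only [Function.onFun] at h1 ⊢
    rw [disjoint_ball_ball_iff (by positivity) (by positivity), dist_eq_norm] at h1 ⊢
    rw [← map_sub]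
    have h2 := hF.half_norm_le_proj hs hp hr1 (hI j hj) (hI i hi) hb hb0 (hIb j hj) (hIb i hi) h0'
      (by have : 0 < 4 * θ * s (k + 1) i := by positivity
          linarith)
    have h3 : ‖(W b (4 * θ * s k b)).starProjection (i - j)‖ = ‖π (i - j)‖ := rfl
    linarith

end Local

section Gain

open scoped Classical

variable {n d : ℕ} {ε : ℝ} {E : Set (V n)} {W : V n → ℝ → Submodule ℝ (V n)}
  {δ θ ζ r η : ℝ} {s : ℕ → V n → ℝ} {x : V n}

lemma sum_le_sum_sum_filter {ι κ : Type*} (I : Finset ι) (L : Finset κ) (R : ι → κ → Prop)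
    {f : ι → ℝ} (hf : ∀ i ∈ I, 0 ≤ f i) (h : ∀ i ∈ I, ∃ l ∈ L, R i l) :
    ∑ i ∈ I, f i ≤ ∑ l ∈ L, ∑ i ∈ I with R i l, f i := by
  simp_rw [Finset.sum_filter]
  rw [Finset.sum_comm]
  refine Finset.sum_le_sum fun i hi => ?_
  obtain ⟨l, hl, hil⟩ := h i hi
  refine le_trans (by rw [if_pos hil])
    (Finset.single_le_sum (f := fun l => if R i l then f i else 0)
    (fun l _ => ?_) hl)
  split_ifs
  exacts [hf i hi, le_rfl]

/-- The cost of a covering at scale `s (k + 1)` inside a ball at scale `s k`. -/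
lemma FlatField.local_gain (hF : FlatField n d ε E W) (hs : ScaleChain E W δ θ r s)
    (hp : SmallParams d δ θ ζ ε) (hr1 : r ≤ 1 / 10) {k : ℕ} {b : V n}
    (hb : b ∈ E) (hbx : ‖b - x‖ < r) (hb0 : 0 < s k b) {𝒰 : Finset (V n × ℝ)}
    (hU : IsLevelCover E x r (fun e => 4 * θ * s (k + 1) e) η 𝒰) (I : Finset (V n))
    (hne : I.Nonempty) (hI : ∀ i ∈ I, i ∈ E) (hIb : ∀ i ∈ I, ‖i - b‖ ≤ θ * s k b)
    (hI0 : ∀ i ∈ I, 0 < s (k + 1) i) (hIη : ∀ i ∈ I, η ≤ 4 * θ * s (k + 1) i)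
    (hdisj : (I : Set (V n)).PairwiseDisjoint fun i => ball i (4 * θ * s (k + 1) i)) :
    (1 - d * ζ) * (4 * θ * s k b) ^ d
        + ((δ / 2) ^ 2 / 128) ^ d / 2 / 12 ^ d * ∑ i ∈ I, (4 * θ * s (k + 1) i) ^ d
      ≤ ∑ U ∈ 𝒰 with ball U.1 U.2 ⊆ ball b (4 * θ * s k b), U.2 ^ d := by
  have hθ0 := hp.theta_pos
  have hθ := hp.theta_le
  have hδ0 := hp.delta_pos
  have hsr := hs.le (by linarith) k hb
  have hr0 : 0 < r := by linarith
  have hθb : θ * s k b ≤ s k b / 1000 := by nlinarith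
  have hθb0 : 0 < θ * s k b := by positivity
  have hS : ∀ i ∈ I, s k i ≤ 1.1 * s k b := fun i hi => by
    have := hs.lipschitz k i (hI i hi) b hb
    have := hIb i hi
    linarith
  have hη : η ≤ 2 * θ * (4 * θ * s k b) := by
    obtain ⟨i, hi⟩ := hne
    have h1 := hIη i hi
    have h2 := hs.succ_le k i (hI i hi)
    have h3 := hS i hi
    have h4 : 4 * θ * s (k + 1) i ≤ 4 * θ * (θ * (1.1 * s k b)) := by
      gcongr
      exact h2.trans (by gcongr)
    nlinarith
  choose! t ht1 ht2 ht3 using fun i hi => hs.tilt k i (hI i hi) (hI0 i hi)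
  have ht0 : ∀ i ∈ I, 0 < t i := fun i hi => by linarith [ht1 i hi, hI0 i hi]
  have htb : ∀ i ∈ I, t i ≤ 1.1 * (θ * s k b) := fun i hi => by
    have := ht2 i hi
    nlinarith [hS i hi]
  obtain ⟨u, huI, hudisj, hucov⟩ :=
    Vitali.exists_disjoint_subfamily_covering_enlargement_closedBall (I : Set (V n)) id t
      (1.1 * (θ * s k b)) htb 5 (by norm_num)
  lift u to Finset (V n) using I.finite_toSet.subset huI
  rename' u => L
  have hLI : ∀ l ∈ L, l ∈ I := fun l hl => huI hl
  have hcost := hF.gain_of_cover hb (ρ := 4 * θ * s k b) (ζ := ζ) (α := δ / 2) (by positivity)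
    (by linarith) hp.zeta_le hp.eps_le_zeta (by linarith) (by linarith [hp.delta_le])
    hp.eps_le_delta hp.zeta_le_delta 𝒰 hU.pos ?_ ?_ L t ?_ ?_ ?_ ?_ ?_
  · have hsum : ∑ i ∈ I, (4 * θ * s (k + 1) i) ^ d ≤ ∑ l ∈ L, 12 ^ d * t l ^ d := by
      calc ∑ i ∈ I, (4 * θ * s (k + 1) i) ^ d
          ≤ ∑ l ∈ L, ∑ i ∈ I with ‖i - l‖ ≤ 5 * t l, (4 * θ * s (k + 1) i) ^ d := by
            refine sum_le_sum_sum_filter _ _ _ (fun i hi => ?_) fun i hi => ?_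
            · have := hI0 i hi
              positivity
            · obtain ⟨l, hl, hil⟩ := hucov i hi
              have := hil (mem_closedBall_self (ht0 i hi).le)
              rw [mem_closedBall, dist_eq_norm] at this
              exact ⟨l, hl, this⟩
        _ ≤ ∑ l ∈ L, 12 ^ d * t l ^ d := by
            refine Finset.sum_le_sum fun l hl => ?_
            have hl' := hLI l hl
            exact hF.sum_pow_le_of_near hs hp hr1 hb hb0 (hI l hl') (ht0 l hl')
              (by linarith [ht1 l hl']) _ (fun i hi => hI i (Finset.mem_filter.1 hi).1)
              (fun i hi => hIb i (Finset.mem_filter.1 hi).1)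
              (fun i hi => hI0 i (Finset.mem_filter.1 hi).1)
              (fun i hi => (Finset.mem_filter.1 hi).2)
              (hdisj.subset (by simp [Set.subset_def]; tauto))
    refine le_trans ?_ hcost
    rw [← Finset.mul_sum] at hsum
    refine add_le_add_right ?_ _
    rw [div_mul_eq_mul_div, div_le_iff₀ (by positivity), mul_assoc, mul_comm _ ((12 : ℝ) ^ d)]
    exact mul_le_mul_of_nonneg_left hsum (by positivity)
  · intro f hf hfb
    refine hU.cover f hf ?_
    have := norm_sub_le_norm_sub_add_norm_sub f b x
    linarith
  · rintro U hUU ⟨y, hy1, hy2⟩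
    have h1 := hU.le U hUU
    have h2 := hs.succ_le k U.1 (hU.mem U hUU)
    have h3 := hs.lipschitz k U.1 (hU.mem U hUU) b hb
    have h4 := hU.pos U hUU
    have h5 : ‖U.1 - b‖ ≤ U.2 + 4 * θ * s k b := by
      have := dist_triangle_left U.1 b y
      rw [mem_ball] at hy1 hy2
      rw [dist_eq_norm U.1 b] at this
      linarith
    have h6 : U.2 ≤ 2 * θ * (4 * θ * s k b) := by
      rcases le_max_iff.1 h1 with h | h
      · have h7 : 4 * θ * s (k + 1) U.1 ≤ 4 * θ * (θ * (s k b + (U.2 + 4 * θ * s k b) / 10)) := by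
          gcongr
          exact h2.trans (by gcongr; linarith)
        have h8 : 4 * θ * (θ * (s k b + (U.2 + 4 * θ * s k b) / 10)) ≤
            4 * θ * (θ * (1.1 * s k b)) + U.2 / 100 := by
          have h9 : 4 * θ * θ * (U.2 / 10) ≤ 1 * (U.2 / 100) := by
            have : 4 * θ * θ ≤ 1 / 10 := by nlinarith
            nlinarith
          have h10 : θ * θ * (4 * θ * s k b / 10) ≤ θ * θ * (0.1 * s k b) := by
            gcongr
            linarith
          nlinarith
        have h11 : 0 < θ * (θ * s k b) := by positivity
        linarith
      · linarith
    refine h6.trans ?_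
    gcongr
    linarith [hp.theta_le_zeta]
  · intro l hl
    have hl' := hLI l hl
    exact ⟨hI l hl', ht0 l hl', by linarith [htb l hl']⟩
  · intro l hl
    apply ball_subset_ball'
    rw [dist_eq_norm]
    linarith [htb l (hLI l hl), hIb l (hLI l hl)]
  · exact hudisj.mono fun l => ball_subset_closedBall
  · rintro l hl U hUU ⟨y, hy1, hy2⟩
    have hl' := hLI l hl
    have htl := ht1 l hl'
    have htl0 := ht0 l hl'
    have h1 := hU.le U hUU
    have h3 := hs.lipschitz (k + 1) U.1 (hU.mem U hUU) l (hI l hl')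
    have h4 := hU.pos U hUU
    have h5 : ‖U.1 - l‖ ≤ U.2 + t l := by
      have := dist_triangle_left U.1 l y
      rw [mem_ball] at hy1 hy2
      rw [dist_eq_norm U.1 l] at this
      linarith
    have h6 : U.2 ≤ 12 * θ * t l := by
      rcases le_max_iff.1 h1 with h | h
      · have h7 : 4 * θ * s (k + 1) U.1 ≤ 4 * θ * (2 * t l + (U.2 + t l) / 10) := by
          gcongr
          linarith
        nlinarith
      · have h7 : 4 * θ * s (k + 1) l ≤ 4 * θ * (2 * t l) := by
          gcongr
          linarith
        have := hIη l hl'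
        nlinarith
    refine h6.trans ?_
    gcongr
    linarith [hp.theta_le_zeta]
  · intro l hl
    have hl' := hLI l hl
    have h1 := ht3 l hl'
    have h2 := hF.norm_sub_le_of_near hs hp hr1 (hI l hl') hb hb0 (hIb l hl')
    have h3 := norm_sub_le_norm_sub_add_norm_sub (W l (t l)).starProjection
      (W b (4 * θ * s k b)).starProjection (W l (s k l)).starProjection
    rw [norm_sub_rev (W b _).starProjection (W l (s k l)).starProjection] at h3
    rw [norm_sub_rev]
    linarith

end Gain

/-- The constant in the comparison between separated families and coverings. -/
def gainConst (n d : ℕ) (δ : ℝ) : ℝ := 2 * 120 ^ n / (((δ / 2) ^ 2 / 128) ^ d / 2 / 12 ^ d)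

section Step

open scoped Classical

variable {n d : ℕ} {ε : ℝ} {E : Set (V n)} {W : V n → ℝ → Submodule ℝ (V n)}
  {δ θ ζ r η : ℝ} {s : ℕ → V n → ℝ} {x : V n}

/-- Replacing parts of a covering by larger balls. -/
lemma IsLevelCover.le_cost_of_replace {σ σ' : V n → ℝ} {𝒰 : Finset (V n × ℝ)}
    (hU : IsLevelCover E x r σ' η 𝒰) (hσ : ∀ e ∈ E, σ' e ≤ σ e) {u : Finset (V n)}
    (hu : ∀ b ∈ u, b ∈ E) (hu0 : ∀ b ∈ u, 0 < σ b)
    (hdisj : (u : Set (V n)).PairwiseDisjoint fun b => ball b (σ b)) {Λ : ℝ}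
    (hΛ : ∀ 𝒰' : Finset (V n × ℝ), IsLevelCover E x r σ η 𝒰' → Λ ≤ ∑ U ∈ 𝒰', U.2 ^ d) :
    Λ + ∑ b ∈ u, ∑ U ∈ 𝒰 with ball U.1 U.2 ⊆ ball b (σ b), U.2 ^ d
      ≤ ∑ U ∈ 𝒰, U.2 ^ d + ∑ b ∈ u, σ b ^ d := by
  have h1 := hΛ (𝒰.filter (fun U => ∀ b ∈ u, ¬ ball U.1 U.2 ⊆ ball b (σ b)) ∪
    u.image fun b => (b, σ b)) ⟨?_, ?_, ?_, ?_⟩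
  · have h2 := Finset.sum_union_inter
      (s₁ := 𝒰.filter fun U => ∀ b ∈ u, ¬ ball U.1 U.2 ⊆ ball b (σ b))
      (s₂ := u.image fun b => (b, σ b)) (f := fun U => U.2 ^ d)
    have h3 : 0 ≤ ∑ U ∈ (𝒰.filter fun U => ∀ b ∈ u, ¬ ball U.1 U.2 ⊆ ball b (σ b)) ∩
        u.image fun b => (b, σ b), U.2 ^ d := Finset.sum_nonneg fun U hU' =>
      pow_nonneg (hU.pos U (Finset.mem_filter.1 (Finset.mem_inter.1 hU').1).1).le _
    have h4 : ∑ U ∈ u.image fun b => (b, σ b), U.2 ^ d = ∑ b ∈ u, σ b ^ d :=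
      Finset.sum_image fun b _ b' _ h => congrArg Prod.fst h
    have h5 : ∑ b ∈ u, ∑ U ∈ 𝒰 with ball U.1 U.2 ⊆ ball b (σ b), U.2 ^ d =
        ∑ U ∈ u.biUnion fun b => 𝒰.filter fun U => ball U.1 U.2 ⊆ ball b (σ b), U.2 ^ d := by
      rw [Finset.sum_biUnion]
      intro l hl l' hl' hne
      refine Finset.disjoint_left.2 fun U hU1 hU2 => ?_
      rw [Finset.mem_filter] at hU1 hU2
      exact Set.disjoint_left.1 (hdisj hl hl' hne) (hU1.2 (mem_ball_self (hU.pos U hU1.1)))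
        (hU2.2 (mem_ball_self (hU.pos U hU1.1)))
    have h6 : ∑ U ∈ 𝒰 with ∀ b ∈ u, ¬ ball U.1 U.2 ⊆ ball b (σ b), U.2 ^ d +
        ∑ U ∈ u.biUnion fun b => 𝒰.filter fun U => ball U.1 U.2 ⊆ ball b (σ b), U.2 ^ d
        ≤ ∑ U ∈ 𝒰, U.2 ^ d := by
      rw [← Finset.sum_union]
      · refine Finset.sum_le_sum_of_subset_of_nonneg (fun U hU' => ?_)
          fun U hU' _ => pow_nonneg (hU.pos U hU').le _
        rw [Finset.mem_union, Finset.mem_filter, Finset.mem_biUnion] at hU'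
        rcases hU' with hU' | ⟨l, hl, hU'⟩
        · exact hU'.1
        · exact (Finset.mem_filter.1 hU').1
      · refine Finset.disjoint_left.2 fun U hU1 hU2 => ?_
        rw [Finset.mem_biUnion] at hU2
        obtain ⟨l, hl, hU2⟩ := hU2
        exact (Finset.mem_filter.1 hU1).2 l hl (Finset.mem_filter.1 hU2).2
    rw [h5]
    linarith
  · intro U hU'
    rw [Finset.mem_union, Finset.mem_filter, Finset.mem_image] at hU'
    rcases hU' with hU' | ⟨b, hb, rfl⟩
    · exact hU.mem U hU'.1
    · exact hu b hb
  · intro U hU'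
    rw [Finset.mem_union, Finset.mem_filter, Finset.mem_image] at hU'
    rcases hU' with hU' | ⟨b, hb, rfl⟩
    · exact hU.pos U hU'.1
    · exact hu0 b hb
  · intro U hU'
    rw [Finset.mem_union, Finset.mem_filter, Finset.mem_image] at hU'
    rcases hU' with hU' | ⟨b, hb, rfl⟩
    · exact (hU.le U hU'.1).trans (max_le_max (hσ _ (hU.mem U hU'.1)) le_rfl)
    · exact le_max_left _ _
  · intro f hf hfx
    obtain ⟨U, hU', hfU⟩ := hU.cover f hf hfx
    by_cases h : ∃ b ∈ u, ball U.1 U.2 ⊆ ball b (σ b)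
    · obtain ⟨b, hb, hsub⟩ := h
      exact ⟨(b, σ b), Finset.mem_union_right _ (Finset.mem_image_of_mem _ hb), hsub hfU⟩
    · push Not at h
      exact ⟨U, Finset.mem_union_left _ (Finset.mem_filter.2 ⟨hU', h⟩), hfU⟩

/-- Balls of comparable radii which are essentially disjoint and meet a given ball. -/
lemma card_le_of_inter_nonempty {σ : V n → ℝ} {b : V n} (hb : 0 < σ b) (J : Finset (V n))
    (hJ1 : ∀ a ∈ J, σ b ≤ 2 * σ a) (hJ2 : ∀ a ∈ J, σ a ≤ 1.5 * σ b)
    (hdisj : (J : Set (V n)).PairwiseDisjoint fun a => closedBall a (σ a / 20))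
    (hJb : ∀ a ∈ J, (ball a (σ a) ∩ ball b (σ b)).Nonempty) : (J.card : ℝ) ≤ 120 ^ n := by
  have h := sum_pow_le_of_disjoint_ball J (p := id) (t := fun _ => σ b / 40)
    (fun i _ => by positivity) (q := b) (R := 3 * σ b) (by positivity) ?_ ?_
  · rw [finrank_euclideanSpace_fin, Finset.sum_const, nsmul_eq_mul] at h
    have h1 : (3 * σ b) ^ n = 120 ^ n * (σ b / 40) ^ n := by
      rw [← mul_pow]
      ring
    rw [h1] at h
    exact le_of_mul_le_mul_right h (by positivity)
  · intro a ha
    obtain ⟨y, hy1, hy2⟩ := hJb a ha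
    apply ball_subset_ball'
    have h1 := dist_triangle_left a b y
    have h2 := hJ2 a ha
    rw [mem_ball] at hy1 hy2
    simp only [id]
    linarith
  · exact hdisj.mono_on fun a ha => ball_subset_closedBall.trans
      (closedBall_subset_closedBall (by linarith [hJ1 a ha]))

/-- Passing from separated families at scale `s (k + 1)` to scale `s k`. -/
lemma FlatField.exists_separated (hF : FlatField n d ε E W) (hs : ScaleChain E W δ θ r s)
    (hp : SmallParams d δ θ ζ ε) (hA : gainConst n d δ * (d * ζ) ≤ 1 / 2) (hr1 : r ≤ 1 / 10)
    (hη : 0 < η) {k : ℕ} {𝒰 : Finset (V n × ℝ)}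
    (hU : IsLevelCover E x r (fun e => 4 * θ * s (k + 1) e) η 𝒰) {Λ : ℝ}
    (hΛ : ∀ 𝒰' : Finset (V n × ℝ), IsLevelCover E x r (fun e => 4 * θ * s k e) η 𝒰' →
      Λ ≤ ∑ U ∈ 𝒰', U.2 ^ d) (I : Finset (V n))
    (hI : ∀ i ∈ I, i ∈ E) (hIx : ∀ i ∈ I, ‖i - x‖ < r) (hIη : ∀ i ∈ I, η ≤ 4 * θ * s (k + 1) i)
    (hdisj : (I : Set (V n)).PairwiseDisjoint fun i => ball i (4 * θ * s (k + 1) i)) :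
    ∃ u ⊆ I, (u : Set (V n)).PairwiseDisjoint (fun i => ball i (4 * θ * s k i)) ∧
      ∑ i ∈ I, (4 * θ * s (k + 1) i) ^ d ≤
        gainConst n d δ * (∑ U ∈ 𝒰, U.2 ^ d - Λ) + 1 / 2 * ∑ b ∈ u, (4 * θ * s k b) ^ d := by
  have hθ0 := hp.theta_pos
  have hθ := hp.theta_le
  have hδ0 := hp.delta_pos
  have hI0 : ∀ i ∈ I, 0 < s (k + 1) i := fun i hi =>
    pos_of_mul_pos_right (hη.trans_le (hIη i hi)) (by positivity)
  have hle : ∀ e ∈ E, s (k + 1) e ≤ s k e := fun e he => by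
    have := hs.succ_le k e he
    nlinarith [hs.nonneg k e he]
  have hIk : ∀ i ∈ I, 0 < s k i := fun i hi => (hI0 i hi).trans_le (hle i (hI i hi))
  obtain ⟨J, hJI, hJdisj, hJcov⟩ :=
    Vitali.exists_disjoint_subfamily_covering_enlargement_closedBall (I : Set (V n)) id
      (fun i => 4 * θ * s k i / 20) (4 * θ * r / 20)
      (fun i hi => by have := hs.le (by linarith) k (hI i hi); gcongr) 5 (by norm_num)
  lift J to Finset (V n) using I.finite_toSet.subset hJI
  have hJI' : ∀ j ∈ J, j ∈ I := fun j hj => hJI hj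
  set w : V n → ℝ := fun j => ∑ i ∈ I with ‖i - j‖ ≤ θ * s k j, (4 * θ * s (k + 1) i) ^ d with hw
  have hw0 : ∀ j, 0 ≤ w j := fun j => Finset.sum_nonneg fun i hi => by
    have := hI0 i (Finset.mem_filter.1 hi).1
    positivity
  have h1 : ∑ i ∈ I, (4 * θ * s (k + 1) i) ^ d ≤ ∑ j ∈ J, w j := by
    refine sum_le_sum_sum_filter _ _ _ (fun i hi => ?_) fun i hi => ?_
    · have := hI0 i hi
      positivity
    · obtain ⟨j, hj, hij⟩ := hJcov i hi
      have h0 := hIk i hi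
      have := hij (mem_closedBall_self (by positivity))
      rw [mem_closedBall, dist_eq_norm] at this
      exact ⟨j, hj, by simp only [id] at this; linarith⟩
  obtain ⟨u, huJ, hudisj, hucov⟩ := Vitali.exists_disjoint_subfamily_covering_enlargement
    (fun j => ball j (4 * θ * s k j)) (J : Set (V n)) w 2 (by norm_num) (fun j _ => hw0 j)
    (∑ j ∈ J, w j) (fun j hj => Finset.single_le_sum (fun j _ => hw0 j) hj)
    (fun j hj => ⟨j, mem_ball_self (by have := hIk j (hJI' j hj); positivity)⟩)
  lift u to Finset (V n) using J.finite_toSet.subset huJ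
  have huI : ∀ j ∈ u, j ∈ I := fun j hj => hJI (huJ hj)
  refine ⟨u, huI, hudisj, ?_⟩
  have h2 : ∑ j ∈ J, w j ≤ 2 * 120 ^ n * ∑ b ∈ u, w b := by
    obtain ⟨R, hR⟩ : ∃ R : V n → V n → Prop, ∀ a b, R a b ↔ (ball a (4 * θ * s k a) ∩
      ball b (4 * θ * s k b)).Nonempty ∧ w a ≤ 2 * w b := ⟨_, fun _ _ => Iff.rfl⟩
    refine (sum_le_sum_sum_filter J u R (fun j _ => hw0 j)
      (by simpa only [hR, Finset.mem_coe] using hucov)).trans ?_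
    rw [Finset.mul_sum]
    refine Finset.sum_le_sum fun b hb => ?_
    have hbI := huI b hb
    have hb0 := hIk b hbI
    refine (Finset.sum_le_card_nsmul _ _ (2 * w b) fun a ha =>
      ((hR a b).1 (Finset.mem_filter.1 ha).2).2).trans ?_
    rw [nsmul_eq_mul]
    have hcard := card_le_of_inter_nonempty (σ := fun e => 4 * θ * s k e) (b := b) (by positivity)
      (J.filter fun a => R a b) ?_ ?_ (hJdisj.subset fun a ha => (Finset.mem_filter.1 ha).1)
      (fun a ha => ((hR a b).1 (Finset.mem_filter.1 ha).2).1)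
    · calc _ ≤ 120 ^ n * (2 * w b) := mul_le_mul_of_nonneg_right hcard (by linarith [hw0 b])
        _ = _ := by ring
    all_goals
      intro a ha
      obtain ⟨ha1, hab⟩ := Finset.mem_filter.1 ha
      obtain ⟨⟨y, hy1, hy2⟩, -⟩ := (hR a b).1 hab
      have haI := hJI' a ha1
      have ha0 := hIk a haI
      have h3 := dist_triangle_left a b y
      rw [mem_ball] at hy1 hy2
      rw [dist_eq_norm a b] at h3
      have h4 := hs.lipschitz k a (hI a haI) b (hI b hbI)
      have h5 := hs.lipschitz k b (hI b hbI) a (hI a haI)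
      rw [norm_sub_rev] at h5
      have h6 : θ * s k a ≤ s k a / 1000 := by nlinarith
      have h7 : θ * s k b ≤ s k b / 1000 := by nlinarith
      nlinarith
  set c : ℝ := ((δ / 2) ^ 2 / 128) ^ d / 2 / 12 ^ d with hc
  have hc0 : 0 < c := by positivity
  have h3 : ∀ b ∈ u, (1 - d * ζ) * (4 * θ * s k b) ^ d + c * w b ≤
      ∑ U ∈ 𝒰 with ball U.1 U.2 ⊆ ball b (4 * θ * s k b), U.2 ^ d := by
    intro b hb
    have hbI := huI b hb
    have hb0 := hIk b hbI
    refine hF.local_gain hs hp hr1 (hI b hbI) (hIx b hbI) hb0 hU _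
      ⟨b, Finset.mem_filter.2 ⟨hbI, ?_⟩⟩ (fun i hi => hI i (Finset.mem_filter.1 hi).1)
      (fun i hi => (Finset.mem_filter.1 hi).2) (fun i hi => hI0 i (Finset.mem_filter.1 hi).1)
      (fun i hi => hIη i (Finset.mem_filter.1 hi).1)
      (hdisj.subset fun i hi => (Finset.mem_filter.1 hi).1)
    rw [sub_self, norm_zero]
    positivity
  have h4 := hU.le_cost_of_replace (σ := fun e => 4 * θ * s k e) (d := d) (fun e he => by
    have := hle e he
    gcongr) (u := u) (fun b hb => hI b (huI b hb))
    (fun b hb => by have := hIk b (huI b hb); positivity) hudisj hΛ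
  have h5 := Finset.sum_le_sum h3
  rw [Finset.sum_add_distrib, ← Finset.mul_sum, ← Finset.mul_sum] at h5
  have h6 : 0 ≤ ∑ b ∈ u, (4 * θ * s k b) ^ d := Finset.sum_nonneg fun b hb => by
    have := hIk b (huI b hb)
    positivity
  have h7 : c * ∑ b ∈ u, w b ≤ (∑ U ∈ 𝒰, U.2 ^ d - Λ) + d * ζ * ∑ b ∈ u, (4 * θ * s k b) ^ d := by
    linarith
  have hg : gainConst n d δ = 2 * 120 ^ n / c := rfl
  have hg0 : 0 < gainConst n d δ := by rw [hg]; positivity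
  have h8 : 2 * 120 ^ n * ∑ b ∈ u, w b = gainConst n d δ * (c * ∑ b ∈ u, w b) := by
    rw [hg]
    field_simp
  have h9 := mul_le_mul_of_nonneg_left h7 hg0.le
  have h10 := mul_le_mul_of_nonneg_right hA h6
  linarith

end Step

/-- Ahlfors regularity of `E`, at scales up to `1`. -/
def IsAhlforsRegular {n : ℕ} (d : ℕ) (C₀ : ℝ) (E : Set (V n)) : Prop :=
  ∀ x ∈ E, ∀ r : ℝ, 0 < r → r ≤ 1 →
    ENNReal.ofReal (C₀⁻¹ * r ^ d) ≤ μH[(d : ℝ)] (E ∩ ball x r) ∧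
    μH[(d : ℝ)] (E ∩ ball x r) ≤ ENNReal.ofReal (C₀ * r ^ d)

/-- A finite family of points of `E ∩ ball x r`, separated at the scale `σ ≥ η`. -/
structure IsSeparatedFamily {n : ℕ} (E : Set (V n)) (x : V n) (r : ℝ) (σ : V n → ℝ) (η : ℝ)
    (I : Finset (V n)) : Prop where
  mem : ∀ i ∈ I, i ∈ E
  near : ∀ i ∈ I, ‖i - x‖ < r
  le : ∀ i ∈ I, η ≤ σ i
  disjoint : (I : Set (V n)).PairwiseDisjoint fun i => ball i (σ i)

section Packing

variable {n d : ℕ} {C₀ : ℝ} {E : Set (V n)} {x : V n} {r η : ℝ}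

lemma IsAhlforsRegular.sum_pow_le (hR : IsAhlforsRegular d C₀ E) (hC : 0 < C₀) (hE : IsClosed E)
    {R : ℝ} (hx : x ∈ E) (hR0 : 0 < R) (hR1 : R ≤ 1) (I : Finset (V n)) (hI : ∀ i ∈ I, i ∈ E)
    {t : V n → ℝ} (ht0 : ∀ i ∈ I, 0 < t i) (ht1 : ∀ i ∈ I, t i ≤ 1)
    (hsub : ∀ i ∈ I, ball i (t i) ⊆ ball x R)
    (hdisj : (I : Set (V n)).PairwiseDisjoint fun i => ball i (t i)) :
    ∑ i ∈ I, t i ^ d ≤ C₀ ^ 2 * R ^ d := by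
  have h1 : ∑ i ∈ I, ENNReal.ofReal (C₀⁻¹ * t i ^ d) ≤ ENNReal.ofReal (C₀ * R ^ d) := by
    calc ∑ i ∈ I, ENNReal.ofReal (C₀⁻¹ * t i ^ d)
        ≤ ∑ i ∈ I, μH[(d : ℝ)] (E ∩ ball i (t i)) :=
          Finset.sum_le_sum fun i hi => (hR i (hI i hi) (t i) (ht0 i hi) (ht1 i hi)).1
      _ = μH[(d : ℝ)] (⋃ i ∈ I, E ∩ ball i (t i)) :=
          (measure_biUnion_finset (hdisj.mono fun i => inter_subset_right)
            fun i _ => hE.measurableSet.inter measurableSet_ball).symm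
      _ ≤ μH[(d : ℝ)] (E ∩ ball x R) :=
          measure_mono (iUnion₂_subset fun i hi => inter_subset_inter_right _ (hsub i hi))
      _ ≤ _ := (hR x hx R hR0 hR1).2
  have ht : ∀ i ∈ I, 0 ≤ t i ^ d := fun i hi => pow_nonneg (ht0 i hi).le _
  rw [← ENNReal.ofReal_sum_of_nonneg fun i hi => mul_nonneg (by positivity) (ht i hi),
    ENNReal.ofReal_le_ofReal_iff (by positivity), ← Finset.mul_sum, inv_mul_le_iff₀ hC] at h1
  linarith

lemma totallyBounded_inter_closedBall (E : Set (V n)) (x : V n) (r : ℝ) :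
    TotallyBounded (E ∩ closedBall x r) :=
  (isCompact_closedBall x r).totallyBounded.subset inter_subset_right

/-- The covering of `E ∩ closedBall x (2 * r)` by balls of the same small radius. -/
lemma IsAhlforsRegular.exists_isLevelCover (hR : IsAhlforsRegular d C₀ E) (hC : 0 < C₀)
    (hE : IsClosed E) (hx : x ∈ E) (hr1 : r ≤ 1 / 10) (hη : 0 < η) (hηr : η ≤ r) (σ : V n → ℝ) :
    ∃ 𝒰, IsLevelCover E x r σ η 𝒰 ∧ ∑ U ∈ 𝒰, U.2 ^ d ≤ C₀ ^ 2 * 18 ^ d * r ^ d := by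
  obtain ⟨I, hIE, hIfin, hIcov⟩ := Metric.finite_approx_of_totallyBounded
    (totallyBounded_inter_closedBall E x (2 * r)) (η / 6) (by positivity)
  obtain ⟨u, huI, hudisj, hucov⟩ :=
    Vitali.exists_disjoint_subfamily_covering_enlargement_closedBall I id
      (fun _ => η / 6) (η / 6) (fun _ _ => le_rfl) 5 (by norm_num)
  lift u to Finset (V n) using hIfin.subset huI
  classical
  have hinj : Set.InjOn (fun b : V n => (b, η)) u := fun b _ b' _ h => congrArg Prod.fst h
  refine ⟨u.image fun b => (b, η), ⟨?_, ?_, ?_, ?_⟩, ?_⟩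
  · intro U hU
    obtain ⟨b, hb, rfl⟩ := Finset.mem_image.1 hU
    exact (hIE (huI hb)).1
  · intro U hU
    obtain ⟨b, hb, rfl⟩ := Finset.mem_image.1 hU
    exact hη
  · intro U hU
    obtain ⟨b, hb, rfl⟩ := Finset.mem_image.1 hU
    exact le_max_right _ _
  · intro f hf hfx
    obtain ⟨i, hi, hfi⟩ := mem_iUnion₂.1
      (hIcov ⟨hf, by rwa [mem_closedBall, dist_eq_norm]⟩)
    obtain ⟨b, hb, hib⟩ := hucov i hi
    refine ⟨(b, η), Finset.mem_image_of_mem _ hb, ?_⟩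
    have := hib (ball_subset_closedBall hfi)
    rw [mem_closedBall] at this
    rw [mem_ball]
    simp only [id] at this ⊢
    linarith
  · rw [Finset.sum_image hinj]
    have h := hR.sum_pow_le hC hE hx (R := 3 * r) (by linarith) (by linarith) u
      (fun b hb => (hIE (huI hb)).1) (t := fun _ => η / 6) (fun _ _ => by positivity)
      (fun _ _ => by linarith) (fun b hb => ball_subset_ball' (by
        have := (hIE (huI hb)).2
        rw [mem_closedBall] at this
        linarith)) (hudisj.mono fun b => ball_subset_closedBall)
    calc ∑ b ∈ u, η ^ d = 6 ^ d * ∑ b ∈ u, (η / 6) ^ d := by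
          rw [Finset.mul_sum]
          refine Finset.sum_congr rfl fun b _ => ?_
          rw [← mul_pow]
          ring
      _ ≤ 6 ^ d * (C₀ ^ 2 * (3 * r) ^ d) := by gcongr
      _ = C₀ ^ 2 * 18 ^ d * r ^ d := by
          rw [show (18 : ℝ) = 6 * 3 by norm_num, mul_pow, mul_pow]
          ring

/-- A covering argument: the measure of a set is controlled by separated families in it. -/
lemma IsAhlforsRegular.measure_le (hR : IsAhlforsRegular d C₀ E) {σ : V n → ℝ} (hC : 0 < C₀)
    (hη : 0 < η) (hσ : ∀ e ∈ E, 6 * σ e ≤ 1) {Q : Set (V n)} (hQE : Q ⊆ E ∩ ball x r)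
    (hQ : ∀ e ∈ Q, η ≤ σ e) {T : ℝ}
    (hT : ∀ I, IsSeparatedFamily E x r σ η I → ∑ i ∈ I, σ i ^ d ≤ T) :
    μH[(d : ℝ)] Q ≤ ENNReal.ofReal (C₀ * 6 ^ d * T) := by
  obtain ⟨I, hIQ, hIfin, hIcov⟩ := Metric.finite_approx_of_totallyBounded
    ((totallyBounded_inter_closedBall E x r).subset
      (hQE.trans (inter_subset_inter_right _ ball_subset_closedBall))) η hη
  obtain ⟨u, huI, hudisj, hucov⟩ :=
    Vitali.exists_disjoint_subfamily_covering_enlargement_closedBall I id σ 1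
      (fun i hi => by
        have := hσ i (hQE (hIQ hi)).1
        linarith [hQ i (hIQ hi)]) 5 (by norm_num)
  lift u to Finset (V n) using hIfin.subset huI
  have huQ : ∀ b ∈ u, b ∈ Q := fun b hb => hIQ (huI hb)
  have hu0 : ∀ b ∈ u, 0 < σ b := fun b hb => hη.trans_le (hQ b (huQ b hb))
  have h1 : Q ⊆ ⋃ b ∈ u, E ∩ ball b (6 * σ b) := by
    intro q hq
    obtain ⟨i, hi, hqi⟩ := mem_iUnion₂.1 (hIcov hq)
    obtain ⟨b, hb, hib⟩ := hucov i hi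
    have := hib (closedBall_subset_closedBall (hQ i (hIQ hi)) (ball_subset_closedBall hqi))
    refine mem_iUnion₂.2 ⟨b, hb, (hQE hq).1, ?_⟩
    rw [mem_closedBall] at this
    rw [mem_ball]
    simp only [id] at this
    linarith [hu0 b hb]
  have h2 : ∑ b ∈ u, σ b ^ d ≤ T := hT u ⟨fun b hb => (hQE (huQ b hb)).1,
    fun b hb => by rw [← dist_eq_norm]; exact (hQE (huQ b hb)).2,
    fun b hb => hQ b (huQ b hb), hudisj.mono fun b => ball_subset_closedBall⟩
  calc μH[(d : ℝ)] Q ≤ ∑ b ∈ u, μH[(d : ℝ)] (E ∩ ball b (6 * σ b)) :=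
        (measure_mono h1).trans (measure_biUnion_finset_le _ _)
    _ ≤ ∑ b ∈ u, ENNReal.ofReal (C₀ * (6 * σ b) ^ d) := Finset.sum_le_sum fun b hb =>
        (hR b (hQE (huQ b hb)).1 _ (by linarith [hu0 b hb]) (hσ b (hQE (huQ b hb)).1)).2
    _ = ENNReal.ofReal (∑ b ∈ u, C₀ * (6 * σ b) ^ d) :=
        (ENNReal.ofReal_sum_of_nonneg fun b hb => by
          have := hu0 b hb
          positivity).symm
    _ ≤ _ := by
        refine ENNReal.ofReal_le_ofReal ?_
        simp_rw [mul_pow]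
        rw [← Finset.mul_sum, ← Finset.mul_sum, mul_assoc]
        gcongr

end Packing

/-- The constant in the measure estimate for the points where the planes turn many times. -/
def turnConst (n d : ℕ) (δ C₀ : ℝ) : ℝ :=
  C₀ * 6 ^ d * (2 * gainConst n d δ * (C₀ ^ 2 * 18 ^ d) + C₀ ^ 2 * 2 ^ d)

section Turn

variable {n d : ℕ} {ε C₀ : ℝ} {E : Set (V n)} {W : V n → ℝ → Submodule ℝ (V n)}
  {δ θ ζ r η : ℝ} {s : ℕ → V n → ℝ} {x : V n}

lemma ScaleChain.antitone (hs : ScaleChain E W δ θ r s) (hθ : θ ≤ 1) {e : V n} (he : e ∈ E) :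
    Antitone fun k => s k e :=
  antitone_nat_of_succ_le fun k => by
    have h1 := hs.succ_le k e he
    have h2 := hs.nonneg k e he
    nlinarith

lemma gainConst_pos (n d : ℕ) (hδ : 0 < δ) : 0 < gainConst n d δ := by
  unfold gainConst
  positivity

/-- The total size of the separated families at the first `m` scales. -/
lemma FlatField.exists_separated_bound (hF : FlatField n d ε E W)
    (hs : ScaleChain E W δ θ r s) (hp : SmallParams d δ θ ζ ε)
    (hA : gainConst n d δ * (d * ζ) ≤ 1 / 2) (hR : IsAhlforsRegular d C₀ E) (hC : 0 < C₀)
    (hx : x ∈ E) (hr1 : r ≤ 1 / 10) (hη : 0 < η) (hηr : η ≤ r) (m : ℕ) :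
    ∃ T : ℕ → ℝ, (∀ k I, IsSeparatedFamily E x r (fun e => 4 * θ * s k e) η I →
        ∑ i ∈ I, (4 * θ * s k i) ^ d ≤ T k) ∧
      ∑ k ∈ Finset.range m, T (k + 1) ≤
        (2 * gainConst n d δ * (C₀ ^ 2 * 18 ^ d) + C₀ ^ 2 * 2 ^ d) * r ^ d := by
  have hθ0 := hp.theta_pos
  have hθ := hp.theta_le
  have hr0 : 0 < r := hη.trans_le hηr
  have hg0 := gainConst_pos n d hp.delta_pos
  have hbound : ∀ k I, IsSeparatedFamily E x r (fun e => 4 * θ * s k e) η I →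
      ∑ i ∈ I, (4 * θ * s k i) ^ d ≤ C₀ ^ 2 * 2 ^ d * r ^ d := by
    intro k I hI
    have hsr : ∀ i ∈ I, 4 * θ * s k i ≤ r := fun i hi => by
      nlinarith [hs.le (by linarith) k (hI.mem i hi), hs.nonneg k i (hI.mem i hi)]
    refine (hR.sum_pow_le hC hF.isClosed hx (R := 2 * r) (by linarith) (by linarith) I hI.mem
      (fun i hi => hη.trans_le (hI.le i hi)) (fun i hi => (hsr i hi).trans (by linarith))
      (fun i hi => ball_subset_ball' ?_) hI.disjoint).trans (le_of_eq (by rw [mul_pow]; ring))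
    have := hI.near i hi
    rw [dist_eq_norm]
    linarith [hsr i hi]
  have hTex : ∀ k, ∃ T, IsLUB {c | ∃ I, IsSeparatedFamily E x r (fun e => 4 * θ * s k e) η I ∧
      ∑ i ∈ I, (4 * θ * s k i) ^ d = c} T := fun k => by
    refine Real.exists_isLUB ⟨0, ∅, ⟨by simp, by simp, by simp, by simp⟩, by simp⟩
      ⟨C₀ ^ 2 * 2 ^ d * r ^ d, ?_⟩
    rintro _ ⟨I, hI, rfl⟩
    exact hbound k I hI
  choose T hT using hTex
  have hΛex : ∀ k, ∃ Λ, IsGLB {c | ∃ 𝒰, IsLevelCover E x r (fun e => 4 * θ * s k e) η 𝒰 ∧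
      ∑ U ∈ 𝒰, U.2 ^ d = c} Λ := fun k => by
    obtain ⟨𝒰, hU, -⟩ := hR.exists_isLevelCover hC hF.isClosed hx hr1 hη hηr
      (fun e => 4 * θ * s k e)
    refine Real.exists_isGLB ⟨_, 𝒰, hU, rfl⟩ ⟨0, ?_⟩
    rintro _ ⟨𝒰', hU', rfl⟩
    exact Finset.sum_nonneg fun U hU => pow_nonneg (hU'.pos U hU).le _
  choose Λ hΛ using hΛex
  have hstep : ∀ k, T (k + 1) ≤ gainConst n d δ * (Λ (k + 1) - Λ k) + 1 / 2 * T k := by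
    intro k
    refine (hT (k + 1)).2 ?_
    rintro _ ⟨I, hI, rfl⟩
    have h1 : (∑ i ∈ I, (4 * θ * s (k + 1) i) ^ d - 1 / 2 * T k) / gainConst n d δ + Λ k
        ≤ Λ (k + 1) := by
      refine (hΛ (k + 1)).2 ?_
      rintro _ ⟨𝒰, hU, rfl⟩
      obtain ⟨u, huI, hudisj, hu⟩ := hF.exists_separated hs hp hA hr1 hη hU (Λ := Λ k)
        (fun 𝒰' hU' => (hΛ k).1 ⟨𝒰', hU', rfl⟩) I hI.mem hI.near hI.le hI.disjoint
      have h2 : ∑ b ∈ u, (4 * θ * s k b) ^ d ≤ T k := by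
        refine (hT k).1 ⟨u, ⟨fun b hb => hI.mem b (huI hb), fun b hb => hI.near b (huI hb),
          fun b hb => (hI.le b (huI hb)).trans ?_, hudisj⟩, rfl⟩
        have := hs.antitone (by linarith) (hI.mem b (huI hb)) (Nat.le_succ k)
        gcongr
      rw [← le_sub_iff_add_le, div_le_iff₀ hg0]
      linarith
    rw [← le_sub_iff_add_le, div_le_iff₀ hg0] at h1
    linarith
  refine ⟨T, fun k I hI => (hT k).1 ⟨I, hI, rfl⟩, ?_⟩
  have hT0 : ∀ k, 0 ≤ T k := fun k => (hT k).1 ⟨∅, ⟨by simp, by simp, by simp, by simp⟩, by simp⟩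
  have hT0' : T 0 ≤ C₀ ^ 2 * 2 ^ d * r ^ d := (hT 0).2 (by
    rintro _ ⟨I, hI, rfl⟩
    exact hbound 0 I hI)
  have hΛ0 : 0 ≤ Λ 0 := (hΛ 0).2 (by
    rintro _ ⟨𝒰', hU', rfl⟩
    exact Finset.sum_nonneg fun U hU => pow_nonneg (hU'.pos U hU).le _)
  have hΛm : Λ m ≤ C₀ ^ 2 * 18 ^ d * r ^ d := by
    obtain ⟨𝒰, hU, hcost⟩ := hR.exists_isLevelCover hC hF.isClosed hx hr1 hη hηr
      (fun e => 4 * θ * s m e)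
    exact ((hΛ m).1 ⟨𝒰, hU, rfl⟩).trans hcost
  have hsum : ∀ m, ∑ k ∈ Finset.range m, T (k + 1) + T m ≤
      2 * gainConst n d δ * (Λ m - Λ 0) + T 0 := by
    intro m
    induction m with
    | zero => simp
    | succ m ih =>
      rw [Finset.sum_range_succ]
      linarith [hstep m]
  have h3 := hsum m
  have h4 := mul_le_mul_of_nonneg_left hΛm hg0.le
  have h5 := mul_nonneg hg0.le hΛ0
  linarith [hT0 m]

/-- The set where the planes turn at least `m` times is small. -/
lemma FlatField.measure_turn_le (hF : FlatField n d ε E W)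
    (hs : ScaleChain E W δ θ r s) (hp : SmallParams d δ θ ζ ε)
    (hA : gainConst n d δ * (d * ζ) ≤ 1 / 2) (hR : IsAhlforsRegular d C₀ E) (hC : 0 < C₀)
    (hx : x ∈ E) (hr0 : 0 < r) (hr1 : r ≤ 1 / 10) {m : ℕ} (hm : 0 < m) :
    μH[(d : ℝ)] {e | e ∈ E ∩ ball x r ∧ 0 < s m e} ≤
      ENNReal.ofReal (turnConst n d δ C₀ / m * r ^ d) := by
  have hθ0 := hp.theta_pos
  have hθ := hp.theta_le
  have hm0 : (0 : ℝ) < m := by exact_mod_cast hm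
  have hQ : ∀ η, 0 < η → η ≤ r → μH[(d : ℝ)] {e | e ∈ E ∩ ball x r ∧ η ≤ 4 * θ * s m e} ≤
      ENNReal.ofReal (turnConst n d δ C₀ / m * r ^ d) := by
    intro η hη hηr
    obtain ⟨T, hT, hTsum⟩ := hF.exists_separated_bound hs hp hA hR hC hx hr1 hη hηr m
    obtain ⟨k, hk, hTk⟩ : ∃ k ∈ Finset.range m, T (k + 1) ≤
        (2 * gainConst n d δ * (C₀ ^ 2 * 18 ^ d) + C₀ ^ 2 * 2 ^ d) * r ^ d / m := by
      refine Finset.exists_le_of_sum_le ⟨0, Finset.mem_range.2 hm⟩ (hTsum.trans (le_of_eq ?_))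
      rw [Finset.sum_const, Finset.card_range, nsmul_eq_mul]
      field_simp
    have hσ : ∀ e ∈ E, 6 * (4 * θ * s (k + 1) e) ≤ 1 := fun e he => by
      nlinarith [hs.le (by linarith) (k + 1) he, hs.nonneg (k + 1) e he]
    have hσm : ∀ e ∈ E, 4 * θ * s m e ≤ 4 * θ * s (k + 1) e := fun e he => by
      have := hs.antitone (by linarith) he (Nat.succ_le_of_lt (Finset.mem_range.1 hk))
      gcongr
    refine (hR.measure_le hC hη hσ (fun e he => he.1) (fun e he => he.2.trans (hσm e he.1.1))
      (hT (k + 1))).trans (ENNReal.ofReal_le_ofReal ?_)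
    calc C₀ * 6 ^ d * T (k + 1) ≤ C₀ * 6 ^ d *
          ((2 * gainConst n d δ * (C₀ ^ 2 * 18 ^ d) + C₀ ^ 2 * 2 ^ d) * r ^ d / m) := by gcongr
      _ = _ := by rw [turnConst]; ring
  have hU : {e | e ∈ E ∩ ball x r ∧ 0 < s m e} ⊆
      ⋃ j : ℕ, {e | e ∈ E ∩ ball x r ∧ r / (j + 1) ≤ 4 * θ * s m e} := by
    rintro e ⟨he, he0⟩
    obtain ⟨j, hj⟩ := exists_nat_gt (r / (4 * θ * s m e))
    refine mem_iUnion.2 ⟨j, he, ?_⟩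
    rw [div_lt_iff₀ (by positivity)] at hj
    rw [div_le_iff₀ (by positivity)]
    nlinarith [show 0 < 4 * θ * s m e by positivity]
  refine (measure_mono hU).trans ?_
  rw [Monotone.measure_iUnion]
  · refine iSup_le fun j => hQ _ (by positivity) (div_le_self hr0.le ?_)
    linarith [Nat.cast_nonneg (α := ℝ) j]
  · intro i j hij e he
    refine ⟨he.1, le_trans ?_ he.2⟩
    gcongr

end Turn

/-- Thresholds depending only on `n` and `d` below which both the parametrization and the packing
estimates hold. -/
lemma exists_smallParams {n d : ℕ} (hd : 0 < d) (hdn : d < n) {C : ℝ} (hC : 0 < C) :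
    ∃ δ θ ζ ε₀ : ℝ, 0 < ε₀ ∧ n * (6 * δ) ≤ 1 / 2 ∧ gainConst n d δ * (d * ζ) ≤ 1 / 2 ∧
      ∀ ε ≤ ε₀, SmallParams d δ θ ζ ε ∧ 2000 * (C * ε) ≤ δ := by
  have hn2 : (2 : ℝ) ≤ n := by exact_mod_cast (by omega : 2 ≤ n)
  have hd0 : (0 : ℝ) < d := by exact_mod_cast hd
  obtain ⟨δ, hδ⟩ : ∃ δ : ℝ, δ = 1 / (12 * n) := ⟨_, rfl⟩
  have hδn : n * (6 * δ) = 1 / 2 := by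
    rw [hδ]
    field_simp
    norm_num
  have hδ0 : 0 < δ := by
    rw [hδ]
    positivity
  have hδ8 : δ ≤ 1 / 8 := by nlinarith
  have hg := gainConst_pos n d hδ0
  obtain ⟨κ, hκ⟩ : ∃ κ : ℝ, κ = ((δ / 2) ^ 2 / 128) ^ d / 2 := ⟨_, rfl⟩
  have hκ0 : 0 < κ := by
    rw [hκ]
    positivity
  obtain ⟨ζ, hζ0, hζ1, hζ2, hζ3⟩ :
      ∃ ζ : ℝ, 0 < ζ ∧ ζ ≤ 1 / 2 ∧ ζ ≤ κ / d ∧ ζ ≤ 1 / 2 / (gainConst n d δ * d) :=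
    ⟨min (1 / 2) (min (κ / d) (1 / 2 / (gainConst n d δ * d))), by positivity, min_le_left _ _,
      (min_le_right _ _).trans (min_le_left _ _), (min_le_right _ _).trans (min_le_right _ _)⟩
  rw [le_div_iff₀ hd0] at hζ2
  rw [le_div_iff₀ (by positivity)] at hζ3
  obtain ⟨θ, hθ0, hθ1, hθ2⟩ : ∃ θ : ℝ, 0 < θ ∧ θ ≤ 1 / 1000 ∧ θ ≤ ζ / 48 :=
    ⟨min (1 / 1000) (ζ / 48), by positivity, min_le_left _ _, min_le_right _ _⟩
  obtain ⟨ε₀, hε0, h1, h2, h3, h4⟩ : ∃ ε₀ : ℝ, 0 < ε₀ ∧ ε₀ ≤ δ * θ / 10000 ∧ ε₀ ≤ ζ / 20 ∧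
      ε₀ ≤ (δ / 2) ^ 2 / 64 ∧ ε₀ ≤ δ / (2000 * C) :=
    ⟨min (min (δ * θ / 10000) (ζ / 20)) (min ((δ / 2) ^ 2 / 64) (δ / (2000 * C))),
      by positivity, (min_le_left _ _).trans (min_le_left _ _),
      (min_le_left _ _).trans (min_le_right _ _), (min_le_right _ _).trans (min_le_left _ _),
      (min_le_right _ _).trans (min_le_right _ _)⟩
  rw [le_div_iff₀ (by positivity)] at h4
  refine ⟨δ, θ, ζ, ε₀, hε0, hδn.le, by linarith, fun ε hε => ⟨⟨hδ0, hδ8, hθ0, hθ1, by linarith,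
    hζ1, by rw [← hκ]; linarith, by linarith, by linarith, by linarith⟩, ?_⟩⟩
  nlinarith [mul_le_mul_of_nonneg_right hε hC.le]

/-- **Theorem 15.39**: LARRF sets have very big pieces of bi-Lipschitz images of
`d`-planes: for each `τ > 0` there is `K = K(n,d,C₀,τ)` such that for `x ∈ E`
and `0 < r ≤ 10⁻¹` there are a `d`-plane `P` through `x` and a `K`-bi-Lipschitz
bijection `g` of `ℝⁿ`, with `|g − id| ≤ Cε`, `g = id` outside `B(x,2r)`, and
`H^d(E ∩ B(x,r) ∖ g(P)) ≤ τ r^d`. -/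
theorem thm_15_39 (n d : ℕ) (hd : 0 < d) (hdn : d < n) :
    ∃ ε₀ : ℝ, 0 < ε₀ ∧ ∃ C : ℝ, 0 < C ∧
    ∀ C₀ τ : ℝ, 1 ≤ C₀ → 0 < τ →
    ∃ K : ℝ, 1 ≤ K ∧
    ∀ ε : ℝ, 0 < ε → ε ≤ ε₀ →
    ∀ E : Set (V n), IsLARRF n d ε C₀ E →
    ∀ x ∈ E, ∀ r : ℝ, 0 < r → r ≤ 10⁻¹ →
    ∃ (P : Set (V n)) (g : V n → V n),
      IsAffinePlane n d P ∧ x ∈ P ∧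
      Function.Bijective g ∧
      (∀ z w : V n,
        K⁻¹ * dist z w ≤ dist (g z) (g w) ∧ dist (g z) (g w) ≤ K * dist z w) ∧
      (∀ z : V n, dist (g z) z ≤ C * ε) ∧
      (∀ z : V n, z ∉ ball x (2 * r) → g z = z) ∧
      μH[(d : ℝ)] ((E ∩ ball x r) \ g '' P) ≤ ENNReal.ofReal (τ * r ^ d) := by
  have hn0 : (0 : ℝ) < n := by exact_mod_cast hd.trans hdn
  obtain ⟨C₁, hC₁⟩ : ∃ C₁ : ℝ, C₁ = n * (101 * 150) + 250 := ⟨_, rfl⟩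
  have hC₁0 : 0 < C₁ := by
    rw [hC₁]
    positivity
  obtain ⟨δ, θ, ζ, ε₀, hε₀, hδn, hA, hparams⟩ := exists_smallParams hd hdn hC₁0
  refine ⟨ε₀, hε₀, n * (6 * C₁), by positivity, fun C₀ τ hC₀ hτ => ?_⟩
  obtain ⟨m, hm⟩ := exists_nat_gt (max 0 (turnConst n d δ C₀ / τ))
  have hm0 : (0 : ℝ) < m := (le_max_left _ _).trans_lt hm
  have hmτ : turnConst n d δ C₀ / m ≤ τ := by
    have := (le_max_right _ _).trans_lt hm
    rw [div_lt_iff₀ hτ] at this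
    rw [div_le_iff₀ hm0]
    linarith
  refine ⟨2 ^ m, one_le_pow₀ one_le_two, fun ε hε hεε₀ E hE x hx r hr0 hr => ?_⟩
  obtain ⟨hp, hβ⟩ := hparams ε hεε₀
  have hr1 : r ≤ 1 / 10 := by rwa [one_div]
  obtain ⟨W, hF⟩ := hE.exists_flatField hε
  have hs := hF.scaleChain (hp.delta_le.trans (by norm_num)) hp.theta_pos hp.theta_le hp.eps_le
    hr0 hr1
  have hnε : 0 < n * ε := mul_pos hn0 hε
  obtain ⟨P, g, hP, hxP, hbij, hlip, hdist, hid, hcover⟩ :=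
    hF.exists_biLipschitz (β := C₁ * ε) hs hp.theta_pos hp.theta_le hδn
      (hp.delta_le.trans (by norm_num)) (by rw [hC₁]; linarith) (by rw [hC₁]; linarith)
      hβ hr0 hr1 hx m
  refine ⟨P, g, hP, hxP, hbij, fun z w => ?_, fun z => ?_, hid, ?_⟩
  · simpa [dist_eq_norm] using hlip z w
  · rw [dist_eq_norm]
    have hpos : 0 ≤ n * (6 * C₁) * ε := by positivity
    refine (hdist z).trans ?_
    nlinarith
  · refine (measure_mono ?_).trans <| (hF.measure_turn_le hs hp hA (fun y hy t ht0 ht1 =>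
      (hE.2.2 y hy t ht0 ht1).2) (by linarith) hx hr0 hr1 (by exact_mod_cast hm0)).trans <|
      ENNReal.ofReal_le_ofReal (mul_le_mul_of_nonneg_right hmτ (by positivity))
    rintro e ⟨he, heP⟩
    exact ⟨he, (hs.nonneg m e he.1).lt_of_ne fun h => heP (hcover e he h.symm)⟩
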